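/- arXiv:1709.06183 — 3 statements merged into one kernel-verified Lean document; each statement's English description precedes it below -/
import Mathlib

section
/- There exist universal constants c_1, c_2 > 0 such that for every continuous function f : [0,1] → ℝ and every integer n ≥ 1, c_1 ω_φ^2(f, 1/√n) ≤ sup_{p∈[0,1]} |B_n[f](p) − f(p)| ≤ c_2 ω_φ^2(f, 1/√n). -/
/-- Bernstein operator: `B_m[g](p) = Σ_{k=0}^m C(m,k) p^k (1-p)^{m-k} g(k/m)`. -/
noncomputable def bernstein' (m : ℕ) (g : ℝ → ℝ) (p : ℝ) : ℝ :=
  ∑ k ∈ Finset.range (m + 1), (m.choose k : ℝ) * p ^ k * (1 - p) ^ (m - k) * g ((k : ℝ) / m)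

/-- `r`-th symmetric difference of `g` with step `h`, vanishing near the boundary of `[0,1]`. -/
noncomputable def ditzSymmDiff (r : ℕ) (h : ℝ) (g : ℝ → ℝ) (x : ℝ) : ℝ :=
  if x - r * h / 2 ∈ Set.Icc (0:ℝ) 1 ∧ x + r * h / 2 ∈ Set.Icc (0:ℝ) 1 then
    ∑ k ∈ Finset.range (r + 1), (-1 : ℝ) ^ k * (r.choose k : ℝ) * g (x + r * h / 2 - k * h)
  else 0

/-- `r`-th Ditzian–Totik modulus of smoothness with weight `φ(x) = √(x(1-x))`. -/
noncomputable def dtMod (r : ℕ) (g : ℝ → ℝ) (t : ℝ) : ℝ :=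
  sSup {y : ℝ | ∃ h x : ℝ, 0 < h ∧ h ≤ t ∧ x ∈ Set.Icc (0:ℝ) 1 ∧
    y = |ditzSymmDiff r (h * Real.sqrt (x * (1 - x))) g x|}

/-- Sup norm on `[0,1]`. -/
noncomputable def supAbsOn (g : ℝ → ℝ) : ℝ := sSup ((fun p => |g p|) '' Set.Icc (0:ℝ) 1)

/-- Jackknife coefficients `C_i = ∏_{j≠i} n_i/(n_i - n_j)`. -/
noncomputable def jackCoeff {r : ℕ} (ns : Fin r → ℕ) (i : Fin r) : ℝ :=
  ∏ j ∈ Finset.univ.erase i, (ns i : ℝ) / ((ns i : ℝ) - (ns j : ℝ))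

/-- Sup over `p ∈ [0,1]` of the `r`-jackknife bias `|Σ_i C_i B_{n_i}[f](p) - f(p)|`. -/
noncomputable def jackBias {r : ℕ} (ns : Fin r → ℕ) (f : ℝ → ℝ) : ℝ :=
  sSup ((fun p => |(∑ i, jackCoeff ns i * bernstein' (ns i) f p) - f p|) '' Set.Icc (0:ℝ) 1)

/-!
Let `H` be the binary entropy, so that `x (1 - x) H''(x) = -1`.

Upper bound. Put `ω = dtMod 2 f (1 / √n)`. For `c > n ω` the function `f - c H` has positive second
differences at the scale `√(x (1 - x) / n)`, so it lies below its chords up to `ω` and has at every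
point a supporting line up to `ω`. Applying `B_n` and using `B_n H ≥ H - 1 / n` gives
`B_n f ≥ f - 2 ω`; the other inequality is the same statement for `-f`.

Lower bound. Let `δ` be the error, `a` the values of `f` at the nodes `k / n`, and `T` the Bernstein
operator on the grid. A discrete entropy `E` satisfies `Δ² (T E) ≤ Δ² E` and `T E - E ≥ 3 / 14`. For
a convex sequence `c`, the gap `T c - c` is at most a multiple of the binomial variance times
`Δ² (T c)`; both sides being linear in `c`, it suffices to check hinge sequences. Taking
`c = S E ± a` shows that `T` contracts second differences, weighted by the variance, up to `O(δ)`.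
As `Δ² (T (a - T a)) = O(δ)` by Bernstein's inequality, the contraction forces `Δ² (T a) = O(δ)`.
Hence `g = B_n (T a)` is within `2 δ` of `f` and `x (1 - x) g'' = O(n δ)`, which bounds the modulus
of `f`.
-/

open Polynomial

section BernsteinBasis

variable {R : Type*} [CommRing R]

theorem succ_mul_X_mul_bernsteinPolynomial (n k : ℕ) :
    ((n : R[X]) + 1) * X * bernsteinPolynomial R n k =
      ((k : R[X]) + 1) * bernsteinPolynomial R (n + 1) (k + 1) := by
  have h : ((n : R[X]) + 1) * n.choose k = (n + 1).choose (k + 1) * ((k : R[X]) + 1) := by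
    exact_mod_cast congrArg (Nat.cast (R := R[X])) (Nat.add_one_mul_choose_eq n k)
  simp only [bernsteinPolynomial, Nat.add_sub_add_right]
  linear_combination X ^ (k + 1) * (1 - X) ^ (n - k) * h

theorem succ_mul_one_sub_X_mul_bernsteinPolynomial (n k : ℕ) :
    ((n : R[X]) + 1) * (1 - X) * bernsteinPolynomial R n k =
      ((n : R[X]) + 1 - (k : R[X])) * bernsteinPolynomial R (n + 1) k := by
  rcases le_or_gt k n with hk | hk
  · have h : (n.choose k : R[X]) * ((n : R[X]) + 1) =
        (n + 1).choose k * ((n : R[X]) + 1 - (k : R[X])) := by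
      have := congrArg (Nat.cast (R := R[X])) (Nat.choose_mul_succ_eq n k)
      rwa [Nat.cast_mul, Nat.cast_mul, Nat.cast_sub (by lia), Nat.cast_add_one] at this
    simp only [bernsteinPolynomial, Nat.sub_add_comm hk, pow_succ]
    linear_combination X ^ k * (1 - X) ^ (n - k) * (1 - X) * h
  · rw [bernsteinPolynomial.eq_zero_of_lt R hk]
    rcases (Nat.succ_le_of_lt hk).eq_or_lt with rfl | hk
    · simp
    · rw [bernsteinPolynomial.eq_zero_of_lt R hk]; simp

theorem one_sub_X_mul_bernsteinPolynomial_succ (n k : ℕ) :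
    (1 - X) * (((k : R[X]) + 1) * bernsteinPolynomial R n (k + 1)) =
      X * (((n : R[X]) - (k : R[X])) * bernsteinPolynomial R n k) := by
  cases n with
  | zero => cases k <;> simp [bernsteinPolynomial]
  | succ n =>
    have h₁ := succ_mul_X_mul_bernsteinPolynomial (R := R) n k
    have h₂ := succ_mul_one_sub_X_mul_bernsteinPolynomial (R := R) n k
    push_cast
    linear_combination X * h₂ - (1 - X) * h₁

theorem X_mul_one_sub_X_mul_bernsteinPolynomial (n k : ℕ) :
    X * (1 - X) * (((n : R[X]) + 2) * ((n : R[X]) + 1) * bernsteinPolynomial R n k) =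
      ((k : R[X]) + 1) * ((n : R[X]) + 1 - (k : R[X])) *
        bernsteinPolynomial R (n + 2) (k + 1) := by
  have h₁ := succ_mul_X_mul_bernsteinPolynomial (R := R) (n + 1) k
  have h₂ := succ_mul_one_sub_X_mul_bernsteinPolynomial (R := R) n k
  push_cast at h₁
  linear_combination X * ((n : R[X]) + 2) * h₂ + ((n : R[X]) + 1 - (k : R[X])) * h₁

theorem X_mul_one_sub_X_mul_derivative_bernsteinPolynomial (n k : ℕ) :
    X * (1 - X) * derivative (bernsteinPolynomial R n k) =
      ((k : R[X]) - (n : R[X]) * X) * bernsteinPolynomial R n k := by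
  cases n with
  | zero => cases k <;> simp [bernsteinPolynomial]
  | succ n =>
    cases k with
    | zero =>
      have h := succ_mul_one_sub_X_mul_bernsteinPolynomial (R := R) n 0
      rw [bernsteinPolynomial.derivative_zero]
      simp only [Nat.add_sub_cancel]
      push_cast at h ⊢
      linear_combination -X * h
    | succ k =>
      have h₁ := succ_mul_X_mul_bernsteinPolynomial (R := R) n k
      have h₂ := succ_mul_one_sub_X_mul_bernsteinPolynomial (R := R) n (k + 1)
      rw [bernsteinPolynomial.derivative_succ]
      simp only [Nat.add_sub_cancel]
      push_cast at h₂ ⊢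
      linear_combination (1 - X) * h₁ - X * h₂

theorem X_mul_one_sub_X_sq_mul_derivative_two_bernsteinPolynomial (n k : ℕ) :
    (X * (1 - X)) ^ 2 * derivative (derivative (bernsteinPolynomial R n k)) =
      (((k : R[X]) - (n : R[X]) * X) ^ 2 - ((n : R[X]) - (k : R[X])) * X ^ 2 -
        (k : R[X]) * (1 - X) ^ 2) * bernsteinPolynomial R n k := by
  have h := X_mul_one_sub_X_mul_derivative_bernsteinPolynomial (R := R) n k
  have h' := congrArg derivative h
  simp only [derivative_mul, derivative_sub, derivative_X, derivative_one,
    derivative_natCast] at h'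
  linear_combination X * (1 - X) * h' + ((k : R[X]) - (n : R[X]) * X - 1 + 2 * X) * h

end BernsteinBasis

section BernsteinForm

variable {R : Type*} [CommRing R]

/-- The polynomial of degree at most `n` with Bernstein coefficients `a 0, …, a n`. The
coefficients are taken from a sequence on all of `ℕ`, so that it can be shifted. -/
noncomputable def bernsteinForm (n : ℕ) : (ℕ → R) →ₗ[R] R[X] :=
  ∑ k ∈ Finset.range (n + 1), (LinearMap.proj k).smulRight (bernsteinPolynomial R n k)

theorem bernsteinForm_apply (n : ℕ) (a : ℕ → R) :
    bernsteinForm n a = ∑ k ∈ Finset.range (n + 1), a k • bernsteinPolynomial R n k := by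
  simp [bernsteinForm]

theorem eval_bernsteinForm (n : ℕ) (a : ℕ → R) (x : R) :
    (bernsteinForm n a).eval x =
      ∑ k ∈ Finset.range (n + 1), a k * (bernsteinPolynomial R n k).eval x := by
  simp [bernsteinForm_apply, eval_finsetSum]

theorem bernsteinForm_congr {n : ℕ} {a b : ℕ → R} (h : ∀ k ≤ n, a k = b k) :
    bernsteinForm n a = bernsteinForm n b := by
  simp only [bernsteinForm_apply]
  exact Finset.sum_congr rfl fun k hk => by rw [h k (Finset.mem_range_succ_iff.1 hk)]

theorem bernsteinForm_reflect (n : ℕ) (a : ℕ → R) :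
    bernsteinForm n (fun k => a (n - k)) = (bernsteinForm n a).comp (1 - X) := by
  simp only [bernsteinForm_apply, Polynomial.sum_comp, smul_comp]
  rw [← Finset.sum_range_reflect]
  refine Finset.sum_congr rfl fun k hk => ?_
  have hk' : k ≤ n := Finset.mem_range_succ_iff.1 hk
  rw [bernsteinPolynomial.flip R n k hk', Nat.add_sub_cancel, Nat.sub_sub_self hk']

theorem eval_zero_bernsteinForm (n : ℕ) (a : ℕ → R) : (bernsteinForm n a).eval 0 = a 0 := by
  simp [eval_bernsteinForm, bernsteinPolynomial.eval_at_0]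

theorem eval_one_bernsteinForm (n : ℕ) (a : ℕ → R) : (bernsteinForm n a).eval 1 = a n := by
  simp [eval_bernsteinForm, bernsteinPolynomial.eval_at_1]

theorem bernsteinForm_const (n : ℕ) (c : R) : bernsteinForm n (fun _ => c) = C c := by
  rw [bernsteinForm_apply, ← Finset.smul_sum, bernsteinPolynomial.sum, smul_eq_C_mul, mul_one]

theorem bernsteinForm_natCast_mul (n : ℕ) (a : ℕ → R) :
    bernsteinForm (n + 1) (fun k => k * a k) =
      ((n : R[X]) + 1) * X * bernsteinForm n (fun k => a (k + 1)) := by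
  simp only [bernsteinForm_apply]
  rw [Finset.sum_range_succ', Finset.mul_sum]
  simp only [Nat.cast_zero, zero_mul, zero_smul, add_zero]
  refine Finset.sum_congr rfl fun k _ => ?_
  have h := succ_mul_X_mul_bernsteinPolynomial (R := R) n k
  simp only [smul_eq_C_mul, map_mul, map_natCast]
  push_cast
  linear_combination -C (a (k + 1)) * h

theorem bernsteinForm_descPochhammer (n j : ℕ) :
    bernsteinForm n (fun k => (descPochhammer R j).eval (k : R)) =
      (descPochhammer R j).eval (n : R) • (X ^ j : R[X]) := by
  induction j generalizing n with
  | zero => simp [bernsteinForm_const]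
  | succ j ih =>
    simp only [descPochhammer_succ_left, eval_mul, eval_X, eval_comp, eval_sub, eval_one]
    cases n with
    | zero => simp [bernsteinForm_apply]
    | succ n =>
      rw [bernsteinForm_natCast_mul n fun k => (descPochhammer R j).eval ((k : R) - 1)]
      simp only [Nat.cast_add_one, add_sub_cancel_right]
      rw [ih, smul_eq_C_mul, smul_eq_C_mul]
      simp only [map_mul, map_add, map_natCast, map_one]
      ring

theorem bernsteinForm_natCast (n : ℕ) :
    bernsteinForm n (fun k => (k : R)) = (n : R[X]) * X := by
  simpa [smul_eq_C_mul] using bernsteinForm_descPochhammer (R := R) n 1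

theorem bernsteinForm_natCast_sq (n : ℕ) :
    bernsteinForm n (fun k => (k : R) ^ 2) =
      ((n : R[X]) * X) ^ 2 + (n : R[X]) * X * (1 - X) := by
  have h := bernsteinForm_descPochhammer (R := R) n 2
  have e : (fun k : ℕ => (k : R) ^ 2) =
      (fun k : ℕ => (descPochhammer R 2).eval (k : R)) + fun k : ℕ => (k : R) := by
    ext
    simp only [descPochhammer_succ_right, descPochhammer_zero, Nat.cast_zero, sub_zero, one_mul,
      Nat.cast_one, eval_mul, eval_X, eval_sub, eval_one, Pi.add_apply]
    ring
  rw [e, map_add, h, bernsteinForm_natCast]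
  simp only [descPochhammer_succ_right, descPochhammer_zero, Nat.cast_zero, sub_zero, one_mul,
    Nat.cast_one, eval_mul, eval_X, eval_sub, eval_one, smul_eq_C_mul, map_mul, map_natCast,
    map_sub, map_one]
  ring

theorem bernsteinForm_natCast_cube (n : ℕ) :
    bernsteinForm n (fun k => (k : R) ^ 3) =
      ((n : R[X]) * X) ^ 3 + 3 * ((n : R[X]) * X) * ((n : R[X]) * X * (1 - X)) +
        (n : R[X]) * X * (1 - X) * (1 - 2 * X) := by
  have h := bernsteinForm_descPochhammer (R := R) n 3
  have e : (fun k : ℕ => (k : R) ^ 3) =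
      (fun k : ℕ => (descPochhammer R 3).eval (k : R)) + (3 : R) • (fun k : ℕ => (k : R) ^ 2)
        - (2 : R) • (fun k : ℕ => (k : R)) := by
    ext
    simp only [descPochhammer_succ_right, descPochhammer_zero, Nat.cast_zero, sub_zero, one_mul,
      Nat.cast_one, Nat.cast_ofNat, eval_mul, eval_X, eval_sub, eval_one, eval_ofNat, Pi.sub_apply,
      Pi.add_apply, Pi.smul_apply, smul_eq_mul]
    ring
  rw [e, map_sub, map_add, map_smul, map_smul, h, bernsteinForm_natCast_sq,
    bernsteinForm_natCast]
  simp only [descPochhammer_succ_right, descPochhammer_zero, Nat.cast_zero, sub_zero, one_mul,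
    Nat.cast_one, Nat.cast_ofNat, eval_mul, eval_X, eval_sub, eval_one, eval_ofNat,
    smul_eq_C_mul, map_mul, map_natCast, map_sub, map_one, C_ofNat]
  ring

theorem derivative_bernsteinForm_succ (n : ℕ) (a : ℕ → R) :
    derivative (bernsteinForm (n + 1) a) =
      ((n : R[X]) + 1) * bernsteinForm n (fun k => a (k + 1) - a k) := by
  have shift : ∑ k ∈ Finset.range (n + 1), a (k + 1) • bernsteinPolynomial R n (k + 1) +
      a 0 • bernsteinPolynomial R n 0 = bernsteinForm n a := by
    rw [← Finset.sum_range_succ' fun k => a k • bernsteinPolynomial R n k, bernsteinForm_apply,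
      Finset.sum_range_succ, bernsteinPolynomial.eq_zero_of_lt R (Nat.lt_succ_self n), smul_zero,
      add_zero]
  have diff : bernsteinForm n (fun k => a (k + 1) - a k) =
      ∑ k ∈ Finset.range (n + 1),
        a (k + 1) • (bernsteinPolynomial R n k - bernsteinPolynomial R n (k + 1)) -
      a 0 • bernsteinPolynomial R n 0 := by
    simp only [smul_sub, Finset.sum_sub_distrib]
    rw [sub_sub, shift, ← bernsteinForm_apply n fun k => a (k + 1), ← map_sub]
    rfl
  rw [diff, bernsteinForm_apply, map_sum, Finset.sum_range_succ', mul_sub, Finset.mul_sum]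
  simp only [map_smul, bernsteinPolynomial.derivative_succ_aux, bernsteinPolynomial.derivative_zero,
    Nat.cast_add_one, Nat.add_sub_cancel, mul_smul_comm, neg_mul, smul_neg, sub_eq_add_neg]

/-- The sequence of second differences, as a linear map. -/
def secondDiff : (ℕ → R) →ₗ[R] (ℕ → R) where
  toFun a i := a (i + 2) - 2 * a (i + 1) + a i
  map_add' a b := by ext i; simp only [Pi.add_apply]; ring
  map_smul' c a := by ext i; simp only [Pi.smul_apply, smul_eq_mul, RingHom.id_apply]; ring

theorem secondDiff_apply (a : ℕ → R) (i : ℕ) :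
    secondDiff a i = a (i + 2) - 2 * a (i + 1) + a i := rfl

theorem secondDiff_const (c : R) : secondDiff (fun _ => c) = 0 := by
  ext i; simp only [secondDiff_apply, Pi.zero_apply]; ring

theorem secondDiff_natCast : secondDiff (fun k : ℕ => (k : R)) = 0 := by
  ext i; simp only [secondDiff_apply, Pi.zero_apply]; push_cast; ring

theorem secondDiff_sq_sub_cube (α β : R) (i : ℕ) :
    secondDiff (fun k : ℕ => α * (k : R) ^ 2 - β * (k : R) ^ 3) i = 2 * α - 6 * β * (i + 1) := by
  rw [secondDiff_apply]; push_cast; ring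

theorem secondDiff_reflect (a : ℕ → R) {m i : ℕ} (hi : i ≤ m) :
    secondDiff (fun k => a (m + 2 - k)) i = secondDiff a (m - i) := by
  simp only [secondDiff_apply]
  rw [show m + 2 - (i + 2) = m - i by lia, show m + 2 - (i + 1) = m - i + 1 by lia,
    show m + 2 - i = m - i + 2 by lia]
  ring

theorem derivative_derivative_bernsteinForm (m : ℕ) (a : ℕ → R) :
    derivative (derivative (bernsteinForm (m + 2) a)) =
      ((m : R[X]) + 2) * ((m : R[X]) + 1) * bernsteinForm m (secondDiff a) := by
  have h : (fun k => a (k + 1 + 1) - a (k + 1) - (a (k + 1) - a k)) = secondDiff a := by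
    ext k; rw [secondDiff_apply]; ring
  rw [derivative_bernsteinForm_succ, derivative_mul, derivative_bernsteinForm_succ, h]
  simp only [derivative_add, derivative_natCast, derivative_one, Nat.cast_add_one]
  ring

theorem eval_bernsteinForm_sub_sq (n : ℕ) (x : R) :
    (bernsteinForm n fun k => ((k : R) - n * x) ^ 2).eval x = n * (x * (1 - x)) := by
  have e : (fun k : ℕ => ((k : R) - n * x) ^ 2) = (fun k : ℕ => (k : R) ^ 2) -
      (2 * n * x) • (fun k : ℕ => (k : R)) + fun _ => (n * x) ^ 2 := by
    ext; simp only [Pi.add_apply, Pi.sub_apply, Pi.smul_apply, smul_eq_mul]; ring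
  rw [e, map_add, map_sub, map_smul, bernsteinForm_natCast_sq, bernsteinForm_natCast,
    bernsteinForm_const]
  simp only [eval_add, eval_sub, eval_smul, eval_mul, eval_pow, eval_natCast, eval_X, eval_one,
    eval_C, smul_eq_mul]
  ring

theorem sq_mul_eval_derivative_derivative_bernsteinForm (n : ℕ) (a : ℕ → R) (x : R) :
    (x * (1 - x)) ^ 2 * (derivative (derivative (bernsteinForm n a))).eval x =
      (bernsteinForm n fun k =>
        a k * (((k : R) - n * x) ^ 2 - ((n : R) - k) * x ^ 2 - k * (1 - x) ^ 2)).eval x := by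
  rw [bernsteinForm_apply, eval_bernsteinForm]
  simp only [map_sum, map_smul, eval_finsetSum, eval_smul, smul_eq_mul, Finset.mul_sum]
  refine Finset.sum_congr rfl fun k _ => ?_
  have h := congrArg (eval x)
    (X_mul_one_sub_X_sq_mul_derivative_two_bernsteinPolynomial (R := R) n k)
  simp only [eval_mul, eval_sub, eval_pow, eval_X, eval_one, eval_natCast] at h
  linear_combination a k * h

end BernsteinForm

section Positivity

variable {R : Type*} [CommRing R] [LinearOrder R] [IsStrictOrderedRing R] {n : ℕ} {x : R}

theorem eval_bernsteinPolynomial_nonneg (n k : ℕ) (hx : x ∈ Set.Icc 0 1) :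
    0 ≤ (bernsteinPolynomial R n k).eval x := by
  have h₀ : 0 ≤ x := hx.1
  have h₁ : 0 ≤ 1 - x := sub_nonneg.2 hx.2
  simp only [bernsteinPolynomial, eval_mul, eval_pow, eval_natCast, eval_X, eval_sub, eval_one]
  positivity

theorem eval_bernsteinForm_mono {a b : ℕ → R} (h : ∀ k ≤ n, a k ≤ b k)
    (hx : x ∈ Set.Icc 0 1) : (bernsteinForm n a).eval x ≤ (bernsteinForm n b).eval x := by
  simp only [eval_bernsteinForm]
  exact Finset.sum_le_sum fun k hk => mul_le_mul_of_nonneg_right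
    (h k (Finset.mem_range_succ_iff.1 hk)) (eval_bernsteinPolynomial_nonneg n k hx)

theorem eval_bernsteinForm_nonneg {a : ℕ → R} (h : ∀ k ≤ n, 0 ≤ a k)
    (hx : x ∈ Set.Icc 0 1) : 0 ≤ (bernsteinForm n a).eval x := by
  simpa [bernsteinForm_const] using eval_bernsteinForm_mono (a := fun _ => 0) h hx

theorem abs_eval_bernsteinForm_le {a b : ℕ → R} (h : ∀ k ≤ n, |a k| ≤ b k)
    (hx : x ∈ Set.Icc 0 1) : |(bernsteinForm n a).eval x| ≤ (bernsteinForm n b).eval x := by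
  refine abs_le.2 ⟨?_, eval_bernsteinForm_mono (fun k hk => (abs_le.1 (h k hk)).2) hx⟩
  rw [← eval_neg, ← map_neg]
  exact eval_bernsteinForm_mono (fun k hk => (abs_le.1 (h k hk)).1) hx

theorem abs_eval_bernsteinForm_le_const {a : ℕ → R} {c : R} (h : ∀ k ≤ n, |a k| ≤ c)
    (hx : x ∈ Set.Icc 0 1) : |(bernsteinForm n a).eval x| ≤ c := by
  simpa [bernsteinForm_const] using abs_eval_bernsteinForm_le h hx

theorem abs_mul_eval_derivative_derivative_bernsteinForm_le {a : ℕ → R} {M : R}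
    (h : ∀ k ≤ n, |a k| ≤ M) (hx : x ∈ Set.Ioo 0 1) :
    |x * (1 - x) * (derivative (derivative (bernsteinForm n a))).eval x| ≤ 2 * n * M := by
  have hx₁ : 0 < 1 - x := sub_pos.2 hx.2
  have hφ : 0 < x * (1 - x) := mul_pos hx.1 hx₁
  have e : (fun k : ℕ => M * (((k : R) - n * x) ^ 2 + ((n : R) - k) * x ^ 2 + k * (1 - x) ^ 2)) =
      M • ((fun k : ℕ => ((k : R) - n * x) ^ 2) + (1 - 2 * x) • (fun k : ℕ => (k : R)) +
        fun _ => n * x ^ 2) := by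
    ext; simp only [Pi.add_apply, Pi.smul_apply, smul_eq_mul]; ring
  refine le_of_mul_le_mul_left ?_ hφ
  calc x * (1 - x) * |x * (1 - x) * (derivative (derivative (bernsteinForm n a))).eval x|
      = |(x * (1 - x)) ^ 2 * (derivative (derivative (bernsteinForm n a))).eval x| := by
        rw [← abs_of_pos hφ, ← abs_mul, abs_of_pos hφ, sq, mul_assoc _ (x * (1 - x))]
    _ ≤ (bernsteinForm n fun k => M * (((k : R) - n * x) ^ 2 + ((n : R) - k) * x ^ 2 +
          k * (1 - x) ^ 2)).eval x := by
        rw [sq_mul_eval_derivative_derivative_bernsteinForm]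
        refine abs_eval_bernsteinForm_le (fun k hk => ?_) (Set.Ioo_subset_Icc_self hx)
        have hk' : (0 : R) ≤ n - k := sub_nonneg.2 (Nat.cast_le.2 hk)
        rw [abs_mul]
        refine mul_le_mul (h k hk) (abs_le.2 ⟨?_, ?_⟩) (abs_nonneg _)
          ((abs_nonneg _).trans (h k hk))
        · linarith [sq_nonneg ((k : R) - n * x)]
        · linarith [mul_nonneg hk' (sq_nonneg x),
            mul_nonneg (Nat.cast_nonneg k) (sq_nonneg (1 - x))]
    _ = x * (1 - x) * (2 * n * M) := by
        rw [e, map_smul, map_add, map_add, map_smul, eval_smul, eval_add, eval_add,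
          eval_bernsteinForm_sub_sq, bernsteinForm_natCast, bernsteinForm_const]
        simp only [eval_smul, eval_mul, eval_natCast, eval_X, eval_C, smul_eq_mul]
        ring

end Positivity

section SecondSymmDiff

/-- The second symmetric difference of `f` at `x` with step `t`. -/
def secondSymmDiff {R : Type*} [Ring R] (f : R → R) (x t : R) : R := f (x + t) - 2 * f x + f (x - t)

theorem le_sub_of_le_derivative_add {f f' : ℝ → ℝ} {a t c d : ℝ}
    (hf : ∀ x ∈ Set.Ioo (a - t) (a + t), HasDerivAt f (f' x) x)
    (h : ∀ s ∈ Set.Ioo 0 t, c - d * s ≤ f' (a + s) + f' (a - s)) :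
    ∀ s ∈ Set.Ioo 0 t, c * s - d * s ^ 2 / 2 ≤ f (a + s) - f (a - s) := by
  intro s hs
  have hderiv : ∀ s ∈ Set.Ico 0 t, HasDerivAt
      (fun s => f (a + s) - f (a - s) - (c * s - d * s ^ 2 / 2))
      (f' (a + s) + f' (a - s) - (c - d * s)) s := fun s hs => by
    have h₁ := (hf _ ⟨by linarith [hs.1, hs.2], by linarith [hs.2]⟩).comp_const_add a s
    have h₂ := (hf _ ⟨by linarith [hs.2], by linarith [hs.1, hs.2]⟩).comp_const_sub a s
    have h₃ := ((hasDerivAt_id s).const_mul c).sub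
      ((((hasDerivAt_id s).pow 2).const_mul d).div_const 2)
    refine ((h₁.sub h₂).sub h₃).congr_deriv ?_
    simp only [id_eq]; ring
  have hmono := monotoneOn_of_hasDerivWithinAt_nonneg (convex_Ico 0 t)
    (fun s hs => (hderiv s hs).continuousAt.continuousWithinAt)
    (fun s hs => (hderiv s (interior_subset hs)).hasDerivWithinAt)
    (fun s hs => by rw [interior_Ico] at hs; linarith [h s hs])
  have h₀ := hmono ⟨le_rfl, hs.1.trans hs.2⟩ (Set.Ioo_subset_Ico_self hs) hs.1.le
  simp only [add_zero, sub_zero] at h₀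
  linarith

theorem le_secondSymmDiff {f f' f'' : ℝ → ℝ} {a t c d : ℝ} (ht : 0 ≤ t)
    (hf : ContinuousOn f (Set.Icc (a - t) (a + t)))
    (hf' : ∀ x ∈ Set.Ioo (a - t) (a + t), HasDerivAt f (f' x) x)
    (hf'' : ∀ x ∈ Set.Ioo (a - t) (a + t), HasDerivAt f' (f'' x) x)
    (h : ∀ s ∈ Set.Ioo 0 t, c - d * s ≤ f'' (a + s) + f'' (a - s)) :
    c * t ^ 2 / 2 - d * t ^ 3 / 6 ≤ secondSymmDiff f a t := by
  have hderiv : ∀ s ∈ Set.Ioo 0 t, HasDerivAt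
      (fun s => f (a + s) + f (a - s) - (c * s ^ 2 / 2 - d * s ^ 3 / 6))
      (f' (a + s) - f' (a - s) - (c * s - d * s ^ 2 / 2)) s := fun s hs => by
    have h₁ := (hf' _ ⟨by linarith [hs.1, hs.2], by linarith [hs.2]⟩).comp_const_add a s
    have h₂ := (hf' _ ⟨by linarith [hs.2], by linarith [hs.1, hs.2]⟩).comp_const_sub a s
    have h₃ := ((((hasDerivAt_id s).pow 2).const_mul c).div_const 2).sub
      ((((hasDerivAt_id s).pow 3).const_mul d).div_const 6)
    refine ((h₁.add h₂).sub h₃).congr_deriv ?_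
    simp only [id_eq]; ring
  have hcont : ContinuousOn (fun s => f (a + s) + f (a - s) - (c * s ^ 2 / 2 - d * s ^ 3 / 6))
      (Set.Icc 0 t) := by
    refine ((hf.comp (by fun_prop) fun s hs => ?_).add
      (hf.comp (by fun_prop) fun s hs => ?_)).sub (by fun_prop) <;>
    exact ⟨by linarith [hs.1, hs.2], by linarith [hs.1, hs.2]⟩
  have hmono := monotoneOn_of_hasDerivWithinAt_nonneg (convex_Icc 0 t) hcont
    (fun s hs => (hderiv s (by rwa [interior_Icc] at hs)).hasDerivWithinAt)
    (fun s hs => by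
      rw [interior_Icc] at hs
      exact sub_nonneg.2 (le_sub_of_le_derivative_add hf'' h s hs))
  have h₀ := hmono ⟨le_rfl, ht⟩ ⟨ht, le_rfl⟩ ht
  simp only [add_zero, sub_zero] at h₀
  rw [secondSymmDiff]
  linarith

end SecondSymmDiff

section Entropy

open Real

theorem neg_binEntropy_le {x p : ℝ} (hx : x ∈ Set.Icc 0 1) (hp : p ∈ Set.Ioo 0 1) :
    -binEntropy x ≤ x * log p + (1 - x) * log (1 - p) + (x - p) ^ 2 / (p * (1 - p)) := by
  have neg_negMulLog_le : ∀ {x p : ℝ}, 0 ≤ x → 0 < p →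
      -negMulLog x ≤ x * log p + x * (x / p - 1) := by
    intro x p hx hp
    rcases hx.eq_or_lt with rfl | hx
    · simp
    have := mul_le_mul_of_nonneg_left (log_le_sub_one_of_pos (div_pos hx hp)) hx.le
    rw [log_div hx.ne' hp.ne'] at this
    rw [negMulLog]
    linarith
  have hp₀ : p ≠ 0 := hp.1.ne'
  have hp₁ : 1 - p ≠ 0 := (sub_pos.2 hp.2).ne'
  have e : (x - p) ^ 2 / (p * (1 - p)) = x * (x / p - 1) + (1 - x) * ((1 - x) / (1 - p) - 1) := by
    field_simp; ring
  rw [binEntropy_eq_negMulLog_add_negMulLog_one_sub, e]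
  linarith [neg_negMulLog_le hx.1 hp.1, neg_negMulLog_le (sub_nonneg.2 hx.2) (sub_pos.2 hp.2)]

theorem binEntropy_eq_neg_sub (p : ℝ) :
    binEntropy p = -(p * log p) - (1 - p) * log (1 - p) := by
  rw [binEntropy_eq_negMulLog_add_negMulLog_one_sub, negMulLog, negMulLog]; ring

theorem neg_secondSymmDiff_binEntropy_le {y t : ℝ} (hy : y ∈ Set.Ioo 0 1) (ht : 0 ≤ t)
    (h₀ : t ≤ y) (h₁ : t ≤ 1 - y) :
    -secondSymmDiff binEntropy y t ≤ 2 * (t ^ 2 / (y * (1 - y))) := by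
  have hadd := neg_binEntropy_le (x := y + t) ⟨by linarith [hy.1], by linarith⟩ hy
  have hsub := neg_binEntropy_le (x := y - t) ⟨by linarith, by linarith [hy.2]⟩ hy
  rw [add_sub_cancel_left] at hadd
  rw [sub_sub_cancel_left, neg_sq] at hsub
  rw [secondSymmDiff, binEntropy_eq_neg_sub y]
  linarith

theorem hasDerivAt_neg_binEntropy {p : ℝ} (hp : p ∈ Set.Ioo 0 1) :
    HasDerivAt (fun p => -binEntropy p) (log p - log (1 - p)) p :=
  (hasDerivAt_binEntropy hp.1.ne' hp.2.ne).fun_neg.congr_deriv (by ring)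

theorem hasDerivAt_log_sub_log_one_sub {p : ℝ} (hp : p ∈ Set.Ioo 0 1) :
    HasDerivAt (fun p => log p - log (1 - p)) (1 / (p * (1 - p))) p := by
  have hp₀ : p ≠ 0 := hp.1.ne'
  have hp₁ : 1 - p ≠ 0 := (sub_pos.2 hp.2).ne'
  refine ((hasDerivAt_log hp₀).sub ((hasDerivAt_log hp₁).comp_const_sub 1 p)).congr_deriv ?_
  field_simp; ring

theorem div_le_neg_secondSymmDiff_binEntropy {y t : ℝ} (hy : y ∈ Set.Ioo 0 1) (ht : 0 ≤ t)
    (h₀ : t ≤ y) (h₁ : t ≤ 1 - y) :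
    t ^ 2 / (y * (1 - y)) ≤ -secondSymmDiff binEntropy y t := by
  have mem : ∀ x ∈ Set.Ioo (y - t) (y + t), x ∈ Set.Ioo (0 : ℝ) 1 := fun x hx =>
    ⟨by linarith [hx.1], by linarith [hx.2]⟩
  have h := le_secondSymmDiff (f := fun p => -binEntropy p) (c := 2 / (y * (1 - y))) (d := 0) ht
    binEntropy_continuous.neg.continuousOn (fun x hx => hasDerivAt_neg_binEntropy (mem x hx))
    (fun x hx => hasDerivAt_log_sub_log_one_sub (mem x hx)) fun s hs => ?_
  · rw [secondSymmDiff] at h ⊢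
    linarith [show 2 / (y * (1 - y)) * t ^ 2 / 2 = t ^ 2 / (y * (1 - y)) by ring]
  · have hA : 0 < (y + s) * (1 - (y + s)) :=
      mul_pos (by linarith [hy.1, hs.1]) (by linarith [hs.2])
    have hB : 0 < (y - s) * (1 - (y - s)) :=
      mul_pos (by linarith [hs.2]) (by linarith [hy.2, hs.1])
    have hφ : 0 < y * (1 - y) := mul_pos hy.1 (sub_pos.2 hy.2)
    rw [zero_mul, sub_zero, div_add_div _ _ hA.ne' hB.ne', div_le_div_iff₀ hφ (mul_pos hA hB)]
    nlinarith [sq_nonneg ((y + s) * (1 - (y + s)) - (y - s) * (1 - (y - s))),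
      mul_nonneg (sq_nonneg s) (add_pos hA hB).le]

section Comparison

variable {g g' g'' : ℝ → ℝ} {c y t : ℝ}

/-- The binary entropy has second derivative `-1 / (x (1 - x))`, so that `g - c H` is convex. -/
theorem mul_secondSymmDiff_binEntropy_le (hg : ContinuousOn g (Set.Icc 0 1))
    (hg' : ∀ x ∈ Set.Ioo 0 1, HasDerivAt g (g' x) x)
    (hg'' : ∀ x ∈ Set.Ioo 0 1, HasDerivAt g' (g'' x) x)
    (hc : ∀ x ∈ Set.Ioo 0 1, -c ≤ x * (1 - x) * g'' x)
    (ht : 0 ≤ t) (h₀ : t ≤ y) (h₁ : t ≤ 1 - y) :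
    c * secondSymmDiff binEntropy y t ≤ secondSymmDiff g y t := by
  have mem : ∀ x ∈ Set.Ioo (y - t) (y + t), x ∈ Set.Ioo (0 : ℝ) 1 := fun x hx =>
    ⟨by linarith [hx.1], by linarith [hx.2]⟩
  have hpos : ∀ x ∈ Set.Ioo 0 1, 0 ≤ g'' x + c * (1 / (x * (1 - x))) := fun x hx => by
    have hφ : 0 < x * (1 - x) := mul_pos hx.1 (sub_pos.2 hx.2)
    have h := div_nonneg (neg_le_iff_add_nonneg.1 (hc x hx)) hφ.le
    rwa [add_div, mul_div_cancel_left₀ _ hφ.ne', ← mul_one_div c] at h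
  have h := le_secondSymmDiff (f := fun x => g x + c * -binEntropy x)
    (f' := fun x => g' x + c * (log x - log (1 - x)))
    (f'' := fun x => g'' x + c * (1 / (x * (1 - x)))) (a := y) (c := 0) (d := 0) ht
    ((hg.mono (Set.Icc_subset_Icc (by linarith) (by linarith))).add
      (binEntropy_continuous.neg.const_mul c).continuousOn)
    (fun x hx => (hg' x (mem x hx)).add ((hasDerivAt_neg_binEntropy (mem x hx)).const_mul c))
    (fun x hx => (hg'' x (mem x hx)).add
      ((hasDerivAt_log_sub_log_one_sub (mem x hx)).const_mul c)) fun s hs => by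
    linarith [hpos (y + s) (mem _ ⟨by linarith [hs.1], by linarith [hs.2]⟩),
      hpos (y - s) (mem _ ⟨by linarith [hs.2], by linarith [hs.1]⟩)]
  simp only [secondSymmDiff] at h ⊢
  linarith

theorem abs_secondSymmDiff_le (hg : ContinuousOn g (Set.Icc 0 1))
    (hg' : ∀ x ∈ Set.Ioo 0 1, HasDerivAt g (g' x) x)
    (hg'' : ∀ x ∈ Set.Ioo 0 1, HasDerivAt g' (g'' x) x)
    (hc : ∀ x ∈ Set.Ioo 0 1, |x * (1 - x) * g'' x| ≤ c)
    (hy : y ∈ Set.Ioo 0 1) (ht : 0 ≤ t) (h₀ : t ≤ y) (h₁ : t ≤ 1 - y) :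
    |secondSymmDiff g y t| ≤ 2 * c * (t ^ 2 / (y * (1 - y))) := by
  have hlower := mul_secondSymmDiff_binEntropy_le hg hg' hg''
    (fun x hx => (abs_le.1 (hc x hx)).1) ht h₀ h₁
  have hupper := mul_secondSymmDiff_binEntropy_le hg.neg (fun x hx => (hg' x hx).neg)
    (fun x hx => (hg'' x hx).neg)
    (fun x hx => by rw [mul_neg]; exact neg_le_neg (abs_le.1 (hc x hx)).2) ht h₀ h₁
  have hH := mul_le_mul_of_nonneg_left (neg_secondSymmDiff_binEntropy_le hy ht h₀ h₁)
    ((abs_nonneg _).trans (hc y hy))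
  have hneg : secondSymmDiff (-g) y t = -secondSymmDiff g y t := by
    simp only [secondSymmDiff, Pi.neg_apply]; ring
  exact abs_le.2 ⟨by linarith, by linarith⟩

end Comparison

theorem sub_inv_le_eval_bernsteinForm_binEntropy {n : ℕ} (hn : n ≠ 0) {p : ℝ}
    (hp : p ∈ Set.Ioo 0 1) :
    binEntropy p - (n : ℝ)⁻¹ ≤ (bernsteinForm n fun k => binEntropy (k / n)).eval p := by
  have hn' : (0 : ℝ) < n := by positivity
  have tangent : ∀ k ≤ n, ((log (1 - p) - log p) / n) * k - log (1 - p) -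
      ((n : ℝ) ^ 2 * (p * (1 - p)))⁻¹ * (k - n * p) ^ 2 ≤ binEntropy (k / n) := by
    intro k hk
    have h := neg_binEntropy_le (x := k / n)
      ⟨by positivity, div_le_one_of_le₀ (Nat.cast_le.2 hk) hn'.le⟩ hp
    have e₁ : ((k : ℝ) / n - p) ^ 2 / (p * (1 - p)) =
        ((n : ℝ) ^ 2 * (p * (1 - p)))⁻¹ * (k - n * p) ^ 2 := by
      field_simp
    have e₂ : ((log (1 - p) - log p) / n) * k =
        (k : ℝ) / n * log (1 - p) - (k : ℝ) / n * log p := by ring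
    linarith
  refine le_of_eq_of_le ?_ (eval_bernsteinForm_mono tangent (Set.Ioo_subset_Icc_self hp))
  have e : (fun k : ℕ => ((log (1 - p) - log p) / n) * k - log (1 - p) -
      ((n : ℝ) ^ 2 * (p * (1 - p)))⁻¹ * (k - n * p) ^ 2) =
      ((log (1 - p) - log p) / n) • (fun k : ℕ => (k : ℝ)) - (fun _ => log (1 - p)) -
      ((n : ℝ) ^ 2 * (p * (1 - p)))⁻¹ • fun k : ℕ => ((k : ℝ) - n * p) ^ 2 := rfl
  rw [e, map_sub, map_sub, map_smul, map_smul, bernsteinForm_natCast, bernsteinForm_const]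
  simp only [eval_sub, eval_smul, eval_bernsteinForm_sub_sq, eval_mul, eval_natCast, eval_X,
    eval_C, smul_eq_mul]
  have hp₀ : p ≠ 0 := hp.1.ne'
  have hp₁ : 1 - p ≠ 0 := (sub_pos.2 hp.2).ne'
  rw [binEntropy_eq_neg_sub]
  field_simp
  ring

end Entropy

section Modulus

theorem secondSymmDiff_zero {R : Type*} [Ring R] (f : R → R) (x : R) :
    secondSymmDiff f x 0 = 0 := by
  rw [secondSymmDiff, add_zero, sub_zero]; noncomm_ring

theorem abs_secondSymmDiff_le_four_mul {R : Type*} [CommRing R] [LinearOrder R]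
    [IsStrictOrderedRing R] {f : R → R} {x u C : R} (hu : 0 ≤ u) (h₀ : u ≤ x)
    (h₁ : u ≤ 1 - x) (hf : ∀ y ∈ Set.Icc 0 1, |f y| ≤ C) : |secondSymmDiff f x u| ≤ 4 * C := by
  have hadd := abs_le.1 (hf (x + u) ⟨by linarith, by linarith⟩)
  have hmid := abs_le.1 (hf x ⟨by linarith, by linarith⟩)
  have hsub := abs_le.1 (hf (x - u) ⟨by linarith, by linarith⟩)
  rw [secondSymmDiff]
  exact abs_le.2 ⟨by linarith, by linarith⟩

theorem ditzSymmDiff_two_eq_ite {h x : ℝ} (hh : 0 ≤ h) (f : ℝ → ℝ) :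
    ditzSymmDiff 2 h f x = if h ≤ x ∧ h ≤ 1 - x then secondSymmDiff f x h else 0 := by
  have hstep : ((2 : ℕ) : ℝ) * h / 2 = h := by push_cast; ring
  have hdomain : (x - h ∈ Set.Icc (0 : ℝ) 1 ∧ x + h ∈ Set.Icc (0 : ℝ) 1) ↔
      h ≤ x ∧ h ≤ 1 - x := by
    constructor
    · rintro ⟨⟨h₀, -⟩, -, h₁⟩
      exact ⟨by linarith, by linarith⟩
    · rintro ⟨h₀, h₁⟩
      exact ⟨⟨by linarith, by linarith⟩, by linarith, by linarith⟩
  rw [ditzSymmDiff, hstep]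
  refine if_congr hdomain ?_ rfl
  simp only [secondSymmDiff, Finset.sum_range_succ, Finset.sum_range_zero]
  norm_num
  rw [show x + h - 2 * h = x - h by ring]
  ring

theorem abs_ditzSymmDiff_two_le {f : ℝ → ℝ} {h x C : ℝ} (hh : 0 ≤ h) (hC : 0 ≤ C)
    (hf : h ≤ x → h ≤ 1 - x → |secondSymmDiff f x h| ≤ C) : |ditzSymmDiff 2 h f x| ≤ C := by
  rw [ditzSymmDiff_two_eq_ite hh]
  split_ifs with hx
  · exact hf hx.1 hx.2
  · rwa [abs_zero]

theorem abs_secondSymmDiff_le_dtMod {f : ℝ → ℝ} {t x u : ℝ} (hf : ContinuousOn f (Set.Icc 0 1))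
    (hx : x ∈ Set.Ioo 0 1) (hu : 0 < u) (h₀ : u ≤ x) (h₁ : u ≤ 1 - x)
    (hut : u ≤ t * √(x * (1 - x))) : |secondSymmDiff f x u| ≤ dtMod 2 f t := by
  obtain ⟨C, hC⟩ := isCompact_Icc.exists_bound_of_continuousOn hf
  have hC₀ : 0 ≤ C := (norm_nonneg _).trans (hC 0 (Set.left_mem_Icc.2 zero_le_one))
  have hφ : 0 < √(x * (1 - x)) := Real.sqrt_pos.2 (mul_pos hx.1 (sub_pos.2 hx.2))
  refine le_csSup ⟨4 * C, ?_⟩ ⟨u / √(x * (1 - x)), x, by positivity, (div_le_iff₀ hφ).2 hut,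
    Set.Ioo_subset_Icc_self hx, ?_⟩
  · rintro _ ⟨h, x, hh, -, -, rfl⟩
    have hstep : 0 ≤ h * √(x * (1 - x)) := by positivity
    exact abs_ditzSymmDiff_two_le hstep (by positivity) fun h₀ h₁ =>
      abs_secondSymmDiff_le_four_mul hstep h₀ h₁ hC
  · rw [div_mul_cancel₀ _ hφ.ne', ditzSymmDiff_two_eq_ite hu.le, if_pos ⟨h₀, h₁⟩]

theorem dtMod_nonneg (r : ℕ) (f : ℝ → ℝ) (t : ℝ) : 0 ≤ dtMod r f t := by
  refine Real.sSup_nonneg ?_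
  rintro _ ⟨h, x, -, -, -, rfl⟩
  exact abs_nonneg _

theorem dtMod_two_le {f : ℝ → ℝ} {t C : ℝ} (hC : 0 ≤ C)
    (h : ∀ x ∈ Set.Ioo 0 1, ∀ u, 0 < u → u ≤ x → u ≤ 1 - x → u ≤ t * √(x * (1 - x)) →
      |secondSymmDiff f x u| ≤ C) : dtMod 2 f t ≤ C := by
  refine Real.sSup_le ?_ hC
  rintro _ ⟨s, x, hs, hst, -, rfl⟩
  have hstep : 0 ≤ s * √(x * (1 - x)) := by positivity
  refine abs_ditzSymmDiff_two_le hstep hC fun h₀ h₁ => ?_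
  rcases hstep.eq_or_lt with h_zero | hpos
  · rwa [← h_zero, secondSymmDiff_zero, abs_zero]
  · exact h x ⟨by linarith, by linarith⟩ _ hpos h₀ h₁
      (mul_le_mul_of_nonneg_right hst (Real.sqrt_nonneg _))

theorem dtMod_neg (r : ℕ) (f : ℝ → ℝ) (t : ℝ) : dtMod r (-f) t = dtMod r f t := by
  have h : ∀ h x, |ditzSymmDiff r h (-f) x| = |ditzSymmDiff r h f x| := fun h x => by
    simp only [ditzSymmDiff, Pi.neg_apply, mul_neg, Finset.sum_neg_distrib]
    split_ifs
    · exact abs_neg _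
    · rfl
  simp only [dtMod, h]

end Modulus

section DirectEstimate

theorem exists_affine_le_of_le_chord {F : ℝ → ℝ} {α β p v : ℝ} (hp : p ∈ Set.Ioo α β)
    (hv : v ≤ F p)
    (h : ∀ a ∈ Set.Ico α p, ∀ b ∈ Set.Ioc p β, v * (b - a) ≤ F a * (b - p) + F b * (p - a)) :
    ∃ m, ∀ x ∈ Set.Icc α β, v + m * (x - p) ≤ F x := by
  obtain ⟨m, hm₁, hm₂⟩ := exists_between_of_forall_le
    (s := (fun a => (v - F a) / (p - a)) '' Set.Ico α p)
    (t := (fun b => (F b - v) / (b - p)) '' Set.Ioc p β)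
    ((Set.nonempty_Ico.2 hp.1).image _) ((Set.nonempty_Ioc.2 hp.2).image _) <| by
      rintro _ ⟨a, ha, rfl⟩ _ ⟨b, hb, rfl⟩
      rw [div_le_div_iff₀ (sub_pos.2 ha.2) (sub_pos.2 hb.1)]
      linarith [h a ha b hb]
  refine ⟨m, fun x hx => ?_⟩
  rcases lt_trichotomy x p with hxp | rfl | hxp
  · have := hm₁ ⟨x, ⟨hx.1, hxp⟩, rfl⟩
    rw [div_le_iff₀ (sub_pos.2 hxp)] at this
    linarith
  · simpa using hv
  · have := hm₂ ⟨x, ⟨hxp, hx.2⟩, rfl⟩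
    rw [le_div_iff₀ (sub_pos.2 hxp)] at this
    linarith

/-- A maximum principle: second differences are nonpositive at an interior maximum, and they are at
most `-G y` when one end of the step reaches the boundary. -/
theorem le_of_neg_le_secondSymmDiff {G r : ℝ → ℝ} {a b W : ℝ} (hW : 0 ≤ W)
    (hG : ContinuousOn G (Set.Icc a b)) (ha : G a ≤ 0) (hb : G b ≤ 0)
    (hr : ∀ y ∈ Set.Ioo a b, 0 < r y)
    (h : ∀ y ∈ Set.Ioo a b, ∀ τ, 0 < τ → τ ≤ r y → τ ≤ y - a → τ ≤ b - y →
      -W ≤ secondSymmDiff G y τ)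
    (h_full : ∀ y ∈ Set.Ioo a b, r y ≤ y - a → r y ≤ b - y → 0 < secondSymmDiff G y (r y))
    {x : ℝ} (hx : x ∈ Set.Icc a b) : G x ≤ W := by
  obtain ⟨y, hy, hmax⟩ := isCompact_Icc.exists_isMaxOn ⟨x, hx⟩ hG
  refine (hmax hx).trans (not_lt.1 fun hWy => ?_)
  have hay : a < y := hy.1.lt_of_ne (by rintro rfl; linarith)
  have hyb : y < b := hy.2.lt_of_ne (by rintro rfl; linarith)
  have hy' : y ∈ Set.Ioo a b := ⟨hay, hyb⟩
  have le_max : ∀ z ∈ Set.Icc a b, G z ≤ G y := fun z hz => hmax hz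
  by_cases hfull : r y ≤ y - a ∧ r y ≤ b - y
  · have := h_full y hy' hfull.1 hfull.2
    rw [secondSymmDiff] at this
    linarith [hr y hy', le_max (y + r y) ⟨by linarith [hr y hy'], by linarith⟩,
      le_max (y - r y) ⟨by linarith, by linarith [hr y hy']⟩]
  rcases le_total (y - a) (b - y) with hle | hle
  · have := h y hy' (y - a) (by linarith) (by grind) le_rfl hle
    rw [secondSymmDiff, sub_sub_cancel] at this
    linarith [le_max (y + (y - a)) ⟨by linarith, by linarith⟩]
  · have := h y hy' (b - y) (by linarith) (by grind) hle le_rfl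
    rw [secondSymmDiff, add_sub_cancel] at this
    linarith [le_max (y - (b - y)) ⟨by linarith, by linarith⟩]

section

open Real

variable {f : ℝ → ℝ} {t c : ℝ}

theorem neg_dtMod_add_le_secondSymmDiff (hf : ContinuousOn f (Set.Icc 0 1)) (hc : 0 ≤ c) {y τ : ℝ}
    (hy : y ∈ Set.Ioo 0 1) (hτ : 0 < τ) (h₀ : τ ≤ y) (h₁ : τ ≤ 1 - y)
    (hτt : τ ≤ t * √(y * (1 - y))) :
    -dtMod 2 f t + c * (τ ^ 2 / (y * (1 - y))) ≤
      secondSymmDiff (fun x => f x - c * binEntropy x) y τ := by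
  have hω := (abs_le.1 (abs_secondSymmDiff_le_dtMod hf hy hτ h₀ h₁ hτt)).1
  have hH := mul_le_mul_of_nonneg_left (div_le_neg_secondSymmDiff_binEntropy hy hτ.le h₀ h₁) hc
  simp only [secondSymmDiff] at hω hH ⊢
  linarith

/-- Subtracting a multiple of the entropy makes `f` convex at the scale `t √(x (1 - x))`, hence
convex up to the additive error `dtMod 2 f t`. -/
theorem sub_dtMod_le_chord (hf : ContinuousOn f (Set.Icc 0 1)) (ht : 0 < t)
    (hc : dtMod 2 f t < c * t ^ 2) {a b p : ℝ} (ha : a ∈ Set.Ico 0 p) (hb : b ∈ Set.Ioc p 1) :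
    (f p - c * binEntropy p - dtMod 2 f t) * (b - a) ≤
      (f a - c * binEntropy a) * (b - p) + (f b - c * binEntropy b) * (p - a) := by
  set F : ℝ → ℝ := fun x => f x - c * binEntropy x with hF
  set G : ℝ → ℝ := fun x => F x - (F a * (b - x) + F b * (x - a)) / (b - a) with hG
  have hc₀ : 0 < c := pos_of_mul_pos_left ((dtMod_nonneg 2 f t).trans_lt hc) (sq_nonneg t)
  have hab : 0 < b - a := by linarith [ha.2, hb.1]
  have mem : ∀ y ∈ Set.Ioo a b, y ∈ Set.Ioo (0 : ℝ) 1 := fun y hy =>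
    ⟨ha.1.trans_lt hy.1, hy.2.trans_le hb.2⟩
  have hφ : ∀ y ∈ Set.Ioo a b, 0 < y * (1 - y) := fun y hy =>
    mul_pos (mem y hy).1 (sub_pos.2 (mem y hy).2)
  have hdiff : ∀ y ∈ Set.Ioo a b, ∀ τ, 0 < τ → τ ≤ t * √(y * (1 - y)) → τ ≤ y - a → τ ≤ b - y →
      -dtMod 2 f t + c * (τ ^ 2 / (y * (1 - y))) ≤ secondSymmDiff G y τ := by
    intro y hy τ hτ hτt hτa hτb
    refine (neg_dtMod_add_le_secondSymmDiff hf hc₀.le (mem y hy) hτ (by linarith [ha.1])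
      (by linarith [hb.2]) hτt).trans_eq ?_
    simp only [hG, hF, secondSymmDiff]
    ring
  have hcont : ContinuousOn G (Set.Icc a b) := by
    refine ContinuousOn.sub (ContinuousOn.sub ?_ (by fun_prop)) (by fun_prop)
    exact hf.mono (Set.Icc_subset_Icc ha.1 hb.2)
  have hGp : G p ≤ dtMod 2 f t := by
    refine le_of_neg_le_secondSymmDiff (r := fun y => t * √(y * (1 - y))) (dtMod_nonneg 2 f t)
      hcont (by simp [hG, hab.ne']) (by simp [hG, hab.ne'])
      (fun y hy => mul_pos ht (sqrt_pos.2 (hφ y hy)))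
      (fun y hy τ hτ hτr hτa hτb => ?_) (fun y hy hra hrb => ?_) ⟨ha.2.le, hb.1.le⟩
    · have := hφ y hy
      exact (le_add_of_nonneg_right (by positivity)).trans (hdiff y hy τ hτ hτr hτa hτb)
    · have := hdiff y hy _ (mul_pos ht (sqrt_pos.2 (hφ y hy))) le_rfl hra hrb
      rw [mul_pow, sq_sqrt (hφ y hy).le, mul_div_cancel_right₀ _ (hφ y hy).ne'] at this
      linarith
  rwa [hG, sub_le_iff_le_add', ← sub_le_iff_le_add, le_div_iff₀ hab] at hGp

theorem sub_two_mul_dtMod_le_eval_bernsteinForm (hf : ContinuousOn f (Set.Icc 0 1)) {n : ℕ}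
    (hn : n ≠ 0) {p : ℝ} (hp : p ∈ Set.Ioo 0 1) :
    f p - 2 * dtMod 2 f (1 / √n) ≤ (bernsteinForm n fun k => f (k / n)).eval p := by
  refine le_of_forall_pos_le_add fun ε hε => ?_
  set ω := dtMod 2 f (1 / √n)
  have hn₀ : (0 : ℝ) < n := by positivity
  have hω : 0 ≤ ω := dtMod_nonneg 2 f _
  obtain ⟨m, hm⟩ := exists_affine_le_of_le_chord (F := fun x => f x - n * (ω + ε) * binEntropy x)
    (v := f p - n * (ω + ε) * binEntropy p - ω) hp (by linarith)
    fun a ha b hb => sub_dtMod_le_chord hf (by positivity)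
      (by rw [div_pow, sq_sqrt hn₀.le]; field_simp; linarith) ha hb
  have tangent : ∀ k ≤ n, f p - n * (ω + ε) * binEntropy p - ω - m * p + m / n * k +
      n * (ω + ε) * binEntropy (k / n) ≤ f (k / n) := fun k hk => by
    have := hm (k / n) ⟨by positivity, div_le_one_of_le₀ (Nat.cast_le.2 hk) hn₀.le⟩
    linarith [show m / n * k = m * (k / n) by ring]
  have hB := eval_bernsteinForm_mono tangent (Set.Ioo_subset_Icc_self hp)
  have e : (fun k : ℕ => f p - n * (ω + ε) * binEntropy p - ω - m * p + m / n * k +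
      n * (ω + ε) * binEntropy (k / n)) =
      (fun _ => f p - n * (ω + ε) * binEntropy p - ω - m * p) + (m / n) • (fun k : ℕ => (k : ℝ)) +
      (n * (ω + ε)) • fun k : ℕ => binEntropy (k / n) := rfl
  rw [e, map_add, map_add, map_smul, map_smul, bernsteinForm_const, bernsteinForm_natCast] at hB
  simp only [eval_add, eval_smul, eval_C, eval_mul, eval_natCast, eval_X, smul_eq_mul] at hB
  have hH := mul_le_mul_of_nonneg_left (sub_inv_le_eval_bernsteinForm_binEntropy hn hp)
    (by positivity : 0 ≤ n * (ω + ε))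
  have e_inv : n * (ω + ε) * (n : ℝ)⁻¹ = ω + ε := by field_simp
  rw [mul_sub, e_inv] at hH
  rw [← mul_assoc, div_mul_cancel₀ _ hn₀.ne'] at hB
  linarith

theorem abs_eval_bernsteinForm_sub_le_dtMod (hf : ContinuousOn f (Set.Icc 0 1)) {n : ℕ}
    (hn : n ≠ 0) {p : ℝ} (hp : p ∈ Set.Icc 0 1) :
    |(bernsteinForm n fun k => f (k / n)).eval p - f p| ≤ 2 * dtMod 2 f (1 / √n) := by
  have hω : 0 ≤ 2 * dtMod 2 f (1 / √n) := mul_nonneg zero_le_two (dtMod_nonneg 2 f _)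
  rcases eq_or_lt_of_le hp.1 with rfl | hp₀
  · simpa [eval_zero_bernsteinForm] using hω
  rcases eq_or_lt_of_le hp.2 with rfl | hp₁
  · simpa [eval_one_bernsteinForm, hn] using hω
  have hlower := sub_two_mul_dtMod_le_eval_bernsteinForm hf hn ⟨hp₀, hp₁⟩
  have hupper := sub_two_mul_dtMod_le_eval_bernsteinForm hf.neg hn ⟨hp₀, hp₁⟩
  have e : (fun k : ℕ => (-f) (k / n : ℝ)) = -fun k : ℕ => f (k / n) := rfl
  rw [dtMod_neg, e, map_neg, eval_neg, Pi.neg_apply] at hupper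
  exact abs_le.2 ⟨by linarith, by linarith⟩

end

end DirectEstimate

section PeanoKernel

variable {R : Type*} [CommRing R]

/-- The hinge sequence `k ↦ (k - (i + 1))₊`, written with truncated subtraction; its second
difference is the indicator of `i`. -/
def hinge (i k : ℕ) : R := ((k - (i + 1) : ℕ) : R)

theorem secondDiff_hinge (i k : ℕ) : secondDiff (hinge i : ℕ → R) k = if i = k then 1 else 0 := by
  rw [secondDiff_apply, hinge, hinge, hinge]
  rcases lt_trichotomy i k with h | rfl | h
  · obtain ⟨d, rfl⟩ := Nat.exists_eq_add_of_lt h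
    rw [if_neg h.ne, show i + d + 1 + 2 - (i + 1) = d + 2 by lia,
      show i + d + 1 + 1 - (i + 1) = d + 1 by lia, show i + d + 1 - (i + 1) = d by lia]
    push_cast
    ring
  · simp
  · rw [if_neg h.ne', Nat.sub_eq_zero_of_le (by lia), Nat.sub_eq_zero_of_le (by lia),
      Nat.sub_eq_zero_of_le (by lia)]
    simp

theorem eq_zero_of_secondDiff_eq_zero {a : ℕ → R} {m : ℕ} (h₀ : a 0 = 0) (h₁ : a 1 = 0)
    (h : ∀ i ≤ m, secondDiff a i = 0) : ∀ k ≤ m + 2, a k = 0 := by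
  intro k
  induction k using Nat.twoStepInduction with
  | zero => exact fun _ => h₀
  | one => exact fun _ => h₁
  | more k ih₀ ih₁ =>
    intro hk
    have := h k (by lia)
    rwa [secondDiff_apply, ih₀ (by lia), ih₁ (by lia), mul_zero, sub_zero, add_zero] at this

theorem eq_add_sum_secondDiff_mul_hinge (a : ℕ → R) {m k : ℕ} (hk : k ≤ m + 2) :
    a k = a 0 + k * (a 1 - a 0) + ∑ i ∈ Finset.range (m + 1), secondDiff a i * hinge i k := by
  set r : ℕ → R := a - (fun _ => a 0) - (a 1 - a 0) • (fun k : ℕ => (k : R)) -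
    ∑ i ∈ Finset.range (m + 1), secondDiff a i • hinge i with hr
  have hr_apply : ∀ k, r k = a k - a 0 - (a 1 - a 0) * k -
      ∑ i ∈ Finset.range (m + 1), secondDiff a i * hinge i k := fun k => by simp [hr]
  have hr₂ : ∀ i ≤ m, secondDiff r i = 0 := fun i hi => by
    have hsum : ∑ j ∈ Finset.range (m + 1), secondDiff a j * (if j = i then 1 else 0) =
        secondDiff a i := by
      simp [Nat.lt_succ_iff.2 hi]
    rw [hr, map_sub, map_sum]
    simp only [map_smul, Pi.sub_apply, Finset.sum_apply, Pi.smul_apply, secondDiff_hinge,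
      smul_eq_mul, hsum]
    simp only [secondDiff_apply, Pi.sub_apply, Pi.smul_apply, smul_eq_mul]
    push_cast
    ring
  have := eq_zero_of_secondDiff_eq_zero (by rw [hr_apply]; simp [hinge])
    (by rw [hr_apply]; simp [hinge]) hr₂ k hk
  rw [hr_apply] at this
  linear_combination this

theorem map_eq_sum_secondDiff_mul_map_hinge {L : (ℕ → R) →ₗ[R] R} {m : ℕ}
    (hL : ∀ a b, (∀ k ≤ m + 2, a k = b k) → L a = L b) (h_const : L (fun _ => 1) = 0)
    (h_id : L (fun k => (k : R)) = 0) (a : ℕ → R) :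
    L a = ∑ i ∈ Finset.range (m + 1), secondDiff a i * L (hinge i) := by
  rw [hL a (a 0 • (fun _ => 1) + (a 1 - a 0) • (fun k : ℕ => (k : R)) +
    ∑ i ∈ Finset.range (m + 1), secondDiff a i • hinge i) fun k hk => ?_]
  · simp [h_const, h_id]
  · simp only [Pi.add_apply, Pi.smul_apply, Finset.sum_apply, smul_eq_mul]
    linear_combination eq_add_sum_secondDiff_mul_hinge a hk

theorem map_nonneg_of_secondDiff_nonneg [PartialOrder R] [IsOrderedRing R]
    {L : (ℕ → R) →ₗ[R] R} {m : ℕ}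
    (hL : ∀ a b, (∀ k ≤ m + 2, a k = b k) → L a = L b) (h_const : L (fun _ => 1) = 0)
    (h_id : L (fun k => (k : R)) = 0) (h_hinge : ∀ i ≤ m, 0 ≤ L (hinge i)) {a : ℕ → R}
    (ha : ∀ i ≤ m, 0 ≤ secondDiff a i) : 0 ≤ L a := by
  rw [map_eq_sum_secondDiff_mul_map_hinge hL h_const h_id]
  exact Finset.sum_nonneg fun i hi =>
    have hi' := Finset.mem_range_succ_iff.1 hi
    mul_nonneg (ha i hi') (h_hinge i hi')

end PeanoKernel

section HingeBounds

theorem sum_range_mul_eval_bernsteinPolynomial {R : Type*} [CommRing R] (n K : ℕ) (x : R) :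
    ∑ k ∈ Finset.range K, (n * x - k) * (bernsteinPolynomial R n k).eval x =
      (1 - x) * (K * (bernsteinPolynomial R n K).eval x) := by
  induction K with
  | zero => simp
  | succ K ih =>
    have h := congrArg (eval x) (one_sub_X_mul_bernsteinPolynomial_succ (R := R) n K)
    simp only [eval_mul, eval_sub, eval_add, eval_one, eval_X, eval_natCast] at h
    rw [Finset.sum_range_succ, ih]
    push_cast
    linear_combination -h

theorem eval_bernsteinForm_ite_lt {R : Type*} [CommRing R] {n K : ℕ} (hK : K ≤ n + 1) (x : R) :
    (bernsteinForm n fun k => if k < K then n * x - k else 0).eval x =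
      (1 - x) * (K * (bernsteinPolynomial R n K).eval x) := by
  have hfilter : {k ∈ Finset.range (n + 1) | k < K} = Finset.range K := by
    ext k; simp only [Finset.mem_filter, Finset.mem_range]; lia
  simp only [eval_bernsteinForm, ite_mul, zero_mul]
  rw [← Finset.sum_filter, hfilter, sum_range_mul_eval_bernsteinPolynomial]

theorem hinge_eq_zero {R : Type*} [CommRing R] {i k : ℕ} (h : k ≤ i + 1) :
    (hinge i k : R) = 0 := by
  rw [hinge, Nat.sub_eq_zero_of_le h, Nat.cast_zero]

theorem hinge_eq_sub {R : Type*} [CommRing R] {i k : ℕ} (h : i + 1 ≤ k) :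
    (hinge i k : R) = k - (i + 1) := by
  rw [hinge, Nat.cast_sub h, Nat.cast_add_one]

variable {R : Type*} [CommRing R] [LinearOrder R] [IsStrictOrderedRing R] {x : R}

theorem hinge_eq_max (i k : ℕ) : hinge i k = max ((k : R) - (i + 1)) 0 := by
  rcases le_total (i + 1) k with h | h
  · have : (i : R) + 1 ≤ k := mod_cast h
    rw [hinge_eq_sub h, max_eq_left (by linarith)]
  · have : (k : R) ≤ i + 1 := mod_cast h
    rw [hinge_eq_zero h, max_eq_right (by linarith)]

theorem max_le_eval_bernsteinForm_hinge (n i : ℕ) (hx : x ∈ Set.Icc 0 1) :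
    max (n * x - (i + 1)) 0 ≤ (bernsteinForm n (hinge i)).eval x := by
  refine max_le ?_ (eval_bernsteinForm_nonneg (fun k _ => ?_) hx)
  · have h := eval_bernsteinForm_mono (n := n) (a := (fun k : ℕ => (k : R)) - fun _ => (i : R) + 1)
      (b := hinge i) (fun k _ => (le_max_left _ _).trans_eq (hinge_eq_max i k).symm) hx
    rw [map_sub, bernsteinForm_natCast, bernsteinForm_const] at h
    simpa only [eval_sub, eval_mul, eval_natCast, eval_X, eval_C] using h
  · rw [hinge_eq_max]
    exact le_max_right _ _

/-- De Moivre's formula for the mean absolute deviation, applied after replacing the hinge at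
`i + 1` by one at `n x`. -/
theorem eval_bernsteinForm_hinge_sub_le_of_le {n i : ℕ} (hi : i < n) (hx : x ∈ Set.Icc 0 1)
    (hix : (i : R) + 1 ≤ n * x) :
    (bernsteinForm n (hinge i)).eval x - (n * x - (i + 1)) ≤
      (1 - x) * ((i + 1) * (bernsteinPolynomial R n (i + 1)).eval x) := by
  have h := eval_bernsteinForm_mono (n := n) (a := hinge i)
    (b := (fun k : ℕ => (k : R)) - (fun _ => (i : R) + 1) +
      fun k : ℕ => if k < i + 1 then n * x - k else 0) (fun k _ => ?_) hx
  · rw [map_add, map_sub, bernsteinForm_natCast, bernsteinForm_const, eval_add,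
      eval_bernsteinForm_ite_lt (by lia)] at h
    simp only [eval_sub, eval_mul, eval_natCast, eval_X, eval_C, Nat.cast_add_one] at h
    linarith
  · simp only [Pi.add_apply, Pi.sub_apply]
    split_ifs with hk
    · rw [hinge_eq_zero hk.le]
      linarith
    · rw [hinge_eq_sub (not_lt.1 hk), add_zero]

theorem eval_bernsteinForm_hinge_le_of_le {n i : ℕ} (hi : i < n) (hx : x ∈ Set.Icc 0 1)
    (hix : n * x ≤ (i : R) + 1) :
    (bernsteinForm n (hinge i)).eval x ≤
      (1 - x) * ((i + 2) * (bernsteinPolynomial R n (i + 2)).eval x) := by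
  have h := eval_bernsteinForm_mono (n := n) (a := hinge i)
    (b := (fun k : ℕ => (k : R)) - (fun _ => n * x) +
      fun k : ℕ => if k < i + 2 then n * x - k else 0) (fun k _ => ?_) hx
  · rw [map_add, map_sub, bernsteinForm_natCast, bernsteinForm_const, eval_add,
      eval_bernsteinForm_ite_lt (by lia)] at h
    simpa only [eval_sub, eval_mul, eval_natCast, eval_X, eval_C, sub_self, zero_add,
      Nat.cast_add, Nat.cast_ofNat] using h
  · simp only [Pi.add_apply, Pi.sub_apply]
    split_ifs with hk
    · rw [hinge_eq_zero (by lia)]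
      linarith
    · rw [hinge_eq_sub (by lia), add_zero]
      linarith

theorem eval_bernsteinForm_hinge_sub_max_le {m i : ℕ} (hi : i ≤ m) (hx : x ∈ Set.Icc 0 1) :
    (bernsteinForm (m + 2) (hinge i)).eval x - max ((m + 2) * x - (i + 1)) 0 ≤
      x * (1 - x) * ((m + 1) * (bernsteinPolynomial R m i).eval x) := by
  have hw := eval_bernsteinPolynomial_nonneg (R := R) (m + 1) i hx
  have h₁ := congrArg (eval x) (succ_mul_X_mul_bernsteinPolynomial (R := R) (m + 1) i)
  have h₂ := congrArg (eval x) (succ_mul_one_sub_X_mul_bernsteinPolynomial (R := R) m i)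
  have h₃ := congrArg (eval x) (one_sub_X_mul_bernsteinPolynomial_succ (R := R) (m + 2) (i + 1))
  simp only [eval_mul, eval_sub, eval_add, eval_one, eval_X, eval_natCast, eval_ofNat,
    Nat.cast_add, Nat.cast_one, Nat.cast_ofNat] at h₁ h₂ h₃
  have hin : i < m + 2 := by lia
  have him : (i : R) ≤ m := mod_cast hi
  rcases le_total ((i : R) + 1) ((m + 2) * x) with hix | hix
  · rw [max_eq_left (by linarith)]
    have h := eval_bernsteinForm_hinge_sub_le_of_le hin hx (by push_cast; exact hix)
    push_cast at h
    calc (bernsteinForm (m + 2) (hinge i)).eval x - ((m + 2) * x - (i + 1))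
        ≤ (1 - x) * ((i + 1) * (bernsteinPolynomial R (m + 2) (i + 1)).eval x) := h
      _ = (m + 2) * (1 - x) * (x * (bernsteinPolynomial R (m + 1) i).eval x) := by
        linear_combination -(1 - x) * h₁
      _ ≤ (m + 1 - i) * (x * (bernsteinPolynomial R (m + 1) i).eval x) :=
        mul_le_mul_of_nonneg_right (by linarith) (mul_nonneg hx.1 hw)
      _ = _ := by linear_combination -x * h₂
  · rw [max_eq_right (by linarith), sub_zero]
    have hle : (bernsteinPolynomial R (m + 2) (i + 1)).eval x ≤
        (bernsteinPolynomial R (m + 1) i).eval x := by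
      refine le_of_mul_le_mul_left ?_ (by positivity : (0 : R) < i + 1)
      rw [← h₁]
      exact mul_le_mul_of_nonneg_right (by linarith) hw
    calc (bernsteinForm (m + 2) (hinge i)).eval x
        ≤ (1 - x) * ((i + 2) * (bernsteinPolynomial R (m + 2) (i + 2)).eval x) :=
        eval_bernsteinForm_hinge_le_of_le hin hx (by push_cast; exact hix)
      _ = x * ((m + 1 - i) * (bernsteinPolynomial R (m + 2) (i + 1)).eval x) := by
        linear_combination h₃
      _ ≤ x * ((m + 1 - i) * (bernsteinPolynomial R (m + 1) i).eval x) :=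
        mul_le_mul_of_nonneg_left (mul_le_mul_of_nonneg_left hle (by linarith)) hx.1
      _ = _ := by linear_combination -x * h₂

end HingeBounds

section HingeCurvature

theorem one_sub_mul_mul_pow_le_sub_pow {R : Type*} [Field R] [LinearOrder R]
    [IsStrictOrderedRing R] {y s : R} {m r : ℕ} (hs : 0 ≤ s) (hsy : s ≤ y) (hr : (r : R) ≤ m * y) :
    (1 - m * s) * y ^ r ≤ (y - s) ^ r := by
  rcases (hs.trans hsy).eq_or_lt with rfl | hy
  · simp [le_antisymm hsy hs]
  have hle : s / y ≤ 1 := (div_le_one hy).2 hsy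
  have hrs : (r : R) * (s / y) ≤ m * s := by
    rw [← mul_div_assoc, div_le_iff₀ hy]
    linarith [mul_le_mul_of_nonneg_right hr hs]
  calc (1 - m * s) * y ^ r ≤ (1 + -(s / y)) ^ r * y ^ r := by
        refine mul_le_mul_of_nonneg_right ?_ (by positivity)
        linarith [one_add_mul_le_pow (a := -(s / y)) (by linarith) r]
    _ = (y - s) ^ r := by rw [← mul_pow]; congr 1; field_simp; ring

section

variable {R : Type*} [Field R] [LinearOrder R] [IsStrictOrderedRing R] {x s : R} {m i : ℕ}

theorem one_sub_mul_mul_eval_bernsteinPolynomial_le_sub (hx : x ∈ Set.Icc 0 1) (hs : 0 ≤ s)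
    (hsx : s ≤ x) (hi : (i : R) ≤ m * x) :
    (1 - m * s) * (bernsteinPolynomial R m i).eval x ≤
      (bernsteinPolynomial R m i).eval (x - s) := by
  have hx₁ : 0 ≤ 1 - x := sub_nonneg.2 hx.2
  have hpow := one_sub_mul_mul_pow_le_sub_pow hs hsx hi
  have hmono : (1 - x) ^ (m - i) ≤ (1 - (x - s)) ^ (m - i) :=
    pow_le_pow_left₀ hx₁ (by linarith) _
  simp only [bernsteinPolynomial, eval_mul, eval_pow, eval_natCast, eval_X, eval_sub, eval_one]
  calc (1 - m * s) * (m.choose i * x ^ i * (1 - x) ^ (m - i))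
      = m.choose i * ((1 - m * s) * x ^ i) * (1 - x) ^ (m - i) := by ring
    _ ≤ m.choose i * (x - s) ^ i * (1 - (x - s)) ^ (m - i) := by
        have := sub_nonneg.2 hsx
        gcongr

theorem one_sub_mul_mul_eval_bernsteinPolynomial_le_add_sub (hi : i ≤ m) (hs : 0 ≤ s)
    (h₀ : s ≤ x) (h₁ : s ≤ 1 - x) :
    (1 - m * s) * (bernsteinPolynomial R m i).eval x ≤
      (bernsteinPolynomial R m i).eval (x + s) + (bernsteinPolynomial R m i).eval (x - s) := by
  have hadd := eval_bernsteinPolynomial_nonneg (R := R) m i (x := x + s)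
    ⟨by linarith, by linarith⟩
  have hsub := eval_bernsteinPolynomial_nonneg (R := R) m i (x := x - s)
    ⟨by linarith, by linarith⟩
  rcases le_total (i : R) (m * x) with him | him
  · have := one_sub_mul_mul_eval_bernsteinPolynomial_le_sub ⟨by linarith, by linarith⟩ hs h₀ him
    linarith
  · have h := one_sub_mul_mul_eval_bernsteinPolynomial_le_sub (m := m) (i := m - i) (x := 1 - x)
      ⟨by linarith, by linarith⟩ hs h₁ (by rw [Nat.cast_sub hi]; linarith)
    have flip : ∀ y : R, (bernsteinPolynomial R m (m - i)).eval (1 - y) =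
        (bernsteinPolynomial R m i).eval y := fun y => by
      simp [← bernsteinPolynomial.flip R m i hi, eval_comp]
    rw [flip, sub_sub, flip] at h
    linarith

end

theorem bernsteinForm_secondDiff_hinge {R : Type*} [CommRing R] {m i : ℕ} (hi : i ≤ m) :
    bernsteinForm m (secondDiff (hinge i)) = bernsteinPolynomial R m i := by
  simp [bernsteinForm_apply, secondDiff_hinge, Nat.lt_succ_iff.2 hi]

/-- Near `x` the density `bernsteinPolynomial ℝ m i` loses at most the fraction `m s` of its
value when averaged over `x ± s`. -/
theorem le_secondSymmDiff_bernsteinForm_hinge {m i : ℕ} (hi : i ≤ m) {x t : ℝ} (ht : 0 ≤ t)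
    (h₀ : t ≤ x) (h₁ : t ≤ 1 - x) :
    (m + 2) * (m + 1) * (bernsteinPolynomial ℝ m i).eval x * (t ^ 2 / 2 - m * t ^ 3 / 6) ≤
      secondSymmDiff (fun y => (bernsteinForm (m + 2) (hinge i)).eval y) x t := by
  set B : ℝ[X] := bernsteinForm (m + 2) (hinge i)
  have hB'' : ∀ y, (derivative (derivative B)).eval y =
      (m + 2) * (m + 1) * (bernsteinPolynomial ℝ m i).eval y := fun y => by
    rw [derivative_derivative_bernsteinForm, bernsteinForm_secondDiff_hinge hi]
    simp only [eval_mul, eval_add, eval_natCast, eval_ofNat, eval_one]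
  refine le_of_eq_of_le ?_ (le_secondSymmDiff (f := fun y => B.eval y)
    (c := (m + 2) * (m + 1) * (bernsteinPolynomial ℝ m i).eval x)
    (d := (m + 2) * (m + 1) * (bernsteinPolynomial ℝ m i).eval x * m) ht B.continuousOn
    (fun y _ => B.hasDerivAt y) (fun y _ => (derivative B).hasDerivAt y) fun s hs => ?_)
  · ring
  · rw [hB'', hB'']
    have h := mul_le_mul_of_nonneg_left (one_sub_mul_mul_eval_bernsteinPolynomial_le_add_sub hi
      hs.1.le (hs.2.le.trans h₀) (hs.2.le.trans h₁)) (by positivity : (0 : ℝ) ≤ (m + 2) * (m + 1))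
    linarith

end HingeCurvature

section BernsteinGrid

section

variable {R : Type*} [Field R]

/-- The restriction of the Bernstein operator to the grid `k / n`: it maps the values of a function
at the nodes to the values of its `n`-th Bernstein polynomial at the same nodes. -/
noncomputable def bernsteinGrid (n : ℕ) : (ℕ → R) →ₗ[R] (ℕ → R) :=
  LinearMap.pi fun k => leval ((k : R) / n) ∘ₗ bernsteinForm n

theorem bernsteinGrid_apply (n : ℕ) (a : ℕ → R) (k : ℕ) :
    bernsteinGrid n a k = (bernsteinForm n a).eval ((k : R) / n) := rfl

theorem bernsteinGrid_const (n : ℕ) (c : R) : bernsteinGrid n (fun _ => c) = fun _ => c := by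
  ext k; simp [bernsteinGrid_apply, bernsteinForm_const]

theorem bernsteinGrid_congr {n : ℕ} {a b : ℕ → R} (h : ∀ k ≤ n, a k = b k) :
    bernsteinGrid n a = bernsteinGrid n b := by
  ext k; rw [bernsteinGrid_apply, bernsteinGrid_apply, bernsteinForm_congr h]

theorem secondDiff_bernsteinGrid (n l : ℕ) (a : ℕ → R) :
    secondDiff (bernsteinGrid n a) l =
      secondSymmDiff (fun y => (bernsteinForm n a).eval y) ((l + 1) / n) (1 / n) := by
  simp only [secondDiff_apply, bernsteinGrid_apply, secondSymmDiff]
  push_cast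
  ring_nf

variable [CharZero R] {n : ℕ}

theorem bernsteinGrid_natCast (hn : n ≠ 0) :
    bernsteinGrid n (fun k : ℕ => (k : R)) = fun k : ℕ => (k : R) := by
  ext k
  have hn' : (n : R) ≠ 0 := Nat.cast_ne_zero.2 hn
  simp [bernsteinGrid_apply, bernsteinForm_natCast, mul_div_cancel₀, hn']

theorem bernsteinGrid_reflect (hn : n ≠ 0) (a : ℕ → R) {k : ℕ} (hk : k ≤ n) :
    bernsteinGrid n (fun j => a (n - j)) k = bernsteinGrid n a (n - k) := by
  have hn' : (n : R) ≠ 0 := Nat.cast_ne_zero.2 hn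
  rw [bernsteinGrid_apply, bernsteinGrid_apply, bernsteinForm_reflect, Nat.cast_sub hk, sub_div,
    div_self hn', eval_comp, eval_sub, eval_one, eval_X]

theorem bernsteinGrid_sq_sub_cube (hn : n ≠ 0) (α β : R) (j : ℕ) :
    bernsteinGrid n (fun k => α * (k : R) ^ 2 - β * (k : R) ^ 3) j =
      α * (j : R) ^ 2 - β * (j : R) ^ 3 +
        j * (1 - (j : R) / n) * (α - β * (3 * j + 1 - 2 * ((j : R) / n))) := by
  have e : (fun k : ℕ => α * (k : R) ^ 2 - β * (k : R) ^ 3) =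
      α • (fun k : ℕ => (k : R) ^ 2) - β • fun k : ℕ => (k : R) ^ 3 := rfl
  have hnode : (n : R) * ((j : R) / n) = j := mul_div_cancel₀ _ (Nat.cast_ne_zero.2 hn)
  rw [bernsteinGrid_apply, e, map_sub, map_smul, map_smul, bernsteinForm_natCast_sq,
    bernsteinForm_natCast_cube]
  simp only [eval_sub, eval_smul, eval_add, eval_mul, eval_pow, eval_natCast, eval_ofNat, eval_X,
    eval_one, smul_eq_mul, hnode]
  ring

end

/-- The variance of the binomial distribution with parameters `m + 2` and `(l + 1) / (m + 2)`. -/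
noncomputable def gridVariance (m l : ℕ) : ℝ := (l + 1) * (m + 1 - l) / (m + 2)

variable {m l : ℕ}

theorem gridVariance_eq (m l : ℕ) : gridVariance m l =
    (m + 2) * ((l + 1) / (m + 2) * (1 - (l + 1) / (m + 2))) := by
  rw [gridVariance]; field_simp; ring

theorem gridVariance_pos (hl : l ≤ m) : 0 < gridVariance m l := by
  have : (l : ℝ) ≤ m := mod_cast hl
  exact div_pos (mul_pos (by positivity) (by linarith)) (by positivity)

theorem succ_div_add_two_mem_Ioo (hl : l ≤ m) : ((l : ℝ) + 1) / (m + 2) ∈ Set.Ioo 0 1 := by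
  have : (l : ℝ) ≤ m := mod_cast hl
  exact ⟨by positivity, (div_lt_one (by positivity)).2 (by linarith)⟩

theorem one_div_le_succ_div_add_two (m l : ℕ) : (1 : ℝ) / (m + 2) ≤ (l + 1) / (m + 2) := by
  gcongr
  exact le_add_of_nonneg_left l.cast_nonneg

theorem one_div_le_one_sub_succ_div_add_two (hl : l ≤ m) :
    (1 : ℝ) / (m + 2) ≤ 1 - (l + 1) / (m + 2) := by
  have : (l : ℝ) ≤ m := mod_cast hl
  rw [one_sub_div (by positivity)]
  gcongr
  linarith

theorem div_three_le_secondDiff_bernsteinGrid_hinge {i : ℕ} (hi : i ≤ m) (hl : l ≤ m) :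
    (m + 1) / (3 * (m + 2)) * (bernsteinPolynomial ℝ m i).eval (((l : ℝ) + 1) / (m + 2)) ≤
      secondDiff (bernsteinGrid (m + 2) (hinge i)) l := by
  have hw := eval_bernsteinPolynomial_nonneg (R := ℝ) m i
    (Set.Ioo_subset_Icc_self (succ_div_add_two_mem_Ioo hl))
  rw [secondDiff_bernsteinGrid]
  push_cast
  refine le_trans ?_ (le_secondSymmDiff_bernsteinForm_hinge hi (by positivity)
    (one_div_le_succ_div_add_two m l) (one_div_le_one_sub_succ_div_add_two hl))
  have hconst : (m + 1 : ℝ) / (3 * (m + 2)) ≤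
      (m + 2) * (m + 1) * ((1 / (m + 2)) ^ 2 / 2 - m * (1 / (m + 2)) ^ 3 / 6) := by
    rw [← sub_nonneg]
    have : (m + 2) * (m + 1) * ((1 / (m + 2)) ^ 2 / 2 - m * (1 / (m + 2)) ^ 3 / 6) -
      (m + 1 : ℝ) / (3 * (m + 2)) = (m + 1) / (3 * (m + 2) ^ 2) := by field_simp; ring
    rw [this]
    positivity
  linarith [mul_le_mul_of_nonneg_right hconst hw]

theorem bernsteinGrid_hinge_sub_mem_Icc {i : ℕ} (hi : i ≤ m) (hl : l ≤ m) :
    bernsteinGrid (m + 2) (hinge i) (l + 1) - hinge i (l + 1) ∈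
      Set.Icc 0 (3 * gridVariance m l * secondDiff (bernsteinGrid (m + 2) (hinge i)) l) := by
  have hx := Set.Ioo_subset_Icc_self (succ_div_add_two_mem_Ioo hl)
  have hlower := max_le_eval_bernsteinForm_hinge (m + 2) i hx
  have hupper := eval_bernsteinForm_hinge_sub_max_le hi hx
  have hT : bernsteinGrid (m + 2) (hinge i) (l + 1) =
      (bernsteinForm (m + 2) (hinge i)).eval (((l : ℝ) + 1) / (m + 2)) := by
    rw [bernsteinGrid_apply]; push_cast; rfl
  have hnode : max ((m + 2) * (((l : ℝ) + 1) / (m + 2)) - (i + 1)) 0 = hinge i (l + 1) := by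
    rw [hinge_eq_max, mul_div_cancel₀ _ (by positivity : (m : ℝ) + 2 ≠ 0), Nat.cast_add_one]
  push_cast at hlower
  rw [hnode, ← hT] at hlower
  rw [hnode, ← hT] at hupper
  have hΔ := mul_le_mul_of_nonneg_left (div_three_le_secondDiff_bernsteinGrid_hinge hi hl)
    (mul_nonneg zero_le_three (gridVariance_pos hl).le)
  refine ⟨sub_nonneg.2 hlower, hupper.trans (hΔ.trans' (le_of_eq ?_))⟩
  rw [gridVariance_eq]
  field_simp

variable {c : ℕ → ℝ}

theorem le_bernsteinGrid_of_secondDiff_nonneg (hl : l ≤ m) (hc : ∀ i ≤ m, 0 ≤ secondDiff c i) :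
    c (l + 1) ≤ bernsteinGrid (m + 2) c (l + 1) := by
  have h := map_nonneg_of_secondDiff_nonneg (m := m)
    (L := LinearMap.proj (l + 1) ∘ₗ (bernsteinGrid (m + 2) - LinearMap.id))
    (fun a b hab => by simp [bernsteinGrid_congr hab, hab (l + 1) (by lia)])
    (by simp [bernsteinGrid_const])
    (by simp [bernsteinGrid_natCast (m + 1).succ_ne_zero])
    (fun i hi => (bernsteinGrid_hinge_sub_mem_Icc hi hl).1) hc
  exact sub_nonneg.1 h

theorem bernsteinGrid_sub_le_of_secondDiff_nonneg (hl : l ≤ m)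
    (hc : ∀ i ≤ m, 0 ≤ secondDiff c i) :
    bernsteinGrid (m + 2) c (l + 1) - c (l + 1) ≤
      3 * gridVariance m l * secondDiff (bernsteinGrid (m + 2) c) l := by
  let T : (ℕ → ℝ) →ₗ[ℝ] (ℕ → ℝ) := bernsteinGrid (m + 2)
  have h := map_nonneg_of_secondDiff_nonneg (m := m)
    (L := (3 * gridVariance m l) • (LinearMap.proj l ∘ₗ secondDiff ∘ₗ T) -
      LinearMap.proj (l + 1) ∘ₗ (T - LinearMap.id))
    (fun a b hab => by simp [T, bernsteinGrid_congr hab, hab (l + 1) (by lia)])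
    (by simp [T, bernsteinGrid_const, secondDiff_const])
    (by simp [T, bernsteinGrid_natCast (m + 1).succ_ne_zero, secondDiff_natCast])
    (fun i hi => sub_nonneg.2 (bernsteinGrid_hinge_sub_mem_Icc hi hl).2) hc
  exact sub_nonneg.1 h

end BernsteinGrid

section HarmonicEntropy

/-- A sequence with second differences `1 / (i + 2)`, a discrete substitute for `x log x`. -/
def harmonicEntropy (k : ℕ) : ℝ := (k + 1) * harmonic k

theorem secondDiff_harmonicEntropy (i : ℕ) : secondDiff harmonicEntropy i = 1 / (i + 2) := by
  rw [secondDiff_apply, harmonicEntropy, harmonicEntropy, harmonicEntropy, harmonic_succ (i + 1),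
    harmonic_succ i]
  push_cast
  field_simp
  ring

theorem bernsteinForm_ite_eq_zero {R : Type*} [CommRing R] (n : ℕ) :
    bernsteinForm n (fun k => if k = 0 then 1 else 0) = (1 - X : R[X]) ^ n := by
  simp [bernsteinForm_apply, bernsteinPolynomial]

/-- Multiplication by `X ^ 2` shifts the coefficients twice and turns `1 / (k + 2)` into the affine
sequence `k - 1`, corrected at `k = 0`. -/
theorem X_sq_mul_bernsteinForm_one_div_add_two {R : Type*} [Field R] [CharZero R] (m : ℕ) :
    X ^ 2 * (((m : R[X]) + 2) * ((m : R[X]) + 1) * bernsteinForm m (fun k => 1 / ((k : R) + 2))) =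
      ((m : R[X]) + 2) * X - 1 + (1 - X) ^ (m + 2) := by
  have e : (fun k : ℕ => (k : R) * ((k - 1) * (1 / k))) =
      (fun k : ℕ => (k : R)) - (fun _ => 1) + fun k => if k = 0 then 1 else 0 := by
    ext k
    rcases eq_or_ne k 0 with rfl | hk
    · simp
    · have : (k : R) ≠ 0 := Nat.cast_ne_zero.2 hk
      simp only [Pi.add_apply, Pi.sub_apply, if_neg hk]
      field_simp
      ring
  have h₁ := bernsteinForm_natCast_mul (R := R) (m + 1) fun k => ((k : R) - 1) * (1 / k)
  have h₂ := bernsteinForm_natCast_mul (R := R) m fun k => 1 / ((k : R) + 1)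
  have e₁ : (fun k : ℕ => (((k + 1 : ℕ) : R) - 1) * (1 / (k + 1 : ℕ))) =
      fun k : ℕ => (k : R) * (1 / ((k : R) + 1)) := by
    ext k; push_cast; ring
  have e₂ : (fun k : ℕ => 1 / (((k + 1 : ℕ) : R) + 1)) = fun k : ℕ => 1 / ((k : R) + 2) := by
    ext k; push_cast; ring
  rw [e₁, h₂, e₂, e, map_add, map_sub, bernsteinForm_natCast, bernsteinForm_const,
    bernsteinForm_ite_eq_zero] at h₁
  push_cast [map_one] at h₁
  linear_combination -h₁

theorem one_sub_pow_le_one_div {x : ℝ} (hx : x ∈ Set.Icc 0 1) (n : ℕ) :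
    (1 - x) ^ n ≤ 1 / (1 + n * x + (n * x) ^ 2 / 2) := by
  have hnx : 0 ≤ n * x := mul_nonneg n.cast_nonneg hx.1
  calc (1 - x) ^ n ≤ Real.exp (-x) ^ n :=
        pow_le_pow_left₀ (sub_nonneg.2 hx.2) (Real.one_sub_le_exp_neg x) n
    _ = 1 / Real.exp (n * x) := by rw [← Real.exp_nat_mul, mul_neg, Real.exp_neg, one_div]
    _ ≤ _ := one_div_le_one_div_of_le (by positivity) (Real.quadratic_le_exp_of_nonneg hnx)

theorem eval_derivative_derivative_bernsteinForm_harmonicEntropy_le {x : ℝ} (hx : x ∈ Set.Ioc 0 1)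
    (m : ℕ) :
    (derivative (derivative (bernsteinForm (m + 2) harmonicEntropy))).eval x ≤
      (m + 2) ^ 2 * (((m + 2) * x + 1) / (((m + 2) * x + 1) ^ 2 + 1)) := by
  have hx₀ : 0 < x := hx.1
  have h := congrArg (eval x) (X_sq_mul_bernsteinForm_one_div_add_two (R := ℝ) m)
  rw [← funext secondDiff_harmonicEntropy, ← derivative_derivative_bernsteinForm] at h
  simp only [eval_mul, eval_pow, eval_X, eval_add, eval_sub, eval_natCast, eval_ofNat,
    eval_one] at h
  have hpow := one_sub_pow_le_one_div ⟨hx.1.le, hx.2⟩ (m + 2)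
  push_cast at hpow
  refine le_of_mul_le_mul_left ?_ (pow_pos hx₀ 2)
  calc x ^ 2 * (derivative (derivative (bernsteinForm (m + 2) harmonicEntropy))).eval x
      ≤ (m + 2) * x - 1 + 1 / (1 + (m + 2) * x + ((m + 2) * x) ^ 2 / 2) := by rw [h]; linarith
    _ = _ := by field_simp; ring

theorem add_div_sq_add_one_le {u s : ℝ} (hu : 0 < u) (hs : s ^ 2 ≤ 1) :
    (u + s) / ((u + s) ^ 2 + 1) + (u - s) / ((u - s) ^ 2 + 1) ≤ 2 / u := by
  rw [div_add_div _ _ (by positivity) (by positivity), div_le_div_iff₀ (by positivity) hu]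
  nlinarith [mul_nonneg (sub_nonneg.2 hs) (sq_nonneg u), sq_nonneg s, sq_nonneg (s ^ 2)]

theorem secondDiff_bernsteinGrid_harmonicEntropy_le {m l : ℕ} (hl : l ≤ m) :
    secondDiff (bernsteinGrid (m + 2) harmonicEntropy) l ≤ 1 / (l + 2) := by
  set B : ℝ[X] := bernsteinForm (m + 2) harmonicEntropy
  have hN : (0 : ℝ) < m + 2 := by positivity
  have h := le_secondSymmDiff (f := fun y => -B.eval y) (a := ((l : ℝ) + 1) / (m + 2))
    (t := 1 / (m + 2)) (c := -((m + 2) ^ 2 * (2 / (l + 2)))) (d := 0) (by positivity)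
    B.continuousOn.neg (fun y _ => (B.hasDerivAt y).fun_neg)
    (fun y _ => ((derivative B).hasDerivAt y).fun_neg) fun s hs => ?_
  · rw [secondDiff_bernsteinGrid]
    push_cast
    have e : -((m + 2) ^ 2 * (2 / (l + 2))) * (1 / (m + 2)) ^ 2 / 2 - 0 * (1 / (m + 2)) ^ 3 / 6 =
        -(1 / ((l : ℝ) + 2)) := by field_simp; ring
    rw [e] at h
    simp only [secondSymmDiff] at h ⊢
    linarith
  · have hσ : (m + 2) * s < 1 := by
      have := (lt_div_iff₀ hN).1 hs.2
      linarith
    have hx₁ := hs.2.le.trans (one_div_le_one_sub_succ_div_add_two hl)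
    have hadd := eval_derivative_derivative_bernsteinForm_harmonicEntropy_le
      (x := ((l : ℝ) + 1) / (m + 2) + s) ⟨by have := hs.1; positivity, by linarith⟩ m
    have hsub := eval_derivative_derivative_bernsteinForm_harmonicEntropy_le
      (x := ((l : ℝ) + 1) / (m + 2) - s)
      ⟨sub_pos.2 (hs.2.trans_le (one_div_le_succ_div_add_two m l)), by linarith [hs.1]⟩ m
    have e₁ : (m + 2) * (((l : ℝ) + 1) / (m + 2) + s) + 1 = l + 2 + (m + 2) * s := by
      field_simp; ring
    have e₂ : (m + 2) * (((l : ℝ) + 1) / (m + 2) - s) + 1 = l + 2 - (m + 2) * s := by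
      field_simp; ring
    rw [e₁] at hadd
    rw [e₂] at hsub
    have hpair := mul_le_mul_of_nonneg_left (add_div_sq_add_one_le (u := (l : ℝ) + 2)
      (by positivity) (pow_le_one₀ (mul_nonneg hN.le hs.1.le) hσ.le)) (sq_nonneg ((m : ℝ) + 2))
    linarith

end HarmonicEntropy

section GridEntropy

variable {m l : ℕ}

/-- The entropy dominates, in the convex order, the cubic whose second differences are the tangent
line of `1 / t` at `c`; the choice `c = l + 7 / 3` makes the third central moment harmless. -/
theorem three_div_mul_le_bernsteinGrid_harmonicEntropy_sub (hl : l ≤ m) :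
    3 / 14 * (1 - ((l : ℝ) + 1) / (m + 2)) ≤
      bernsteinGrid (m + 2) harmonicEntropy (l + 1) - harmonicEntropy (l + 1) := by
  set c : ℝ := l + 7 / 3 with hc
  have hx := succ_div_add_two_mem_Ioo hl
  set x : ℝ := (l + 1) / (m + 2)
  have hx₁ : 0 < 1 - x := sub_pos.2 hx.2
  have hc₀ : 0 < c := by positivity
  set q : ℕ → ℝ := fun k => (1 / c - 1 / (2 * c ^ 2)) * (k : ℝ) ^ 2 - 1 / (6 * c ^ 2) * (k : ℝ) ^ 3
    with hq
  have hconvex : ∀ i ≤ m, 0 ≤ secondDiff (harmonicEntropy - q) i := fun i _ => by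
    have e : 1 / ((i : ℝ) + 2) - (2 * (1 / c - 1 / (2 * c ^ 2)) - 6 * (1 / (6 * c ^ 2)) * (i + 1)) =
        (i + 2 - c) ^ 2 / (c ^ 2 * (i + 2)) := by field_simp; ring
    rw [map_sub, Pi.sub_apply, secondDiff_harmonicEntropy, secondDiff_sq_sub_cube, e]
    positivity
  have h := le_bernsteinGrid_of_secondDiff_nonneg hl hconvex
  rw [map_sub, Pi.sub_apply, Pi.sub_apply, hq,
    bernsteinGrid_sq_sub_cube (n := m + 2) (Nat.succ_ne_zero _)] at h
  push_cast at h
  have hgap : 1 / (2 * c) ≤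
      1 / c - 1 / (2 * c ^ 2) - 1 / (6 * c ^ 2) * (3 * (l + 1) + 1 - 2 * x) := by
    have e : 1 / c - 1 / (2 * c ^ 2) - 1 / (6 * c ^ 2) * (3 * (l + 1) + 1 - 2 * x) =
        1 / (2 * c) + x / (3 * c ^ 2) := by
      rw [show (l : ℝ) = c - 7 / 3 by rw [hc]; ring]; field_simp; ring
    rw [e]
    exact le_add_of_nonneg_right (div_nonneg hx.1.le (by positivity))
  calc 3 / 14 * (1 - x) ≤ (l + 1) * (1 - x) * (1 / (2 * c)) := by
        rw [mul_one_div, le_div_iff₀ (by positivity), hc]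
        linarith [mul_nonneg (l.cast_nonneg (α := ℝ)) hx₁.le]
    _ ≤ (l + 1) * (1 - x) * _ := mul_le_mul_of_nonneg_left hgap (by positivity)
    _ ≤ _ := by
        change _ ≤ _ - (_ + (l + 1) * (1 - x) * (_ - _ * (_ - 2 * x))) at h
        linarith

/-- The symmetrisation of `harmonicEntropy` on `0, …, m + 2`: a discrete substitute for the negative
of the binary entropy. -/
def gridEntropy (m k : ℕ) : ℝ := harmonicEntropy k + harmonicEntropy (m + 2 - k)

/-- The second differences of `gridEntropy m`, comparable to `1 / gridVariance m`. -/
noncomputable def gridCurvature (m i : ℕ) : ℝ := 1 / (i + 2) + 1 / (m + 2 - i)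

theorem gridEntropy_eq_add (m : ℕ) :
    gridEntropy m = harmonicEntropy + fun k => harmonicEntropy (m + 2 - k) := rfl

theorem gridCurvature_pos (hl : l ≤ m) : 0 < gridCurvature m l := by
  have : (l : ℝ) ≤ m := mod_cast hl
  have : 0 < (m : ℝ) + 2 - l := by linarith
  rw [gridCurvature]
  positivity

theorem gridVariance_mul_gridCurvature (hl : l ≤ m) :
    gridVariance m l * gridCurvature m l =
      (l + 1) * (m + 1 - l) * (m + 4) / ((m + 2) * ((l + 2) * (m + 2 - l))) := by
  have : (l : ℝ) ≤ m := mod_cast hl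
  have : (m : ℝ) + 2 - l ≠ 0 := by linarith
  rw [gridVariance, gridCurvature]
  field_simp
  ring

theorem gridVariance_mul_gridCurvature_le_one (hl : l ≤ m) :
    gridVariance m l * gridCurvature m l ≤ 1 := by
  have hlm : (l : ℝ) ≤ m := mod_cast hl
  have : 0 < (m : ℝ) + 2 - l := by linarith
  rw [gridVariance_mul_gridCurvature hl, div_le_one (by positivity)]
  nlinarith [l.cast_nonneg (α := ℝ), mul_nonneg l.cast_nonneg (sub_nonneg.2 hlm)]

theorem one_le_two_mul_gridVariance_mul_gridCurvature (hl : l ≤ m) :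
    1 ≤ 2 * (gridVariance m l * gridCurvature m l) := by
  have hlm : (l : ℝ) ≤ m := mod_cast hl
  have : 0 < (m : ℝ) + 2 - l := by linarith
  rw [gridVariance_mul_gridCurvature hl, ← mul_div_assoc, one_le_div (by positivity)]
  nlinarith [l.cast_nonneg (α := ℝ), mul_nonneg l.cast_nonneg (sub_nonneg.2 hlm)]

theorem secondDiff_gridEntropy (hl : l ≤ m) : secondDiff (gridEntropy m) l = gridCurvature m l := by
  rw [gridEntropy_eq_add, map_add, Pi.add_apply, secondDiff_reflect _ hl,
    secondDiff_harmonicEntropy, secondDiff_harmonicEntropy, gridCurvature, Nat.cast_sub hl]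
  ring

theorem secondDiff_bernsteinGrid_reflect (hl : l ≤ m) (a : ℕ → ℝ) :
    secondDiff (bernsteinGrid (m + 2) fun k => a (m + 2 - k)) l =
      secondDiff (bernsteinGrid (m + 2) a) (m - l) := by
  rw [← secondDiff_reflect _ hl]
  simp only [secondDiff_apply]
  rw [bernsteinGrid_reflect, bernsteinGrid_reflect, bernsteinGrid_reflect] <;> lia

theorem secondDiff_bernsteinGrid_gridEntropy_le (hl : l ≤ m) :
    secondDiff (bernsteinGrid (m + 2) (gridEntropy m)) l ≤ gridCurvature m l := by
  rw [gridEntropy_eq_add, map_add, map_add, Pi.add_apply, secondDiff_bernsteinGrid_reflect hl,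
    gridCurvature]
  have h := secondDiff_bernsteinGrid_harmonicEntropy_le (Nat.sub_le m l)
  rw [Nat.cast_sub hl, sub_add_eq_add_sub] at h
  exact add_le_add (secondDiff_bernsteinGrid_harmonicEntropy_le hl) h

theorem three_div_le_bernsteinGrid_gridEntropy_sub (hl : l ≤ m) :
    3 / 14 ≤ bernsteinGrid (m + 2) (gridEntropy m) (l + 1) - gridEntropy m (l + 1) := by
  have h₁ := three_div_mul_le_bernsteinGrid_harmonicEntropy_sub hl
  have h₂ := three_div_mul_le_bernsteinGrid_harmonicEntropy_sub (Nat.sub_le m l)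
  have e : 3 / 14 * (1 - ((l : ℝ) + 1) / (m + 2)) +
      3 / 14 * (1 - (((m - l : ℕ) : ℝ) + 1) / (m + 2)) = 3 / 14 := by
    rw [Nat.cast_sub hl]; field_simp; ring
  rw [gridEntropy_eq_add, map_add, Pi.add_apply, Pi.add_apply,
    bernsteinGrid_reflect (m + 1).succ_ne_zero _ (by lia), show m + 2 - (l + 1) = m - l + 1 by lia]
  linarith

end GridEntropy

section Contraction

variable {m l : ℕ} {a : ℕ → ℝ} {M S δ : ℝ}

theorem abs_secondDiff_bernsteinGrid_le (hl : l ≤ m) (h : ∀ k ≤ m + 2, |a k| ≤ M) :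
    |secondDiff (bernsteinGrid (m + 2) a) l| ≤ 8 * M * gridCurvature m l := by
  set B : ℝ[X] := bernsteinForm (m + 2) a
  have hκ := gridVariance_pos hl
  have hM : 0 ≤ M := (abs_nonneg _).trans (h 0 (Nat.zero_le _))
  have hγ := mul_le_mul_of_nonneg_left (one_le_two_mul_gridVariance_mul_gridCurvature hl)
    (by positivity : 0 ≤ 4 * M)
  have hΔ := abs_secondSymmDiff_le B.continuousOn (fun y _ => B.hasDerivAt y)
    (fun y _ => (derivative B).hasDerivAt y)
    (fun y hy => abs_mul_eval_derivative_derivative_bernsteinForm_le h hy)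
    (succ_div_add_two_mem_Ioo hl) (by positivity) (one_div_le_succ_div_add_two m l)
    (one_div_le_one_sub_succ_div_add_two hl)
  rw [secondDiff_bernsteinGrid]
  push_cast at hΔ ⊢
  calc _ ≤ _ := hΔ
    _ = 4 * M / gridVariance m l := by rw [gridVariance_eq]; field_simp; ring
    _ ≤ 8 * M * gridCurvature m l := by rw [div_le_iff₀ hκ]; linarith

/-- Convexity of `S • gridEntropy m + a` bounds its Bernstein gap, to which the entropy contributes
at least `3 / 14 * S`: this is where the contraction factor `13 / 14` comes from. -/
theorem neg_secondDiff_bernsteinGrid_le (hl : l ≤ m) (hS : 0 ≤ S) (hδ : 0 ≤ δ)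
    (hγ : ∀ i ≤ m, -(S * gridCurvature m i) ≤ secondDiff a i)
    (h : -δ ≤ bernsteinGrid (m + 2) a (l + 1) - a (l + 1)) :
    -secondDiff (bernsteinGrid (m + 2) a) l ≤
      (13 / 14 * S + 2 / 3 * δ) * gridCurvature m l := by
  have hκ := gridVariance_pos hl
  have hconvex : ∀ i ≤ m, 0 ≤ secondDiff (S • gridEntropy m + a) i := fun i hi => by
    rw [map_add, map_smul, Pi.add_apply, Pi.smul_apply, secondDiff_gridEntropy hi, smul_eq_mul]
    linarith [hγ i hi]
  have hbound := bernsteinGrid_sub_le_of_secondDiff_nonneg hl hconvex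
  simp only [map_add, map_smul, Pi.add_apply, Pi.smul_apply, smul_eq_mul] at hbound
  have hgap := mul_le_mul_of_nonneg_left (three_div_le_bernsteinGrid_gridEntropy_sub hl) hS
  have hE := mul_le_mul_of_nonneg_left (secondDiff_bernsteinGrid_gridEntropy_le hl)
    (mul_nonneg hκ.le hS)
  have hone := mul_le_mul_of_nonneg_left (gridVariance_mul_gridCurvature_le_one hl) hS
  have htwo := mul_le_mul_of_nonneg_left (one_le_two_mul_gridVariance_mul_gridCurvature hl) hδ
  refine le_of_mul_le_mul_left ?_ hκ
  linarith

theorem abs_secondDiff_bernsteinGrid_le_of_abs_secondDiff_le (hl : l ≤ m)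
    (hγ : ∀ i ≤ m, |secondDiff a i| ≤ S * gridCurvature m i)
    (h : |bernsteinGrid (m + 2) a (l + 1) - a (l + 1)| ≤ δ) :
    |secondDiff (bernsteinGrid (m + 2) a) l| ≤
      (13 / 14 * S + 2 / 3 * δ) * gridCurvature m l := by
  have hδ : 0 ≤ δ := (abs_nonneg _).trans h
  have hS : 0 ≤ S := nonneg_of_mul_nonneg_left ((abs_nonneg _).trans (hγ l hl))
    (gridCurvature_pos hl)
  have hupper := neg_secondDiff_bernsteinGrid_le (a := -a) hl hS hδ
    (fun i hi => by rw [map_neg]; exact neg_le_neg (abs_le.1 (hγ i hi)).2)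
    (by rw [map_neg, Pi.neg_apply, Pi.neg_apply]; linarith [(abs_le.1 h).2])
  have hlower := neg_secondDiff_bernsteinGrid_le hl hS hδ (fun i hi => (abs_le.1 (hγ i hi)).1)
    (abs_le.1 h).1
  rw [map_neg, map_neg, Pi.neg_apply, neg_neg] at hupper
  exact abs_le.2 ⟨by linarith, hupper⟩

theorem exists_abs_secondDiff_eq_mul_gridCurvature (m : ℕ) (b : ℕ → ℝ) :
    ∃ S, (∃ l ≤ m, |secondDiff b l| = S * gridCurvature m l) ∧
      ∀ i ≤ m, |secondDiff b i| ≤ S * gridCurvature m i := by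
  obtain ⟨l, hl, hmax⟩ := Finset.exists_max_image (Finset.range (m + 1))
    (fun i => |secondDiff b i| / gridCurvature m i) ⟨0, Finset.mem_range.2 m.succ_pos⟩
  have hl' := Finset.mem_range_succ_iff.1 hl
  refine ⟨_, ⟨l, hl', (div_mul_cancel₀ _ (gridCurvature_pos hl').ne').symm⟩, fun i hi => ?_⟩
  exact (div_le_iff₀ (gridCurvature_pos hi)).1 (hmax i (Finset.mem_range_succ_iff.2 hi))

/-- If `S` is the norm of `secondDiff b` weighted by `gridCurvature m` and `T` is the discrete
Bernstein operator, then `secondDiff (T b)` has norm at most `13 / 14 * S + 2 / 3 * δ` and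
`secondDiff (b - T b)` at most `8 * δ`; the contraction lets `S` be absorbed. -/
theorem abs_secondDiff_bernsteinGrid_le_of_abs_sub_le (hl : l ≤ m)
    (h : ∀ k ≤ m + 2, |bernsteinGrid (m + 2) a k - a k| ≤ δ) :
    |secondDiff (bernsteinGrid (m + 2) a) l| ≤ 122 * δ * gridCurvature m l := by
  set b := bernsteinGrid (m + 2) a
  obtain ⟨S, ⟨j, hj, hSj⟩, hS⟩ := exists_abs_secondDiff_eq_mul_gridCurvature m b
  have hδ : 0 ≤ δ := (abs_nonneg _).trans (h 0 (Nat.zero_le _))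
  have hb : |bernsteinGrid (m + 2) b (j + 1) - b (j + 1)| ≤ δ := by
    rw [← Pi.sub_apply, ← map_sub, bernsteinGrid_apply]
    refine abs_eval_bernsteinForm_le_const h ?_
    push_cast
    exact Set.Ioo_subset_Icc_self (succ_div_add_two_mem_Ioo hj)
  have hTb := abs_secondDiff_bernsteinGrid_le_of_abs_secondDiff_le hj hS hb
  have hdiff := abs_secondDiff_bernsteinGrid_le (a := b - a) hj h
  rw [map_sub, map_sub, Pi.sub_apply] at hdiff
  have hSδ : S ≤ 122 * δ := by
    have : S * gridCurvature m j ≤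
        (13 / 14 * S + 2 / 3 * δ) * gridCurvature m j + 8 * δ * gridCurvature m j := by
      rw [← hSj]
      linarith [abs_sub_abs_le_abs_sub (secondDiff b j) (secondDiff (bernsteinGrid (m + 2) b) j),
        abs_sub_comm (secondDiff b j) (secondDiff (bernsteinGrid (m + 2) b) j)]
    rw [← add_mul] at this
    linarith [le_of_mul_le_mul_right this (gridCurvature_pos hj)]
  exact (hS l hl).trans (mul_le_mul_of_nonneg_right hSδ (gridCurvature_pos hl).le)

end Contraction

section InverseEstimate

theorem mul_eval_derivative_derivative_bernsteinForm {R : Type*} [CommRing R] (m : ℕ) (b : ℕ → R)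
    (x : R) :
    x * (1 - x) * (derivative (derivative (bernsteinForm (m + 2) b))).eval x =
      ∑ k ∈ Finset.range (m + 1), secondDiff b k *
        ((k + 1) * (m + 1 - k) * (bernsteinPolynomial R (m + 2) (k + 1)).eval x) := by
  rw [derivative_derivative_bernsteinForm, bernsteinForm_apply]
  simp only [eval_mul, eval_add, eval_natCast, eval_ofNat, eval_one, eval_finsetSum, eval_smul,
    smul_eq_mul, Finset.mul_sum]
  refine Finset.sum_congr rfl fun k _ => ?_
  have h := congrArg (eval x) (X_mul_one_sub_X_mul_bernsteinPolynomial (R := R) m k)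
  simp only [eval_mul, eval_sub, eval_add, eval_X, eval_one, eval_natCast, eval_ofNat] at h
  linear_combination secondDiff b k * h

theorem sum_range_eval_bernsteinPolynomial_succ_le_one {R : Type*} [CommRing R] [LinearOrder R]
    [IsStrictOrderedRing R] {x : R} (n : ℕ) (hx : x ∈ Set.Icc 0 1) :
    ∑ k ∈ Finset.range n, (bernsteinPolynomial R n (k + 1)).eval x ≤ 1 := by
  have h := congrArg (eval x) (bernsteinPolynomial.sum R n)
  rw [Finset.sum_range_succ', eval_add, eval_finsetSum, eval_one] at h
  rw [← h]
  exact le_add_of_nonneg_right (eval_bernsteinPolynomial_nonneg n 0 hx)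

theorem abs_mul_eval_derivative_derivative_bernsteinForm_le_of_abs_secondDiff_le {m : ℕ}
    {b : ℕ → ℝ} {S x : ℝ} (hb : ∀ i ≤ m, |secondDiff b i| ≤ S * gridCurvature m i)
    (hx : x ∈ Set.Icc 0 1) :
    |x * (1 - x) * (derivative (derivative (bernsteinForm (m + 2) b))).eval x| ≤ (m + 2) * S := by
  have hS : 0 ≤ S := nonneg_of_mul_nonneg_left ((abs_nonneg _).trans (hb 0 m.zero_le))
    (gridCurvature_pos m.zero_le)
  have hterm : ∀ k ≤ m, |secondDiff b k * ((k + 1) * (m + 1 - k) *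
      (bernsteinPolynomial ℝ (m + 2) (k + 1)).eval x)| ≤
        (m + 2) * S * (bernsteinPolynomial ℝ (m + 2) (k + 1)).eval x := fun k hk => by
    have hw := eval_bernsteinPolynomial_nonneg (R := ℝ) (m + 2) (k + 1) hx
    have hκ : ((k : ℝ) + 1) * (m + 1 - k) = (m + 2) * gridVariance m k := by
      rw [gridVariance]; field_simp
    have hweight := mul_nonneg (mul_nonneg (by positivity : (0 : ℝ) ≤ m + 2)
      (gridVariance_pos hk).le) hw
    rw [hκ, abs_mul, abs_of_nonneg hweight]
    calc _ ≤ S * gridCurvature m k * ((m + 2) * gridVariance m k * _) :=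
          mul_le_mul_of_nonneg_right (hb k hk) hweight
      _ = (m + 2) * S * (bernsteinPolynomial ℝ (m + 2) (k + 1)).eval x *
            (gridVariance m k * gridCurvature m k) := by ring
      _ ≤ _ := mul_le_of_le_one_right (by positivity) (gridVariance_mul_gridCurvature_le_one hk)
  have hsum := (Finset.sum_le_sum_of_subset_of_nonneg
    (Finset.range_subset_range.2 (m + 1).le_succ) fun k _ _ =>
      eval_bernsteinPolynomial_nonneg (R := ℝ) (m + 2) (k + 1) hx).trans
        (sum_range_eval_bernsteinPolynomial_succ_le_one (m + 2) hx)
  rw [mul_eval_derivative_derivative_bernsteinForm]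
  calc _ ≤ ∑ k ∈ Finset.range (m + 1), (m + 2) * S *
          (bernsteinPolynomial ℝ (m + 2) (k + 1)).eval x :=
        (Finset.abs_sum_le_sum_abs _ _).trans
          (Finset.sum_le_sum fun k hk => hterm k (Finset.mem_range_succ_iff.1 hk))
    _ ≤ (m + 2) * S := by
        rw [← Finset.mul_sum]
        exact mul_le_of_le_one_right (by positivity) hsum

variable {δ : ℝ}

theorem abs_mul_eval_derivative_derivative_bernsteinForm_bernsteinGrid_le {n : ℕ} {a : ℕ → ℝ}
    (h : ∀ k ≤ n, |bernsteinGrid n a k - a k| ≤ δ) {x : ℝ} (hx : x ∈ Set.Icc 0 1) :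
    |x * (1 - x) * (derivative (derivative (bernsteinForm n (bernsteinGrid n a)))).eval x| ≤
      122 * n * δ := by
  have hδ : 0 ≤ δ := (abs_nonneg _).trans (h 0 n.zero_le)
  match n, h with
  | 0, _ => simp [bernsteinForm_apply, bernsteinPolynomial]
  | 1, _ =>
    rw [derivative_bernsteinForm_succ, bernsteinForm_apply]
    simp [bernsteinPolynomial, hδ]
  | m + 2, h =>
    refine (abs_mul_eval_derivative_derivative_bernsteinForm_le_of_abs_secondDiff_le
      (fun i hi => abs_secondDiff_bernsteinGrid_le_of_abs_sub_le hi h) hx).trans_eq ?_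
    push_cast
    ring

theorem dtMod_two_le_of_abs_eval_bernsteinForm_sub_le {f : ℝ → ℝ} {n : ℕ} (hn : n ≠ 0)
    (h : ∀ p ∈ Set.Icc 0 1, |(bernsteinForm n fun k => f (k / n)).eval p - f p| ≤ δ) :
    dtMod 2 f (1 / √n) ≤ 252 * δ := by
  set a : ℕ → ℝ := fun k => f (k / n)
  set g : ℝ[X] := bernsteinForm n (bernsteinGrid n a)
  have hn₀ : (0 : ℝ) < n := by positivity
  have hδ : 0 ≤ δ := (abs_nonneg _).trans (h 0 (Set.left_mem_Icc.2 zero_le_one))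
  have hgrid : ∀ k ≤ n, |bernsteinGrid n a k - a k| ≤ δ := fun k hk =>
    h (k / n) ⟨by positivity, div_le_one_of_le₀ (Nat.cast_le.2 hk) hn₀.le⟩
  have hclose : ∀ p ∈ Set.Icc 0 1, |f p - g.eval p| ≤ 2 * δ := fun p hp => by
    have hT := abs_eval_bernsteinForm_le_const (a := bernsteinGrid n a - a) hgrid hp
    rw [map_sub, eval_sub] at hT
    rw [abs_sub_comm, two_mul]
    exact (abs_sub_le _ _ _).trans (add_le_add hT (h p hp))
  refine dtMod_two_le (by positivity) fun x hx u hu h₀ h₁ hut => ?_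
  have hφ : 0 < x * (1 - x) := mul_pos hx.1 (sub_pos.2 hx.2)
  have hu_sq : n * (u ^ 2 / (x * (1 - x))) ≤ 1 := by
    have := pow_le_pow_left₀ hu.le hut 2
    rw [mul_pow, div_pow, Real.sq_sqrt hφ.le, Real.sq_sqrt hn₀.le] at this
    rw [← mul_div_assoc, div_le_one hφ]
    calc n * u ^ 2 ≤ n * (1 ^ 2 / n * (x * (1 - x))) := mul_le_mul_of_nonneg_left this hn₀.le
      _ = x * (1 - x) := by field_simp
  have hg := abs_secondSymmDiff_le g.continuousOn (fun y _ => g.hasDerivAt y)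
    (fun y _ => (derivative g).hasDerivAt y)
    (fun y hy => abs_mul_eval_derivative_derivative_bernsteinForm_bernsteinGrid_le hgrid
      (Set.Ioo_subset_Icc_self hy)) hx hu.le h₀ h₁
  have hfg := abs_secondSymmDiff_le_four_mul hu.le h₀ h₁ hclose
  have e : secondSymmDiff f x u = secondSymmDiff (fun y => f y - g.eval y) x u +
      secondSymmDiff (fun y => g.eval y) x u := by simp only [secondSymmDiff]; ring
  rw [e]
  refine (abs_add_le _ _).trans ?_
  linarith [mul_le_mul_of_nonneg_left hu_sq (by positivity : 0 ≤ 244 * δ)]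

theorem bernstein'_eq_eval_bernsteinForm (n : ℕ) (f : ℝ → ℝ) (p : ℝ) :
    bernstein' n f p = (bernsteinForm n fun k => f (k / n)).eval p := by
  rw [bernstein', eval_bernsteinForm]
  refine Finset.sum_congr rfl fun k _ => ?_
  simp only [bernsteinPolynomial, eval_mul, eval_pow, eval_natCast, eval_X, eval_sub, eval_one]
  ring

theorem abs_bernstein'_sub_le_sSup {f : ℝ → ℝ} (hf : ContinuousOn f (Set.Icc 0 1)) (n : ℕ) {p : ℝ}
    (hp : p ∈ Set.Icc 0 1) :
    |bernstein' n f p - f p| ≤ sSup ((fun p => |bernstein' n f p - f p|) '' Set.Icc 0 1) := by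
  refine le_csSup (isCompact_Icc.bddAbove_image ?_) (Set.mem_image_of_mem _ hp)
  simp only [bernstein'_eq_eval_bernsteinForm]
  exact ((bernsteinForm n _).continuousOn.sub hf).abs

end InverseEstimate

/-- universal two-sided bound for the Bernstein approximation error:
`c₁ ω_φ²(f,1/√n) ≤ ‖B_n[f] − f‖ ≤ c₂ ω_φ²(f,1/√n)` for all `f ∈ C[0,1]`, `n ≥ 1`. -/
theorem bernstein_error_equiv_dtMod :
    ∃ c₁ > 0, ∃ c₂ > 0, ∀ f : ℝ → ℝ, ContinuousOn f (Set.Icc 0 1) → ∀ n : ℕ, 1 ≤ n →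
      c₁ * dtMod 2 f (1 / Real.sqrt n) ≤
        sSup ((fun p => |bernstein' n f p - f p|) '' Set.Icc (0:ℝ) 1) ∧
      sSup ((fun p => |bernstein' n f p - f p|) '' Set.Icc (0:ℝ) 1) ≤
        c₂ * dtMod 2 f (1 / Real.sqrt n) := by
  refine ⟨1 / 252, by norm_num, 2, two_pos, fun f hf n hn => ?_⟩
  have hn₀ : n ≠ 0 := Nat.one_le_iff_ne_zero.1 hn
  constructor
  · have h := dtMod_two_le_of_abs_eval_bernsteinForm_sub_le hn₀ fun p hp => by
      rw [← bernstein'_eq_eval_bernsteinForm]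
      exact abs_bernstein'_sub_le_sSup hf n hp
    linarith
  · refine Real.sSup_le ?_ (mul_nonneg zero_le_two (dtMod_nonneg 2 f _))
    rintro _ ⟨p, hp, rfl⟩
    simpa only [bernstein'_eq_eval_bernsteinForm] using
      abs_eval_bernsteinForm_sub_le_dtMod hf hn₀ hp
end

section
/- Fix integers r ≥ 1, s ≥ 0 and a constant L > 0. There exists a constant c > 0 depending only on r, s, L such that for every function f : [0,1] → ℝ satisfying condition D_s with parameter L and every integer n ≥ 2r, the delete-1 r-jackknife bias satisfies: sup_{p∈[0,1]} |Σ_{i=1}^r C_i B_{n−r+i}[f](p) − f(p)| ≤ c n^{r−s−1} if 0 ≤ s ≤ 2r−2, ≤ c n^{−(r−1/2)} if s = 2r−1, and ≤ c n^{−r} if s ≥ 2r, where C_i are the jackknife coefficients for the sample sizes n_i = n − r + i. -/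
/-- Condition `D_s` with parameter `L`: for `s = 0`, `f` is Lebesgue integrable on `[0,1]`
with `|f| ≤ L`; for `s ≥ 1`, `f` is `s-1` times (continuously) differentiable on `[0,1]`,
`|f^{(i)}| ≤ L` for `0 ≤ i ≤ s-1`, and `f^{(s-1)}` is `L`-Lipschitz on `[0,1]` (equivalently,
absolutely continuous with `|f^{(s)}| ≤ L` a.e.). -/
def CondD (s : ℕ) (L : ℝ) (f : ℝ → ℝ) : Prop :=
  if s = 0 then
    MeasureTheory.IntegrableOn f (Set.Icc 0 1) ∧ ∀ x ∈ Set.Icc (0:ℝ) 1, |f x| ≤ L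
  else
    ContDiffOn ℝ (s - 1) f (Set.Icc 0 1) ∧
    (∀ i ≤ s - 1, ∀ x ∈ Set.Icc (0:ℝ) 1, |iteratedDerivWithin i f (Set.Icc 0 1) x| ≤ L) ∧
    LipschitzOnWith (Real.toNNReal L) (iteratedDerivWithin (s - 1) f (Set.Icc 0 1))
      (Set.Icc 0 1)

/-!
A sample of size `N + i` consists of `N` trials followed by `i` more, with `i ≤ r - 1`. Subtract
from `f` its Taylor polynomial at `p`. The polynomial part has small bias because each central
moment of the sample proportion is a polynomial in `1 / n` without constant term, and the jackknife
weights annihilate `1 / n, …, 1 / n ^ (r - 1)`; this costs `N ^ (-r)`. The flat part is expanded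
around the proportion `x` of successes in the first `N` trials. The jackknife weights are
`n_i ^ (r - 1)` times the weights of the `(r - 1)`-st divided difference, so on the `a`-th power of
the further increment they gain `N ^ (-a / 2)`, while the `a`-th coefficient is of order
`|x - p| ^ (s - a)`, that is `N ^ (-(s - a) / 2)` on average; this costs `N ^ (-s / 2)`. The Taylor
remainder at `x` is `O(N ^ (-s))`, against weights of total size `N ^ (r - 1)`.
-/

open Finset

section BinomialMean

/-- The expectation of `g` under the binomial law with `m` trials and success probability `p`. -/
noncomputable def binomialMean (p : ℝ) (m : ℕ) (g : ℕ → ℝ) : ℝ :=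
  ∑ k ∈ range (m + 1), (m.choose k : ℝ) * p ^ k * (1 - p) ^ (m - k) * g k

variable (p : ℝ) (m : ℕ)

theorem binomialMean_zero (g : ℕ → ℝ) : binomialMean p 0 g = g 0 := by
  simp [binomialMean]

theorem binomialMean_add (g h : ℕ → ℝ) :
    binomialMean p m (fun k => g k + h k) = binomialMean p m g + binomialMean p m h := by
  simp [binomialMean, mul_add, sum_add_distrib]

theorem binomialMean_const_mul (c : ℝ) (g : ℕ → ℝ) :
    binomialMean p m (fun k => c * g k) = c * binomialMean p m g := by
  simp only [binomialMean, mul_sum, mul_left_comm c]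

theorem binomialMean_sum {ι : Type*} (t : Finset ι) (g : ι → ℕ → ℝ) :
    binomialMean p m (fun k => ∑ i ∈ t, g i k) = ∑ i ∈ t, binomialMean p m (g i) := by
  simp only [binomialMean, mul_sum]
  exact sum_comm

theorem binomialMean_const (c : ℝ) : binomialMean p m (fun _ => c) = c := by
  have h := congrArg (Polynomial.eval p) (bernsteinPolynomial.sum ℝ m)
  simp only [Polynomial.eval_finsetSum, bernsteinPolynomial, Polynomial.eval_mul,
    Polynomial.eval_natCast, Polynomial.eval_pow, Polynomial.eval_sub, Polynomial.eval_one,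
    Polynomial.eval_X] at h
  rw [binomialMean, ← sum_mul, h, one_mul]

theorem binomialMean_mono {p : ℝ} (hp : p ∈ Set.Icc (0 : ℝ) 1) {m : ℕ} {g h : ℕ → ℝ}
    (hgh : ∀ k ≤ m, g k ≤ h k) : binomialMean p m g ≤ binomialMean p m h := by
  have hq : 0 ≤ 1 - p := sub_nonneg.2 hp.2
  have hp0 : 0 ≤ p := hp.1
  exact sum_le_sum fun k hk =>
    mul_le_mul_of_nonneg_left (hgh k (mem_range_succ_iff.1 hk)) (by positivity)

theorem abs_binomialMean_le {p : ℝ} (hp : p ∈ Set.Icc (0 : ℝ) 1) {m : ℕ} {g h : ℕ → ℝ}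
    (hgh : ∀ k ≤ m, |g k| ≤ h k) : |binomialMean p m g| ≤ binomialMean p m h := by
  have upper : binomialMean p m g ≤ binomialMean p m h :=
    binomialMean_mono hp fun k hk => (abs_le.1 (hgh k hk)).2
  have lower : binomialMean p m (fun k => -1 * g k) ≤ binomialMean p m h :=
    binomialMean_mono hp fun k hk => by linarith [(abs_le.1 (hgh k hk)).1]
  rw [binomialMean_const_mul] at lower
  exact abs_le.2 ⟨by linarith, upper⟩

theorem abs_binomialMean_le_of_forall_le {p : ℝ} (hp : p ∈ Set.Icc (0 : ℝ) 1) {m : ℕ} {g : ℕ → ℝ}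
    {ε : ℝ} (hg : ∀ k ≤ m, |g k| ≤ ε) : |binomialMean p m g| ≤ ε :=
  (abs_binomialMean_le hp hg).trans_eq (binomialMean_const p m ε)

theorem binomialMean_succ (g : ℕ → ℝ) :
    binomialMean p (m + 1) g =
      p * binomialMean p m (fun k => g (k + 1)) + (1 - p) * binomialMean p m g := by
  have pascal := sum_antidiagonal_choose_succ_mul (fun i j => p ^ i * (1 - p) ^ j * g i) m
  simp only [Nat.sum_antidiagonal_eq_sum_range_succ_mk] at pascal
  simp only [binomialMean, mul_sum]
  rw [add_comm (∑ _ ∈ _, p * _)]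
  convert pascal using 1
  · exact sum_congr rfl fun _ _ => by ring
  · congr 1
    · exact sum_congr rfl fun _ _ => by ring
    · refine sum_congr rfl fun k hk => ?_
      rw [Nat.choose_symm (mem_range_succ_iff.1 hk)]
      ring

theorem binomialMean_add_trials (j : ℕ) (g : ℕ → ℝ) :
    binomialMean p (m + j) g = binomialMean p m fun k => binomialMean p j fun l => g (k + l) := by
  induction j generalizing g with
  | zero => simp only [add_zero, binomialMean_zero]
  | succ j ih =>
    simp only [← add_assoc, binomialMean_succ, ih, binomialMean_add, binomialMean_const_mul]

end BinomialMean

section CentralMoments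

/-- `F p m` is a polynomial of degree at most `e` in the number of trials `m`, whose coefficients
depend continuously on the success probability `p`. -/
def IsPolyInTrials (e : ℕ) (F : ℝ → ℕ → ℝ) : Prop :=
  ∃ b : ℕ → ℝ → ℝ, (∀ l, Continuous (b l)) ∧
    ∀ p m, F p m = ∑ l ∈ range (e + 1), b l p * (m : ℝ) ^ l

namespace IsPolyInTrials

variable {e : ℕ} {F : ℝ → ℕ → ℝ}

theorem monomial {φ : ℝ → ℝ} (hφ : Continuous φ) {l : ℕ} (hl : l ≤ e) :
    IsPolyInTrials e fun p m => φ p * (m : ℝ) ^ l := by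
  classical
  refine ⟨fun j => if j = l then φ else 0, fun j => ?_, fun p m => ?_⟩
  · dsimp only
    split_ifs
    exacts [hφ, continuous_zero]
  · rw [sum_eq_single_of_mem l (by simpa [Nat.lt_succ_iff] using hl) fun j _ hj => by simp [hj]]
    simp

theorem sum {ι : Type*} {t : Finset ι} {G : ι → ℝ → ℕ → ℝ}
    (hG : ∀ i ∈ t, IsPolyInTrials e (G i)) : IsPolyInTrials e fun p m => ∑ i ∈ t, G i p m := by
  choose! b hb hGb using hG
  refine ⟨fun l p => ∑ i ∈ t, b i l p, fun l => continuous_finsetSum t fun i hi => hb i hi l,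
    fun p m => ?_⟩
  simp only [sum_mul]
  rw [sum_comm]
  exact sum_congr rfl fun i hi => hGb i hi p m

theorem const_mul {φ : ℝ → ℝ} (hφ : Continuous φ) (hF : IsPolyInTrials e F) :
    IsPolyInTrials e fun p m => φ p * F p m := by
  obtain ⟨b, hb, hFb⟩ := hF
  refine ⟨fun l p => φ p * b l p, fun l => hφ.mul (hb l), fun p m => ?_⟩
  simp only [hFb, mul_sum, mul_assoc]

theorem sum_range_pow (l : ℕ) :
    IsPolyInTrials (l + 1) fun _ m => ∑ j ∈ range m, (j : ℝ) ^ l := by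
  have faulhaber (m : ℕ) : ∑ j ∈ range m, (j : ℝ) ^ l = ∑ i ∈ range (l + 1),
      ((bernoulli i * (l + 1).choose i / (l + 1) : ℚ) : ℝ) * (m : ℝ) ^ (l + 1 - i) := by
    have h := congrArg (Rat.cast : ℚ → ℝ) (_root_.sum_range_pow m l)
    push_cast at h ⊢
    exact h.trans (sum_congr rfl fun _ _ => by ring)
  simp only [faulhaber]
  exact sum fun i _ => monomial continuous_const (Nat.sub_le _ _)

theorem sum_range (hF : IsPolyInTrials e F) {e' : ℕ} (he : e + 1 ≤ e') :
    IsPolyInTrials e' fun p m => ∑ j ∈ range m, F p j := by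
  obtain ⟨b, hb, hFb⟩ := hF
  have sum_pow {l : ℕ} (hl : l ∈ range (e + 1)) :
      IsPolyInTrials e' fun _ m => ∑ j ∈ range m, (j : ℝ) ^ l := by
    obtain ⟨c, hc, h⟩ := sum_range_pow l
    rw [funext₂ h]
    exact sum fun i hi => monomial (hc i) (by grind)
  have interchange (p : ℝ) (m : ℕ) : ∑ j ∈ range m, F p j =
      ∑ l ∈ range (e + 1), b l p * ∑ j ∈ range m, (j : ℝ) ^ l := by
    simp only [hFb, mul_sum]
    exact sum_comm
  simp only [interchange]
  exact sum fun l hl => (sum_pow hl).const_mul (hb l)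

theorem exists_abs_sum_mul_le (hF : IsPolyInTrials e F) :
    ∃ K, 0 ≤ K ∧ ∀ p ∈ Set.Icc (0 : ℝ) 1, ∀ {ι : Type*} (t : Finset ι) (w : ι → ℝ) (m : ι → ℕ)
      (B : ℕ → ℝ), (∀ l ≤ e, |∑ i ∈ t, w i * (m i : ℝ) ^ l| ≤ B l) →
        |∑ i ∈ t, w i * F p (m i)| ≤ K * ∑ l ∈ range (e + 1), B l := by
  obtain ⟨b, hb, hFb⟩ := hF
  choose K hK using fun l => isCompact_Icc.exists_bound_of_continuousOn (hb l).continuousOn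
    (s := Set.Icc (0 : ℝ) 1)
  have hK0 (l : ℕ) : 0 ≤ K l := (norm_nonneg _).trans (hK l 0 (by simp))
  refine ⟨∑ l ∈ range (e + 1), K l, sum_nonneg fun l _ => hK0 l, fun p hp ι t w m B hB => ?_⟩
  have interchange : ∑ i ∈ t, w i * F p (m i) =
      ∑ l ∈ range (e + 1), b l p * ∑ i ∈ t, w i * (m i : ℝ) ^ l := by
    simp only [hFb, mul_sum]
    rw [sum_comm]
    simp only [mul_left_comm]
  rw [interchange, mul_sum]
  refine (abs_sum_le_sum_abs _ _).trans (sum_le_sum fun l hl => ?_)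
  rw [abs_mul]
  have hKl : |b l p| ≤ ∑ l ∈ range (e + 1), K l :=
    (hK l p hp).trans (single_le_sum (fun l _ => hK0 l) hl)
  exact mul_le_mul hKl (hB l (mem_range_succ_iff.1 hl)) (abs_nonneg _)
    ((abs_nonneg _).trans hKl)

end IsPolyInTrials

/-- The `c`-th central moment of the binomial law with `m` trials and success probability `p`. -/
noncomputable def binomialCentralMoment (c : ℕ) (p : ℝ) (m : ℕ) : ℝ :=
  binomialMean p m fun k => ((k : ℝ) - m * p) ^ c

theorem binomialCentralMoment_zero_left (p : ℝ) (m : ℕ) : binomialCentralMoment 0 p m = 1 := by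
  simp only [binomialCentralMoment, pow_zero, binomialMean_const]

theorem binomialMean_add_central_pow (p : ℝ) (m c : ℕ) (q : ℝ) :
    binomialMean p m (fun k => (q + ((k : ℝ) - m * p)) ^ c) =
      ∑ i ∈ range (c + 1), (c.choose i : ℝ) * q ^ i * binomialCentralMoment (c - i) p m := by
  simp only [binomialCentralMoment, add_pow, binomialMean_sum, ← binomialMean_const_mul]
  exact sum_congr rfl fun i _ => congrArg _ (funext fun k => by ring)

/-- The `i`-th central moment of the Bernoulli law with success probability `p`. -/
def bernoulliCentralMoment (i : ℕ) (p : ℝ) : ℝ :=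
  p * (1 - p) ^ i + (1 - p) * (-p) ^ i

theorem continuous_bernoulliCentralMoment (i : ℕ) : Continuous (bernoulliCentralMoment i) := by
  unfold bernoulliCentralMoment
  fun_prop

theorem binomialCentralMoment_succ_right (c : ℕ) (p : ℝ) (m : ℕ) :
    binomialCentralMoment c p (m + 1) = ∑ i ∈ range (c + 1),
      (c.choose i : ℝ) * bernoulliCentralMoment i p * binomialCentralMoment (c - i) p m := by
  have success : (fun k : ℕ => (((k + 1 : ℕ) : ℝ) - (m + 1 : ℕ) * p) ^ c) =
      fun k : ℕ => ((1 - p) + ((k : ℝ) - m * p)) ^ c := by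
    funext k; push_cast; ring_nf
  have failure : (fun k : ℕ => ((k : ℝ) - (m + 1 : ℕ) * p) ^ c) =
      fun k : ℕ => (-p + ((k : ℝ) - m * p)) ^ c := by
    funext k; push_cast; ring_nf
  rw [binomialCentralMoment, binomialMean_succ, success, failure, binomialMean_add_central_pow,
    binomialMean_add_central_pow, mul_sum, mul_sum, ← sum_add_distrib]
  exact sum_congr rfl fun _ _ => by rw [bernoulliCentralMoment]; ring

theorem binomialCentralMoment_succ_eq_sum_range (c : ℕ) (p : ℝ) (m : ℕ) :
    binomialCentralMoment (c + 1) p m = ∑ j ∈ range m, ∑ i ∈ range c,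
      ((c + 1).choose (i + 2) : ℝ) * bernoulliCentralMoment (i + 2) p *
        binomialCentralMoment (c - (i + 1)) p j := by
  have increment (j : ℕ) : binomialCentralMoment (c + 1) p (j + 1) -
      binomialCentralMoment (c + 1) p j = ∑ i ∈ range c,
        ((c + 1).choose (i + 2) : ℝ) * bernoulliCentralMoment (i + 2) p *
          binomialCentralMoment (c - (i + 1)) p j := by
    have hμ₀ : bernoulliCentralMoment 0 p = 1 := by simp [bernoulliCentralMoment]
    have hμ₁ : bernoulliCentralMoment 1 p = 0 := by simp only [bernoulliCentralMoment]; ring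
    rw [binomialCentralMoment_succ_right, sum_range_succ', sum_range_succ', hμ₀, hμ₁]
    simp only [Nat.choose_zero_right, Nat.cast_one, mul_zero, zero_mul, mul_one, one_mul,
      add_zero, Nat.sub_zero, add_sub_cancel_right, Nat.add_sub_add_right]
  have initial : binomialCentralMoment (c + 1) p 0 = 0 := by
    simp [binomialCentralMoment, binomialMean_zero]
  rw [← sum_congr rfl fun j _ => increment j, Finset.sum_range_sub, initial, sub_zero]

-- The Bernoulli central moment of order `1` vanishes, so raising the number of trials by one lowers
-- the order of the moments by at least two; hence the degree `c / 2` rather than `c`.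
theorem isPolyInTrials_binomialCentralMoment (c : ℕ) :
    IsPolyInTrials (c / 2) (binomialCentralMoment c) := by
  induction c using Nat.strong_induction_on with
  | _ c ih =>
    rcases c with - | c
    · refine ⟨fun _ _ => 1, fun _ => continuous_const, fun p m => ?_⟩
      simp [binomialCentralMoment_zero_left]
    · have hsum : binomialCentralMoment (c + 1) = fun p m => ∑ i ∈ range c, ∑ j ∈ range m,
          ((c + 1).choose (i + 2) : ℝ) * bernoulliCentralMoment (i + 2) p *
            binomialCentralMoment (c - (i + 1)) p j := by
        funext p m
        rw [binomialCentralMoment_succ_eq_sum_range, sum_comm]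
      rw [hsum]
      refine IsPolyInTrials.sum fun i hi => IsPolyInTrials.sum_range (e := (c - (i + 1)) / 2)
        (IsPolyInTrials.const_mul ?_ (ih _ (by omega))) (by grind)
      exact continuous_const.mul (continuous_bernoulliCentralMoment _)

theorem exists_abs_binomialCentralMoment_le (s : ℕ) :
    ∃ C, 0 ≤ C ∧ ∀ p ∈ Set.Icc (0 : ℝ) 1, ∀ m : ℕ, 1 ≤ m →
      |binomialCentralMoment s p m| ≤ C * (m : ℝ) ^ (s / 2) := by
  obtain ⟨K, hK, h⟩ := (isPolyInTrials_binomialCentralMoment s).exists_abs_sum_mul_le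
  refine ⟨K * (s / 2 + 1 : ℕ), by positivity, fun p hp m hm => ?_⟩
  have hm1 : (1 : ℝ) ≤ m := by exact_mod_cast hm
  have := h p hp {()} (fun _ => 1) (fun _ => m) (fun _ => (m : ℝ) ^ (s / 2)) fun l hl => by
    simpa using pow_le_pow_right₀ hm1 hl
  simpa [mul_assoc] using this

theorem exists_binomialMean_one_add_sqrt_mul_abs_pow_le (s : ℕ) :
    ∃ C, 0 ≤ C ∧ ∀ p ∈ Set.Icc (0 : ℝ) 1, ∀ m : ℕ, 1 ≤ m →
      binomialMean p m (fun k => (1 + √m * |(k : ℝ) / m - p|) ^ s) ≤ C := by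
  obtain ⟨K, hK, hmoment⟩ := exists_abs_binomialCentralMoment_le (2 * s)
  refine ⟨2 ^ (2 * s - 1) * (1 + K), by positivity, fun p hp m hm => ?_⟩
  have hm0 : (0 : ℝ) < m := by exact_mod_cast hm
  have hpt (k : ℕ) : (1 + √m * |(k : ℝ) / m - p|) ^ s ≤
      2 ^ (2 * s - 1) * (1 + ((m : ℝ) ^ s)⁻¹ * ((k : ℝ) - m * p) ^ (2 * s)) := by
    set u := √m * |(k : ℝ) / m - p| with hu
    have hu0 : 0 ≤ u := by positivity
    have hu2 : u ^ (2 * s) = ((m : ℝ) ^ s)⁻¹ * ((k : ℝ) - m * p) ^ (2 * s) := by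
      rw [pow_mul, pow_mul, hu, mul_pow, Real.sq_sqrt hm0.le, sq_abs, ← inv_pow, ← mul_pow]
      congr 1
      field_simp
    calc (1 + u) ^ s ≤ (1 + u) ^ (2 * s) := pow_le_pow_right₀ (by linarith) (by omega)
      _ ≤ 2 ^ (2 * s - 1) * (1 ^ (2 * s) + u ^ (2 * s)) := add_pow_le zero_le_one hu0 _
      _ = _ := by rw [one_pow, hu2]
  calc binomialMean p m (fun k => (1 + √m * |(k : ℝ) / m - p|) ^ s)
      ≤ 2 ^ (2 * s - 1) * (1 + ((m : ℝ) ^ s)⁻¹ * binomialCentralMoment (2 * s) p m) := by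
        refine (binomialMean_mono hp fun k _ => hpt k).trans_eq ?_
        rw [binomialMean_const_mul, binomialMean_add, binomialMean_const, binomialMean_const_mul,
          binomialCentralMoment]
    _ ≤ 2 ^ (2 * s - 1) * (1 + K) := by
        gcongr
        rw [inv_mul_le_iff₀ (by positivity), mul_comm _ K]
        simpa using (le_abs_self _).trans (hmoment p hp m hm)

end CentralMoments

section JackknifeWeights

/-- The weights of the `k`-th divided difference at the nodes `x, x + 1, …, x + k`; they do not
depend on `x`. -/
noncomputable def dividedDiffWeight (k : ℕ) : Fin (k + 1) → ℝ :=
  Lagrange.nodalWeight univ fun j => (j : ℝ)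

/-- The coefficients of the delete-1 jackknife with sample sizes `N, N + 1, …, N + k`. -/
noncomputable def deleteOneCoeff (k N : ℕ) : Fin (k + 1) → ℝ :=
  jackCoeff fun j => N + j.val

theorem deleteOneCoeff_eq (k N : ℕ) (i : Fin (k + 1)) :
    deleteOneCoeff k N i = ((N : ℝ) + i) ^ k * dividedDiffWeight k i := by
  simp [deleteOneCoeff, jackCoeff, dividedDiffWeight, Lagrange.nodalWeight, div_eq_mul_inv,
    prod_mul_distrib]

theorem sum_dividedDiffWeight_mul_eval {k : ℕ} {P : Polynomial ℝ} (hP : P.natDegree ≤ k) (x : ℝ) :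
    ∑ i, dividedDiffWeight k i * P.eval (x + i) = P.coeff k := by
  have hinj : Set.InjOn (fun i : Fin (k + 1) => x + (i : ℝ)) (univ : Finset (Fin (k + 1))) := by
    intro i _ j _ h
    simpa [Fin.ext_iff] using h
  have h := Lagrange.coeff_eq_sum hinj (P := P) (by
    rw [card_fin]
    exact (Polynomial.degree_le_of_natDegree_le hP).trans_lt (by exact_mod_cast k.lt_succ_self))
  rw [card_fin, add_tsub_cancel_right] at h
  rw [h]
  exact sum_congr rfl fun i _ => by simp [dividedDiffWeight, Lagrange.nodalWeight, div_eq_inv_mul]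

theorem sum_dividedDiffWeight_mul_pow_of_lt {k e : ℕ} (he : e < k) (x : ℝ) :
    ∑ i, dividedDiffWeight k i * (x + i) ^ e = 0 := by
  have h := sum_dividedDiffWeight_mul_eval (k := k) (P := Polynomial.X ^ e) (by simpa using he.le) x
  simpa [Polynomial.coeff_X_pow, he.ne'] using h

theorem sum_deleteOneCoeff (k N : ℕ) : ∑ i, deleteOneCoeff k N i = 1 := by
  have h := sum_dividedDiffWeight_mul_eval (k := k) (P := Polynomial.X ^ k) (by simp) N
  simpa [deleteOneCoeff_eq, mul_comm] using h

theorem sum_dividedDiffWeight_mul_taylorWithinEval (k : ℕ) (h : ℝ → ℝ) (S : Set ℝ) (c : ℝ) :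
    ∑ i, dividedDiffWeight (k + 1) i * taylorWithinEval h k S 0 (i / c) = 0 := by
  simp only [taylor_within_apply, mul_sum]
  rw [sum_comm]
  refine sum_eq_zero fun m hm => ?_
  calc ∑ i : Fin (k + 2), dividedDiffWeight (k + 1) i *
        (((m.factorial : ℝ)⁻¹ * (i / c - 0) ^ m) • iteratedDerivWithin m h S 0)
      = (m.factorial : ℝ)⁻¹ * iteratedDerivWithin m h S 0 / c ^ m *
          ∑ i, dividedDiffWeight (k + 1) i * (0 + (i : ℝ)) ^ m := by
        rw [mul_sum]
        exact sum_congr rfl fun i _ => by rw [sub_zero, div_pow, smul_eq_mul]; ring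
    _ = 0 := by rw [sum_dividedDiffWeight_mul_pow_of_lt (mem_range.1 hm), mul_zero]

theorem exists_abs_sum_dividedDiffWeight_mul_le {k : ℕ} {h : ℝ → ℝ}
    (hh : ContDiffOn ℝ k h (Set.Icc 0 k)) :
    ∃ C, 0 ≤ C ∧ ∀ N : ℕ, 1 ≤ N →
      |∑ i, dividedDiffWeight k i * h (i / N)| * (N : ℝ) ^ k ≤ C := by
  rcases k with - | k
  · exact ⟨|dividedDiffWeight 0 0 * h 0|, abs_nonneg _, fun N _ => by simp⟩
  obtain ⟨C, hC⟩ := exists_taylor_mean_remainder_bound (Nat.cast_nonneg (k + 1))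
    (by exact_mod_cast hh)
  simp only [sub_zero] at hC
  set T := taylorWithinEval h k (Set.Icc 0 ((k + 1 : ℕ) : ℝ)) 0
  refine ⟨∑ i, |dividedDiffWeight (k + 1) i| * |C| * (i : ℝ) ^ (k + 1), by positivity,
    fun N hN => ?_⟩
  have hN1 : (1 : ℝ) ≤ N := by exact_mod_cast hN
  rw [← sub_zero (∑ i, _),
    ← sum_dividedDiffWeight_mul_taylorWithinEval k h (Set.Icc 0 ((k + 1 : ℕ) : ℝ)) N,
    ← sum_sub_distrib]
  refine (mul_le_mul_of_nonneg_right (abs_sum_le_sum_abs _ _) (by positivity)).trans ?_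
  rw [sum_mul]
  refine sum_le_sum fun i _ => ?_
  have hi : (i : ℝ) / N ∈ Set.Icc (0 : ℝ) ((k + 1 : ℕ) : ℝ) :=
    ⟨by positivity, (div_le_self (by positivity) hN1).trans (by exact_mod_cast i.is_le)⟩
  rw [← mul_sub, abs_mul, mul_assoc, mul_assoc]
  refine mul_le_mul_of_nonneg_left ?_ (abs_nonneg _)
  calc |h (i / N) - T (i / N)| * (N : ℝ) ^ (k + 1)
      ≤ |C| * ((i : ℝ) / N) ^ (k + 1) * (N : ℝ) ^ (k + 1) := by
        gcongr
        exact (hC _ hi).trans (by gcongr; exact le_abs_self C)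
    _ = |C| * (i : ℝ) ^ (k + 1) := by
        rw [mul_assoc, ← mul_pow, div_mul_cancel₀ _ (by positivity)]

theorem exists_abs_sum_deleteOneCoeff_mul_pow_div_le (k e a : ℕ) :
    ∃ C, 0 ≤ C ∧ ∀ N : ℕ, 1 ≤ N →
      |∑ i, deleteOneCoeff k N i * ((i : ℝ) ^ e / ((N : ℝ) + i) ^ a)| ≤
        C * ((N : ℝ) ^ e / (N : ℝ) ^ a) := by
  have smooth : ContDiffOn ℝ k (fun t : ℝ => (1 + t) ^ k * (t ^ e / (1 + t) ^ a))
      (Set.Icc 0 k) := by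
    refine ContDiffOn.mul (by fun_prop) (ContDiffOn.div (by fun_prop) (by fun_prop) fun t ht => ?_)
    have := ht.1
    positivity
  obtain ⟨C, hC, h⟩ := exists_abs_sum_dividedDiffWeight_mul_le smooth
  refine ⟨C, hC, fun N hN => ?_⟩
  have : (0 : ℝ) < N := by exact_mod_cast hN
  have rescale : ∑ i, deleteOneCoeff k N i * ((i : ℝ) ^ e / ((N : ℝ) + i) ^ a) =
      (∑ i, dividedDiffWeight k i *
        ((1 + (i : ℝ) / N) ^ k * (((i : ℝ) / N) ^ e / (1 + (i : ℝ) / N) ^ a))) *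
        (N : ℝ) ^ k * ((N : ℝ) ^ e / (N : ℝ) ^ a) := by
    simp only [sum_mul]
    refine sum_congr rfl fun i _ => ?_
    have hNi : (N : ℝ) + i = N * (1 + i / N) := by field_simp
    have hi : (i : ℝ) ^ e = N ^ e * (i / N) ^ e := by rw [← mul_pow]; field_simp
    rw [deleteOneCoeff_eq, hNi, hi, mul_pow, mul_pow, mul_div_mul_comm]
    ring
  rw [rescale, abs_mul, abs_mul, abs_of_nonneg (by positivity : (0 : ℝ) ≤ (N : ℝ) ^ k),
    abs_of_nonneg (by positivity : (0 : ℝ) ≤ (N : ℝ) ^ e / (N : ℝ) ^ a)]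
  gcongr
  exact h N hN

theorem exists_abs_sum_deleteOneCoeff_div_pow_le (k : ℕ) {e : ℕ} (he : 1 ≤ e) :
    ∃ C, 0 ≤ C ∧ ∀ N : ℕ, 1 ≤ N →
      |∑ i, deleteOneCoeff k N i / ((N : ℝ) + i) ^ e| ≤ C / (N : ℝ) ^ (k + 1) := by
  rcases le_or_gt e k with hek | hek
  · refine ⟨0, le_rfl, fun N hN => ?_⟩
    have : (0 : ℝ) < N := by exact_mod_cast hN
    have hpow : ∑ i, deleteOneCoeff k N i / ((N : ℝ) + i) ^ e =
        ∑ i, dividedDiffWeight k i * ((N : ℝ) + i) ^ (k - e) := by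
      refine sum_congr rfl fun i _ => ?_
      rw [deleteOneCoeff_eq, pow_sub₀ _ (by positivity) hek]
      ring
    rw [hpow, sum_dividedDiffWeight_mul_pow_of_lt (by omega), abs_zero, zero_div]
  · obtain ⟨C, hC, h⟩ := exists_abs_sum_deleteOneCoeff_mul_pow_div_le k 0 e
    simp only [pow_zero, mul_one_div] at h
    refine ⟨C, hC, fun N hN => (h N hN).trans ?_⟩
    have hN1 : (1 : ℝ) ≤ N := by exact_mod_cast hN
    gcongr
    omega

theorem exists_sum_abs_deleteOneCoeff_le (k : ℕ) :
    ∃ C, 0 ≤ C ∧ ∀ N : ℕ, 1 ≤ N → ∑ i, |deleteOneCoeff k N i| ≤ C * (N : ℝ) ^ k := by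
  refine ⟨∑ i, ((k : ℝ) + 1) ^ k * |dividedDiffWeight k i|, by positivity, fun N hN => ?_⟩
  have hN1 : (1 : ℝ) ≤ N := by exact_mod_cast hN
  rw [sum_mul]
  refine sum_le_sum fun i _ => ?_
  have hi : (i : ℝ) ≤ k * N :=
    (Nat.cast_le.2 i.is_le).trans (le_mul_of_one_le_right (Nat.cast_nonneg k) hN1)
  rw [deleteOneCoeff_eq, abs_mul, abs_of_nonneg (by positivity), mul_right_comm, ← mul_pow]
  gcongr
  linarith

end JackknifeWeights

section Taylor

variable {E : Type*} [NormedAddCommGroup E] [NormedSpace ℝ E] {f : ℝ → E} {S : Set ℝ} {x : ℝ}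

theorem contDiff_taylorWithinEval (f : ℝ → E) (n : ℕ) (S : Set ℝ) (x : ℝ) {m : WithTop ℕ∞} :
    ContDiff ℝ m (taylorWithinEval f n S x) := by
  rw [funext (taylor_within_apply f n S x)]
  fun_prop

theorem iteratedDerivWithin_taylorWithinEval (hS : UniqueDiffOn ℝ S) (f : ℝ → E) (d m : ℕ)
    (x : ℝ) : S.EqOn (iteratedDerivWithin m (taylorWithinEval f (d + m) S x) S)
      (taylorWithinEval (iteratedDerivWithin m f S) d S x) := by
  induction m generalizing f with
  | zero => simp [Set.eqOn_refl]
  | succ m ih =>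
    have hderiv : S.EqOn (derivWithin (taylorWithinEval f (d + m + 1) S x) S)
        (taylorWithinEval (derivWithin f S) (d + m) S x) := fun y hy =>
      (hasDerivAt_taylorWithinEval_succ f (d + m)).hasDerivWithinAt.derivWithin (hS y hy)
    simp only [iteratedDerivWithin_succ', ← add_assoc]
    exact (iteratedDerivWithin_congr hderiv).trans (ih _)

theorem norm_iteratedDerivWithin_sub_taylorWithinEval_le (hconv : Convex ℝ S)
    (hS : UniqueDiffOn ℝ S) {K : NNReal} {d a : ℕ} (hf : ContDiffOn ℝ (d + a : ℕ) f S)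
    (hlip : LipschitzOnWith K (iteratedDerivWithin (d + a) f S) S) (hx : x ∈ S) {y : ℝ}
    (hy : y ∈ S) :
    ‖iteratedDerivWithin a f S y - taylorWithinEval (iteratedDerivWithin a f S) d S x y‖ ≤
      K * |y - x| ^ (d + 1) := by
  induction d generalizing a y with
  | zero =>
    rw [taylor_within_zero_eval, ← Real.norm_eq_abs, zero_add, pow_one]
    simpa using hlip.norm_sub_le hy hx
  | succ d ih =>
    rw [add_assoc, add_comm 1 a] at hf hlip
    have hsub : Set.uIcc x y ⊆ S := by
      rw [← segment_eq_uIcc]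
      exact hconv.segment_subset hx hy
    set R := fun z => iteratedDerivWithin a f S z -
      taylorWithinEval (iteratedDerivWithin a f S) (d + 1) S x z with hR
    have hderiv (z) (hz : z ∈ Set.uIcc x y) : HasDerivWithinAt R
        (iteratedDerivWithin (a + 1) f S z -
          taylorWithinEval (iteratedDerivWithin (a + 1) f S) d S x z) (Set.uIcc x y) z := by
      rw [iteratedDerivWithin_succ]
      refine HasDerivWithinAt.sub ?_ (hasDerivAt_taylorWithinEval_succ _ d).hasDerivWithinAt
      have hdiff := hf.differentiableOn_iteratedDerivWithin (m := a)
        (by exact_mod_cast (by omega)) hS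
      exact (hdiff z (hsub hz)).hasDerivWithinAt.mono hsub
    have hbound (z) (hz : z ∈ Set.uIcc x y) : ‖iteratedDerivWithin (a + 1) f S z -
        taylorWithinEval (iteratedDerivWithin (a + 1) f S) d S x z‖ ≤
          K * |y - x| ^ (d + 1) := by
      refine (ih hf hlip (hsub hz)).trans ?_
      gcongr _ * ?_ ^ _
      exact Set.abs_sub_left_of_mem_uIcc hz
    have hmv := (convex_uIcc x y).norm_image_sub_le_of_norm_hasDerivWithin_le hderiv hbound
      Set.left_mem_uIcc Set.right_mem_uIcc
    rwa [show R x = 0 by simp [hR], sub_zero, Real.norm_eq_abs, mul_assoc, ← pow_succ] at hmv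

theorem iteratedDerivWithin_sub_taylorWithinEval (hS : UniqueDiffOn ℝ S) {d a : ℕ}
    (hf : ContDiffOn ℝ (d + a : ℕ) f S) (x : ℝ) :
    S.EqOn (iteratedDerivWithin a (f - taylorWithinEval f (d + a) S x) S) fun y =>
      iteratedDerivWithin a f S y - taylorWithinEval (iteratedDerivWithin a f S) d S x y := by
  intro y hy
  rw [iteratedDerivWithin_sub hy hS ((hf y hy).of_le (by exact_mod_cast Nat.le_add_left a d))
    (contDiff_taylorWithinEval f (d + a) S x).contDiffWithinAt,
    iteratedDerivWithin_taylorWithinEval hS f d a x hy]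

theorem lipschitzOnWith_iteratedDerivWithin_sub_taylorWithinEval {K : NNReal} {s : ℕ}
    (hlip : LipschitzOnWith K (iteratedDerivWithin s f S) S) (hS : UniqueDiffOn ℝ S)
    (hf : ContDiffOn ℝ s f S) (x : ℝ) :
    LipschitzOnWith K (iteratedDerivWithin s (f - taylorWithinEval f s S x) S) S := by
  have heq := iteratedDerivWithin_sub_taylorWithinEval hS (d := 0) (a := s)
    (by rwa [zero_add]) x
  rw [zero_add] at heq
  intro y hy z hz
  simpa [heq hy, heq hz, taylor_within_zero_eval] using hlip hy hz

end Taylor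

section Flatness

/-- `g` is flat to order `s` at `p` with constant `L`: around every point `x` of the unit interval
it has an expansion in powers of `y - x` with remainder at most `L * |y - x| ^ s`, whose
coefficients are as small as the vanishing of the first `s` derivatives of `g` at `p` predicts. -/
def FlatAt (s : ℕ) (L p : ℝ) (g : ℝ → ℝ) : Prop :=
  ∀ x ∈ Set.Icc (0 : ℝ) 1, ∃ c : ℕ → ℝ, (∀ a < s, |c a| ≤ L * |x - p| ^ (s - a)) ∧
    ∀ y ∈ Set.Icc (0 : ℝ) 1, |g y - ∑ a ∈ range s, c a * (y - x) ^ a| ≤ L * |y - x| ^ s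

variable {s : ℕ} {L p : ℝ} {f g : ℝ → ℝ}

theorem FlatAt.nonneg (hg : FlatAt s L p g) : 0 ≤ L := by
  obtain ⟨c, -, hrem⟩ := hg 0 (by simp)
  simpa using (abs_nonneg _).trans (hrem 1 (by simp))

theorem FlatAt.abs_apply_le (hg : FlatAt s L p g) (hp : p ∈ Set.Icc (0 : ℝ) 1) :
    |g p| ≤ L * 0 ^ s := by
  obtain ⟨c, hc, hrem⟩ := hg p hp
  have hc0 : ∑ a ∈ range s, c a * (p - p) ^ a = 0 := sum_eq_zero fun a ha => by
    have := hc a (mem_range.1 ha)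
    rw [sub_self, abs_zero, zero_pow (Nat.sub_ne_zero_of_lt (mem_range.1 ha)), mul_zero] at this
    rw [abs_nonpos_iff.1 this, zero_mul]
  have hp' := hrem p hp
  rwa [hc0, sub_zero, sub_self, abs_zero] at hp'

theorem abs_inv_factorial_mul_le (a : ℕ) (t : ℝ) : |(a.factorial : ℝ)⁻¹ * t| ≤ |t| := by
  rw [abs_mul, abs_of_nonneg (by positivity)]
  exact mul_le_of_le_one_left (abs_nonneg t)
    (inv_le_one_of_one_le₀ (by exact_mod_cast a.factorial_pos))

theorem flatAt_sub_taylorWithinEval {K : NNReal}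
    (hf : ContDiffOn ℝ s f (Set.Icc 0 1))
    (hlip : LipschitzOnWith K (iteratedDerivWithin s f (Set.Icc 0 1)) (Set.Icc 0 1))
    (hp : p ∈ Set.Icc (0 : ℝ) 1) :
    FlatAt (s + 1) K p (f - taylorWithinEval f s (Set.Icc 0 1) p) := by
  set I := Set.Icc (0 : ℝ) 1
  have hI : UniqueDiffOn ℝ I := uniqueDiffOn_Icc zero_lt_one
  set g := f - taylorWithinEval f s I p with hg
  have hgs : ContDiffOn ℝ s g I := hf.sub (contDiff_taylorWithinEval f s I p).contDiffOn
  have derivs_small {a : ℕ} (ha : a < s + 1) {x : ℝ} (hx : x ∈ I) :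
      |iteratedDerivWithin a g I x| ≤ K * |x - p| ^ (s + 1 - a) := by
    obtain ⟨d, rfl⟩ : ∃ d, s = d + a := ⟨s - a, by omega⟩
    rw [hg, iteratedDerivWithin_sub_taylorWithinEval hI hf p hx,
      show d + a + 1 - a = d + 1 by omega]
    exact norm_iteratedDerivWithin_sub_taylorWithinEval_le (convex_Icc 0 1) hI hf hlip hp hx
  refine fun x hx => ⟨fun a => (a.factorial : ℝ)⁻¹ * iteratedDerivWithin a g I x,
    fun a ha => ?_, fun y hy => ?_⟩
  · exact (abs_inv_factorial_mul_le a _).trans (derivs_small ha hx)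
  · have hrem := norm_iteratedDerivWithin_sub_taylorWithinEval_le (convex_Icc 0 1) hI (d := s)
      (a := 0) hgs (lipschitzOnWith_iteratedDerivWithin_sub_taylorWithinEval hlip hI hf p)
      hx hy
    simpa only [iteratedDerivWithin_zero, taylor_within_apply, smul_eq_mul, mul_right_comm,
      Real.norm_eq_abs] using hrem

theorem CondD.nonneg (hf : CondD s L f) : 0 ≤ L := by
  have h0 : (0 : ℝ) ∈ Set.Icc (0 : ℝ) 1 := by simp
  rw [CondD] at hf
  split_ifs at hf
  · exact (abs_nonneg _).trans (hf.2 0 h0)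
  · exact (abs_nonneg _).trans (hf.2.1 0 (Nat.zero_le _) 0 h0)

theorem CondD.exists_flatAt_sub (hf : CondD s L f) (hp : p ∈ Set.Icc (0 : ℝ) 1) :
    ∃ A : ℕ → ℝ, (∀ a < s, |A a| ≤ L) ∧
      FlatAt s L p (fun y => f y - ∑ a ∈ range s, A a * (y - p) ^ a) := by
  have hL := hf.nonneg
  rcases s with - | s
  · rw [CondD, if_pos rfl] at hf
    exact ⟨0, by simp, fun x _ => ⟨0, by simp, fun y hy => by simpa using hf.2 y hy⟩⟩
  rw [CondD, if_neg s.succ_ne_zero, add_tsub_cancel_right] at hf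
  obtain ⟨hsmooth, hbound, hlip⟩ := hf
  refine ⟨fun a => (a.factorial : ℝ)⁻¹ * iteratedDerivWithin a f (Set.Icc 0 1) p,
    fun a ha => ?_, ?_⟩
  · exact (abs_inv_factorial_mul_le a _).trans (hbound a (by omega) p hp)
  · have hflat := flatAt_sub_taylorWithinEval (s := s) hsmooth hlip hp
    rw [Real.coe_toNNReal L hL] at hflat
    convert hflat using 1
    funext y
    simp [taylor_within_apply, mul_right_comm]

end Flatness

section JackknifeOfPowers

variable (k : ℕ)

theorem binomialMean_div_sub_pow (p : ℝ) {m : ℕ} (hm : m ≠ 0) (a : ℕ) :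
    binomialMean p m (fun l => ((l : ℝ) / m - p) ^ a) =
      ((m : ℝ) ^ a)⁻¹ * binomialCentralMoment a p m := by
  rw [binomialCentralMoment, ← binomialMean_const_mul]
  refine congrArg _ (funext fun l => ?_)
  rw [← inv_pow, ← mul_pow]
  congr 1
  field_simp

theorem exists_abs_sum_deleteOneCoeff_mul_binomialMean_pow_sub_le (a : ℕ) :
    ∃ C, 0 ≤ C ∧ ∀ N : ℕ, 1 ≤ N → ∀ p ∈ Set.Icc (0 : ℝ) 1,
      |∑ i : Fin (k + 1), deleteOneCoeff k N i *
          binomialMean p (N + i) (fun l => ((l : ℝ) / (N + i : ℕ) - p) ^ a) - 0 ^ a| ≤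
        C / (N : ℝ) ^ (k + 1) := by
  rcases a.eq_zero_or_pos with rfl | ha
  · refine ⟨0, le_rfl, fun N _ p _ => ?_⟩
    simp only [pow_zero, binomialMean_const, mul_one, sum_deleteOneCoeff, sub_self, abs_zero,
      zero_div, le_refl]
  obtain ⟨K, hK, hpoly⟩ := (isPolyInTrials_binomialCentralMoment a).exists_abs_sum_mul_le
  choose C hC hbound using fun e => exists_abs_sum_deleteOneCoeff_div_pow_le k (Nat.succ_pos e)
  refine ⟨K * ∑ l ∈ range (a / 2 + 1), C (a - l - 1),
    mul_nonneg hK (sum_nonneg fun l _ => hC _), fun N hN p hp => ?_⟩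
  have weights (l : ℕ) (hl : l ≤ a / 2) : |∑ i : Fin (k + 1),
      deleteOneCoeff k N i / ((N : ℝ) + i) ^ a * ((N + i : ℕ) : ℝ) ^ l| ≤
        C (a - l - 1) / (N : ℝ) ^ (k + 1) := by
    refine le_of_eq_of_le (congrArg _ (sum_congr rfl fun i _ => ?_)) (hbound (a - l - 1) N hN)
    have hNi : (N : ℝ) + i ≠ 0 := by positivity
    rw [show (a - l - 1).succ = a - l by omega, pow_sub₀ _ hNi (by omega), Nat.cast_add]
    field_simp
  have moments := hpoly p hp univ _ (fun i : Fin (k + 1) => N + i) _ weights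
  rw [← sum_div, ← mul_div_assoc] at moments
  refine le_of_eq_of_le ?_ moments
  rw [zero_pow ha.ne', sub_zero]
  refine congrArg _ (sum_congr rfl fun i _ => ?_)
  rw [binomialMean_div_sub_pow p (by omega), Nat.cast_add]
  ring

theorem exists_abs_sum_deleteOneCoeff_mul_binomialCentralMoment_le (a b c : ℕ) :
    ∃ C, 0 ≤ C ∧ ∀ N : ℕ, 1 ≤ N → ∀ p ∈ Set.Icc (0 : ℝ) 1,
      |∑ i : Fin (k + 1), deleteOneCoeff k N i * ((i : ℝ) ^ b / ((N : ℝ) + i) ^ a) *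
          binomialCentralMoment c p i| ≤ C * ((N : ℝ) ^ (b + c / 2) / (N : ℝ) ^ a) := by
  obtain ⟨K, hK, hpoly⟩ := (isPolyInTrials_binomialCentralMoment c).exists_abs_sum_mul_le
  choose C hC hbound using fun e => exists_abs_sum_deleteOneCoeff_mul_pow_div_le k e a
  refine ⟨K * ∑ l ∈ range (c / 2 + 1), C (b + l),
    mul_nonneg hK (sum_nonneg fun l _ => hC _), fun N hN p hp => ?_⟩
  have hN1 : (1 : ℝ) ≤ N := by exact_mod_cast hN
  have weights (l : ℕ) (hl : l ≤ c / 2) : |∑ i : Fin (k + 1),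
      deleteOneCoeff k N i * ((i : ℝ) ^ b / ((N : ℝ) + i) ^ a) * ((i : ℕ) : ℝ) ^ l| ≤
        C (b + l) * ((N : ℝ) ^ (b + c / 2) / (N : ℝ) ^ a) := by
    calc _ ≤ C (b + l) * ((N : ℝ) ^ (b + l) / (N : ℝ) ^ a) := by
          refine le_of_eq_of_le (congrArg _ (sum_congr rfl fun i _ => ?_)) (hbound (b + l) N hN)
          rw [pow_add]
          ring
      _ ≤ _ := by
          have := hC (b + l)
          gcongr
  rw [mul_assoc, sum_mul]
  exact hpoly p hp univ _ (fun i : Fin (k + 1) => i) _ weights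

theorem binomialMean_increment_pow (p x d : ℝ) (m a : ℕ) :
    binomialMean p m (fun l => (((l : ℝ) - m * x) / d) ^ a) =
      ∑ b ∈ range (a + 1), (a.choose b : ℝ) * (p - x) ^ b *
        ((m : ℝ) ^ b / d ^ a * binomialCentralMoment (a - b) p m) := by
  have h := congrArg ((d ^ a)⁻¹ * ·) (binomialMean_add_central_pow p m a ((m : ℝ) * (p - x)))
  simp only [← binomialMean_const_mul, mul_sum] at h
  convert h using 1
  · refine congrArg _ (funext fun l => ?_)
    rw [div_pow]
    ring
  · exact sum_congr rfl fun b _ => by rw [mul_pow]; ring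

theorem sqrt_pow_mul_pow_div_pow_le {N : ℕ} (hN : 1 ≤ N) {a b : ℕ} (hb : b ≤ a) :
    √(N : ℝ) ^ a * ((N : ℝ) ^ (b + (a - b) / 2) / (N : ℝ) ^ a) ≤ √N ^ b := by
  have hN1 : 1 ≤ √(N : ℝ) := Real.one_le_sqrt.2 (by exact_mod_cast hN)
  rw [← mul_div_assoc, div_le_iff₀ (by positivity), ← Real.sq_sqrt (Nat.cast_nonneg (α := ℝ) N),
    Real.sqrt_sq (Real.sqrt_nonneg _), ← pow_mul, ← pow_mul, ← pow_add, ← pow_add]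
  exact pow_le_pow_right₀ hN1 (by omega)

theorem exists_abs_sum_deleteOneCoeff_mul_increment_pow_le (a : ℕ) :
    ∃ C, 0 ≤ C ∧ ∀ N : ℕ, 1 ≤ N → ∀ p ∈ Set.Icc (0 : ℝ) 1, ∀ x : ℝ,
      √N ^ a * |∑ i : Fin (k + 1), deleteOneCoeff k N i *
          binomialMean p i (fun l => (((l : ℝ) - i * x) / ((N : ℝ) + i)) ^ a)| ≤
        C * (1 + √N * |x - p|) ^ a := by
  choose C hC hbound using fun b =>
    exists_abs_sum_deleteOneCoeff_mul_binomialCentralMoment_le k a b (a - b)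
  refine ⟨∑ b ∈ range (a + 1), C b, sum_nonneg fun b _ => hC b, fun N hN p hp x => ?_⟩
  calc √N ^ a * |∑ i : Fin (k + 1), deleteOneCoeff k N i *
          binomialMean p i (fun l => (((l : ℝ) - i * x) / ((N : ℝ) + i)) ^ a)|
      = √N ^ a * |∑ b ∈ range (a + 1), (a.choose b : ℝ) * (p - x) ^ b *
          ∑ i : Fin (k + 1), deleteOneCoeff k N i * ((i : ℝ) ^ b / ((N : ℝ) + i) ^ a) *
            binomialCentralMoment (a - b) p i| := by
        simp only [binomialMean_increment_pow, mul_sum]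
        rw [sum_comm]
        simp only [mul_assoc, mul_left_comm]
    _ ≤ √N ^ a * ∑ b ∈ range (a + 1), (a.choose b : ℝ) * |x - p| ^ b *
          (C b * ((N : ℝ) ^ (b + (a - b) / 2) / (N : ℝ) ^ a)) := by
        gcongr
        refine (abs_sum_le_sum_abs _ _).trans (sum_le_sum fun b _ => ?_)
        rw [abs_mul, abs_mul, Nat.abs_cast, abs_pow, abs_sub_comm p x]
        gcongr
        exact hbound b N hN p hp
    _ = ∑ b ∈ range (a + 1), C b * ((a.choose b : ℝ) * |x - p| ^ b *
          (√N ^ a * ((N : ℝ) ^ (b + (a - b) / 2) / (N : ℝ) ^ a))) := by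
        rw [mul_sum]
        exact sum_congr rfl fun b _ => by ring
    _ ≤ ∑ b ∈ range (a + 1), (∑ j ∈ range (a + 1), C j) *
          ((a.choose b : ℝ) * |x - p| ^ b * √N ^ b) := by
        refine sum_le_sum fun b hb => ?_
        have hCb := single_le_sum (f := C) (fun j _ => hC j) hb
        have := sqrt_pow_mul_pow_div_pow_le hN (mem_range_succ_iff.1 hb)
        have := (hC b).trans hCb
        gcongr
    _ = (∑ b ∈ range (a + 1), C b) * (1 + √N * |x - p|) ^ a := by
        rw [← mul_sum, add_comm 1, add_pow]
        refine congrArg _ (sum_congr rfl fun b _ => ?_)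
        rw [mul_pow, one_pow]
        ring

end JackknifeOfPowers

section PointwiseBias

/-- The bias at `p` of the delete-1 jackknife with sample sizes `N, N + 1, …, N + k`. -/
noncomputable def deleteOneBias (k N : ℕ) (f : ℝ → ℝ) (p : ℝ) : ℝ :=
  ∑ i : Fin (k + 1), deleteOneCoeff k N i * bernstein' (N + i) f p - f p

theorem bernstein'_eq_binomialMean (m : ℕ) (g : ℝ → ℝ) (p : ℝ) :
    bernstein' m g p = binomialMean p m fun l => g (l / m) :=
  rfl

theorem deleteOneBias_add (k N : ℕ) (f g : ℝ → ℝ) (p : ℝ) :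
    deleteOneBias k N (fun y => f y + g y) p = deleteOneBias k N f p + deleteOneBias k N g p := by
  simp only [deleteOneBias, bernstein'_eq_binomialMean, binomialMean_add, mul_add, sum_add_distrib]
  ring

theorem exists_abs_deleteOneBias_sum_pow_le (k s : ℕ) :
    ∃ C, 0 ≤ C ∧ ∀ N : ℕ, 1 ≤ N → ∀ p ∈ Set.Icc (0 : ℝ) 1, ∀ (L : ℝ) (A : ℕ → ℝ),
      (∀ a < s, |A a| ≤ L) →
        |deleteOneBias k N (fun y => ∑ a ∈ range s, A a * (y - p) ^ a) p| ≤
          C * L * (1 / (N : ℝ) ^ (k + 1)) := by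
  choose C hC hbound using exists_abs_sum_deleteOneCoeff_mul_binomialMean_pow_sub_le k
  refine ⟨∑ a ∈ range s, C a, sum_nonneg fun a _ => hC a, fun N hN p hp L A hA => ?_⟩
  have termwise : deleteOneBias k N (fun y => ∑ a ∈ range s, A a * (y - p) ^ a) p =
      ∑ a ∈ range s, A a * (∑ i : Fin (k + 1), deleteOneCoeff k N i *
        binomialMean p (N + i) (fun l => ((l : ℝ) / (N + i : ℕ) - p) ^ a) - 0 ^ a) := by
    simp only [deleteOneBias, bernstein'_eq_binomialMean, binomialMean_sum, binomialMean_const_mul,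
      sub_self, mul_sub, sum_sub_distrib, mul_sum]
    rw [sum_comm]
    simp only [mul_left_comm]
  rw [termwise, sum_mul, sum_mul]
  refine (abs_sum_le_sum_abs _ _).trans (sum_le_sum fun a ha => ?_)
  have hAa := hA a (mem_range.1 ha)
  rw [abs_mul, mul_comm (C a), mul_assoc, mul_one_div]
  exact mul_le_mul hAa (hbound a N hN p hp) (abs_nonneg _) ((abs_nonneg _).trans hAa)

theorem add_div_add_sub_div {N : ℕ} (hN : 1 ≤ N) (m i l : ℕ) :
    ((m + l : ℕ) : ℝ) / (N + i : ℕ) - (m : ℝ) / N =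
      ((l : ℝ) - i * ((m : ℝ) / N)) / ((N : ℝ) + i) := by
  have : (0 : ℝ) < N := by exact_mod_cast hN
  push_cast
  field_simp
  ring

theorem div_mem_unitInterval_of_le {m N : ℕ} (h : m ≤ N) : (m : ℝ) / N ∈ Set.Icc (0 : ℝ) 1 :=
  ⟨by positivity, div_le_one_of_le₀ (by exact_mod_cast h) (by positivity)⟩

theorem abs_add_div_add_sub_div_le {N m i l k : ℕ} (hN : 1 ≤ N) (hm : m ≤ N) (hl : l ≤ i)
    (hi : i ≤ k) : |((m + l : ℕ) : ℝ) / (N + i : ℕ) - (m : ℝ) / N| ≤ k / N := by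
  have hN0 : (0 : ℝ) < N := by exact_mod_cast hN
  have hx := div_mem_unitInterval_of_le hm
  have hl' : (l : ℝ) ≤ i := by exact_mod_cast hl
  have hi' : (i : ℝ) ≤ k := by exact_mod_cast hi
  rw [add_div_add_sub_div hN, abs_div, abs_of_pos (by positivity : (0 : ℝ) < N + i)]
  have numerator : |(l : ℝ) - i * ((m : ℝ) / N)| ≤ i :=
    abs_sub_le_of_nonneg_of_le (by positivity) hl' (by positivity)
      (mul_le_of_le_one_right (by positivity) hx.2)
  exact div_le_div₀ (by positivity) (numerator.trans hi') hN0
    (le_add_of_nonneg_right (by positivity))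

theorem exists_abs_sum_mul_increment_le (k s : ℕ) :
    ∃ C, 0 ≤ C ∧ ∀ N : ℕ, 1 ≤ N → ∀ p ∈ Set.Icc (0 : ℝ) 1, ∀ (L x : ℝ) (c : ℕ → ℝ), 0 ≤ L →
      (∀ a < s, |c a| ≤ L * |x - p| ^ (s - a)) →
        |∑ a ∈ range s, c a * ∑ i : Fin (k + 1), deleteOneCoeff k N i *
            binomialMean p i (fun l => (((l : ℝ) - i * x) / ((N : ℝ) + i)) ^ a)| ≤
          C * L * (1 / √N ^ s * (1 + √N * |x - p|) ^ s) := by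
  choose C hC hbound using exists_abs_sum_deleteOneCoeff_mul_increment_pow_le k
  refine ⟨∑ a ∈ range s, C a, sum_nonneg fun a _ => hC a, fun N hN p hp L x c hL hc => ?_⟩
  have : (0 : ℝ) < N := by exact_mod_cast hN
  set u := √N * |x - p| with hu
  have : 0 ≤ u := by positivity
  rw [sum_mul, sum_mul]
  refine (abs_sum_le_sum_abs _ _).trans (sum_le_sum fun a ha => ?_)
  have has : a < s := mem_range.1 ha
  have coeff_le : √N ^ (s - a) * |c a| ≤ L * (1 + u) ^ (s - a) :=
    calc √N ^ (s - a) * |c a| ≤ √N ^ (s - a) * (L * |x - p| ^ (s - a)) := by gcongr; exact hc a has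
      _ = L * u ^ (s - a) := by rw [hu, mul_pow]; ring
      _ ≤ L * (1 + u) ^ (s - a) := by gcongr; linarith
  have product_le := mul_le_mul coeff_le (hbound a N hN p hp x) (by positivity) (by positivity)
  rw [one_div_mul_eq_div, mul_div_assoc', le_div_iff₀ (by positivity), abs_mul]
  convert product_le using 1
  · rw [← Nat.sub_add_cancel has.le, pow_add, Nat.add_sub_cancel]
    ring
  · rw [← hu, ← Nat.sub_add_cancel has.le, pow_add, Nat.add_sub_cancel]
    ring

theorem exists_abs_sum_deleteOneCoeff_mul_remainder_le (k s : ℕ) :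
    ∃ C, 0 ≤ C ∧ ∀ N : ℕ, 1 ≤ N → ∀ p ∈ Set.Icc (0 : ℝ) 1, ∀ m ≤ N, ∀ (L : ℝ) (ρ : ℝ → ℝ), 0 ≤ L →
      (∀ y ∈ Set.Icc (0 : ℝ) 1, |ρ y| ≤ L * |y - (m : ℝ) / N| ^ s) →
        |∑ i : Fin (k + 1), deleteOneCoeff k N i *
            binomialMean p i (fun l => ρ ((m + l : ℕ) / (N + i : ℕ)))| ≤
          C * L * ((N : ℝ) ^ k / (N : ℝ) ^ s) := by
  obtain ⟨C, hC, hcoeff⟩ := exists_sum_abs_deleteOneCoeff_le k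
  refine ⟨C * k ^ s, by positivity, fun N hN p hp m hm L ρ hL hρ => ?_⟩
  have hmean (i : Fin (k + 1)) :
      |binomialMean p i (fun l => ρ ((m + l : ℕ) / (N + i : ℕ)))| ≤ L * ((k : ℝ) / N) ^ s :=
    abs_binomialMean_le_of_forall_le hp fun l hl =>
      (hρ _ (div_mem_unitInterval_of_le (by omega))).trans <| by
        gcongr
        exact abs_add_div_add_sub_div_le hN hm hl i.is_le
  calc _ ≤ ∑ i, |deleteOneCoeff k N i| * (L * ((k : ℝ) / N) ^ s) := by
        refine (abs_sum_le_sum_abs _ _).trans (sum_le_sum fun i _ => ?_)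
        rw [abs_mul]
        exact mul_le_mul_of_nonneg_left (hmean i) (abs_nonneg _)
    _ ≤ C * (N : ℝ) ^ k * (L * ((k : ℝ) / N) ^ s) := by
        rw [← sum_mul]
        exact mul_le_mul_of_nonneg_right (hcoeff N hN) (by positivity)
    _ = _ := by rw [div_pow]; ring

-- Given `m` successes in the first `N` trials, the proportion after `i` further trials stays within
-- `k / N` of `m / N`, and `g` is expanded around `m / N`.
theorem exists_abs_sum_deleteOneCoeff_mul_conditional_mean_le (k s : ℕ) :
    ∃ C, 0 ≤ C ∧ ∀ N : ℕ, 1 ≤ N → ∀ p ∈ Set.Icc (0 : ℝ) 1, ∀ (L : ℝ) (g : ℝ → ℝ),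
      FlatAt s L p g → ∀ m ≤ N,
        |∑ i : Fin (k + 1), deleteOneCoeff k N i *
            binomialMean p i (fun l => g ((m + l : ℕ) / (N + i : ℕ)))| ≤
          C * L * (1 / √N ^ s * (1 + √N * |(m : ℝ) / N - p|) ^ s + (N : ℝ) ^ k / (N : ℝ) ^ s) := by
  obtain ⟨C₁, hC₁, hmain⟩ := exists_abs_sum_mul_increment_le k s
  obtain ⟨C₂, hC₂, hremainder⟩ := exists_abs_sum_deleteOneCoeff_mul_remainder_le k s
  refine ⟨C₁ + C₂, by positivity, fun N hN p hp L g hg m hm => ?_⟩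
  have hL := hg.nonneg
  obtain ⟨c, hc, hrem⟩ := hg _ (div_mem_unitInterval_of_le hm)
  set x := (m : ℝ) / N with hx
  set ρ := fun y => g y - ∑ a ∈ range s, c a * (y - x) ^ a with hρ
  have split : ∑ i : Fin (k + 1), deleteOneCoeff k N i *
        binomialMean p i (fun l => g ((m + l : ℕ) / (N + i : ℕ))) =
      ∑ a ∈ range s, c a * ∑ i : Fin (k + 1), deleteOneCoeff k N i *
        binomialMean p i (fun l => (((l : ℝ) - i * x) / ((N : ℝ) + i)) ^ a) +
      ∑ i : Fin (k + 1), deleteOneCoeff k N i *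
        binomialMean p i (fun l => ρ ((m + l : ℕ) / (N + i : ℕ))) := by
    have hg_eq (y : ℝ) : g y = ∑ a ∈ range s, c a * (y - x) ^ a + ρ y := by rw [hρ]; ring
    simp only [hg_eq, hx, add_div_add_sub_div hN, binomialMean_add, binomialMean_sum,
      binomialMean_const_mul, mul_add, sum_add_distrib, mul_sum]
    rw [sum_comm]
    simp only [mul_left_comm]
  rw [split, mul_add]
  refine (abs_add_le _ _).trans (add_le_add ?_ ?_)
  · exact (hmain N hN p hp L x c hL hc).trans (by gcongr; exact le_add_of_nonneg_right hC₂)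
  · exact (hremainder N hN p hp m hm L ρ hL hrem).trans
      (by gcongr; exact le_add_of_nonneg_left hC₁)

theorem sum_deleteOneCoeff_mul_bernstein' (k N : ℕ) (g : ℝ → ℝ) (p : ℝ) :
    ∑ i : Fin (k + 1), deleteOneCoeff k N i * bernstein' (N + i) g p =
      binomialMean p N fun m => ∑ i : Fin (k + 1), deleteOneCoeff k N i *
        binomialMean p i fun l => g ((m + l : ℕ) / (N + i : ℕ)) := by
  simp only [bernstein'_eq_binomialMean, binomialMean_sum, binomialMean_const_mul,
    binomialMean_add_trials]

theorem exists_abs_deleteOneBias_le_of_flatAt (k s : ℕ) :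
    ∃ C, 0 ≤ C ∧ ∀ N : ℕ, 1 ≤ N → ∀ p ∈ Set.Icc (0 : ℝ) 1, ∀ (L : ℝ) (g : ℝ → ℝ),
      FlatAt s L p g →
        |deleteOneBias k N g p| ≤ C * L * (1 / √N ^ s + (N : ℝ) ^ k / (N : ℝ) ^ s) := by
  obtain ⟨C₁, hC₁, hcond⟩ := exists_abs_sum_deleteOneCoeff_mul_conditional_mean_le k s
  obtain ⟨C₂, hC₂, hdev⟩ := exists_binomialMean_one_add_sqrt_mul_abs_pow_le s
  refine ⟨C₁ * (C₂ + 1) + 1, by positivity, fun N hN p hp L g hg => ?_⟩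
  have hL := hg.nonneg
  set U := 1 / √(N : ℝ) ^ s
  set V := (N : ℝ) ^ k / (N : ℝ) ^ s with hV
  have hU0 : 0 ≤ U := by positivity
  have hV0 : 0 ≤ V := by positivity
  have mean_le : |∑ i : Fin (k + 1), deleteOneCoeff k N i * bernstein' (N + i) g p| ≤
      C₁ * L * (U * C₂ + V) := by
    rw [sum_deleteOneCoeff_mul_bernstein']
    refine (abs_binomialMean_le hp (hcond N hN p hp L g hg)).trans ?_
    rw [binomialMean_const_mul, binomialMean_add, binomialMean_const_mul, binomialMean_const]
    gcongr
    exact hdev p hp N hN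
  have value_le : |g p| ≤ L * V := by
    refine (hg.abs_apply_le hp).trans (mul_le_mul_of_nonneg_left ?_ hL)
    rcases s.eq_zero_or_pos with rfl | hs
    · simpa [hV] using one_le_pow₀ (by exact_mod_cast hN : (1 : ℝ) ≤ N)
    · rwa [zero_pow hs.ne']
  refine (abs_sub _ _).trans ((add_le_add mean_le value_le).trans ?_)
  have hC₁L : 0 ≤ C₁ * L := by positivity
  nlinarith [mul_nonneg hC₁L hU0, mul_nonneg hL hU0, mul_nonneg (mul_nonneg hC₁L hC₂) hV0]

theorem CondD.exists_abs_deleteOneBias_le (k s : ℕ) :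
    ∃ C, 0 ≤ C ∧ ∀ (L : ℝ) (f : ℝ → ℝ), CondD s L f → ∀ N : ℕ, 1 ≤ N → ∀ p ∈ Set.Icc (0 : ℝ) 1,
      |deleteOneBias k N f p| ≤
        C * L * (1 / (N : ℝ) ^ (k + 1) + (1 / √N ^ s + (N : ℝ) ^ k / (N : ℝ) ^ s)) := by
  obtain ⟨C₁, hC₁, hpoly⟩ := exists_abs_deleteOneBias_sum_pow_le k s
  obtain ⟨C₂, hC₂, hflat⟩ := exists_abs_deleteOneBias_le_of_flatAt k s
  refine ⟨C₁ + C₂, by positivity, fun L f hf N hN p hp => ?_⟩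
  have hL := hf.nonneg
  obtain ⟨A, hA, hg⟩ := hf.exists_flatAt_sub hp
  have split := deleteOneBias_add k N (fun y => ∑ a ∈ range s, A a * (y - p) ^ a)
    (fun y => f y - ∑ a ∈ range s, A a * (y - p) ^ a) p
  simp only [add_sub_cancel] at split
  rw [split, mul_add]
  refine (abs_add_le _ _).trans (add_le_add ?_ ?_)
  · exact (hpoly N hN p hp L A hA).trans (by gcongr; exact le_add_of_nonneg_right hC₂)
  · exact (hflat N hN p hp L _ hg).trans (by gcongr; exact le_add_of_nonneg_left hC₁)

end PointwiseBias

section Rate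

/-- The exponent of `n` in the bound on the delete-1 `r`-jackknife bias under `D_s`: the largest of
the exponents due to the Taylor polynomial at `p`, to the deviation of the sample proportion from
`p`, and to the Taylor remainder at the sample proportion. -/
noncomputable def deleteOneRate (r s : ℕ) : ℝ :=
  max (-r) (max (-(s / 2)) (r - 1 - s))

theorem deleteOneRate_of_le {r s : ℕ} (hr : 1 ≤ r) (hs : s ≤ 2 * r - 2) :
    deleteOneRate r s = r - s - 1 := by
  have hs' : (s : ℝ) + 2 ≤ 2 * r := by exact_mod_cast (by omega : s + 2 ≤ 2 * r)
  rw [deleteOneRate, max_eq_right (a := -((s : ℝ) / 2)) (by linarith), max_eq_right (by linarith)]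
  ring

theorem deleteOneRate_of_eq {r s : ℕ} (hr : 1 ≤ r) (hs : s = 2 * r - 1) :
    deleteOneRate r s = -(r - 1 / 2) := by
  have hs' : (s : ℝ) + 1 = 2 * r := by exact_mod_cast (by omega : s + 1 = 2 * r)
  rw [deleteOneRate, max_eq_left (a := -((s : ℝ) / 2)) (by linarith), max_eq_right (by linarith)]
  linarith

theorem deleteOneRate_of_ge {r s : ℕ} (hs : 2 * r ≤ s) : deleteOneRate r s = -r := by
  have hs' : 2 * (r : ℝ) ≤ s := by exact_mod_cast hs
  exact max_eq_left (max_le (by linarith) (by linarith))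

theorem one_div_pow_add_le_rpow_deleteOneRate {k s N : ℕ} (hN : 1 ≤ N) :
    1 / (N : ℝ) ^ (k + 1) + (1 / √N ^ s + (N : ℝ) ^ k / (N : ℝ) ^ s) ≤
      3 * (N : ℝ) ^ deleteOneRate (k + 1) s := by
  have hN1 : (1 : ℝ) ≤ N := by exact_mod_cast hN
  have hN0 : (0 : ℝ) < N := one_pos.trans_le hN1
  have polynomial_part : 1 / (N : ℝ) ^ (k + 1) ≤ (N : ℝ) ^ deleteOneRate (k + 1) s := by
    rw [one_div, ← Real.rpow_natCast, ← Real.rpow_neg hN0.le]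
    exact Real.rpow_le_rpow_of_exponent_le hN1 (le_max_left _ _)
  have deviation_part : 1 / √N ^ s ≤ (N : ℝ) ^ deleteOneRate (k + 1) s := by
    rw [Real.sqrt_eq_rpow, ← Real.rpow_mul_natCast hN0.le, one_div_mul_eq_div, one_div,
      ← Real.rpow_neg hN0.le]
    exact Real.rpow_le_rpow_of_exponent_le hN1 ((le_max_left _ _).trans (le_max_right _ _))
  have remainder_part : (N : ℝ) ^ k / (N : ℝ) ^ s ≤ (N : ℝ) ^ deleteOneRate (k + 1) s := by
    rw [← Real.rpow_natCast, ← Real.rpow_natCast, ← Real.rpow_sub hN0]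
    refine Real.rpow_le_rpow_of_exponent_le hN1 (le_trans ?_ ((le_max_right _ _).trans
      (le_max_right _ _)))
    simp
  linarith

theorem rpow_le_rpow_abs_mul_rpow {x y c : ℝ} (hx : 0 < x) (hxy : x ≤ y) (hyx : y ≤ c * x)
    (e : ℝ) : x ^ e ≤ c ^ |e| * y ^ e := by
  have hy : 0 < y := hx.trans_le hxy
  have hc : 1 ≤ c := le_of_mul_le_mul_right ((one_mul x).trans_le (hxy.trans hyx)) hx
  rcases le_total 0 e with he | he
  · exact (Real.rpow_le_rpow hx.le hxy he).trans
      (le_mul_of_one_le_left (by positivity) (Real.one_le_rpow hc (abs_nonneg e)))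
  · calc x ^ e = c ^ |e| * (c * x) ^ e := by
          rw [Real.mul_rpow (by positivity) hx.le, ← mul_assoc, abs_of_nonpos he,
            ← Real.rpow_add (by positivity), neg_add_cancel, Real.rpow_zero, one_mul]
      _ ≤ c ^ |e| * y ^ e := by
          gcongr ?_ * ?_
          exact Real.rpow_le_rpow_of_nonpos hy hyx he

theorem jackBias_le_of_forall_abs_deleteOneBias_le {k N : ℕ} {f : ℝ → ℝ} {B : ℝ}
    (h : ∀ p ∈ Set.Icc (0 : ℝ) 1, |deleteOneBias k N f p| ≤ B) :
    jackBias (fun i : Fin (k + 1) => N + i.val) f ≤ B :=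
  csSup_le ((Set.nonempty_Icc.2 zero_le_one).image _) (Set.forall_mem_image.2 h)

theorem CondD.exists_jackBias_le_rpow {r : ℕ} (hr : 1 ≤ r) (s : ℕ) :
    ∃ C > 0, ∀ (L : ℝ) (f : ℝ → ℝ), CondD s L f → ∀ n : ℕ, r ≤ n →
      jackBias (fun i : Fin r => n - r + 1 + i.val) f ≤ C * L * (n : ℝ) ^ deleteOneRate r s := by
  obtain ⟨k, rfl⟩ := Nat.exists_eq_add_of_le' hr
  obtain ⟨C, hC, hbias⟩ := CondD.exists_abs_deleteOneBias_le k s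
  set e := deleteOneRate (k + 1) s
  set K := ((k + 1 : ℕ) : ℝ) ^ |e|
  refine ⟨C * 3 * K + 1, by positivity, fun L f hf n hn =>
    jackBias_le_of_forall_abs_deleteOneBias_le fun p hp => ?_⟩
  set N := n - (k + 1) + 1 with hN_def
  have hN : 1 ≤ N := Nat.le_add_left _ _
  have hNn : (N : ℝ) ≤ n := by exact_mod_cast (by omega : N ≤ n)
  have hnN : (n : ℝ) ≤ (k + 1 : ℕ) * (N : ℝ) := by
    exact_mod_cast (by nlinarith [Nat.sub_add_cancel hn] : n ≤ (k + 1) * N)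
  have hL := hf.nonneg
  have rate_le : (N : ℝ) ^ e ≤ K * (n : ℝ) ^ e :=
    rpow_le_rpow_abs_mul_rpow (by exact_mod_cast hN) hNn hnN e
  calc |deleteOneBias k N f p|
      ≤ C * L * (1 / (N : ℝ) ^ (k + 1) + (1 / √N ^ s + (N : ℝ) ^ k / (N : ℝ) ^ s)) :=
        hbias L f hf N hN p hp
    _ ≤ C * L * (3 * (K * (n : ℝ) ^ e)) := by
        gcongr
        exact (one_div_pow_add_le_rpow_deleteOneRate hN).trans (by gcongr)
    _ = C * 3 * K * L * (n : ℝ) ^ e := by ring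
    _ ≤ (C * 3 * K + 1) * L * (n : ℝ) ^ e := by gcongr; exact le_add_of_nonneg_right zero_le_one

end Rate

theorem delete_one_jackknife_Ds_upper_general (r s : ℕ) (hr : 1 ≤ r) :
    ∃ C > 0, ∀ (L : ℝ) (f : ℝ → ℝ), CondD s L f → ∀ n : ℕ, r ≤ n →
      (s ≤ 2 * r - 2 →
        jackBias (fun i : Fin r => n - r + 1 + i.val) f ≤
          C * L * (n : ℝ) ^ ((r : ℝ) - (s : ℝ) - 1)) ∧
      (s = 2 * r - 1 →
        jackBias (fun i : Fin r => n - r + 1 + i.val) f ≤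
          C * L * (n : ℝ) ^ (-((r : ℝ) - 1 / 2))) ∧
      (2 * r ≤ s →
        jackBias (fun i : Fin r => n - r + 1 + i.val) f ≤
          C * L * (n : ℝ) ^ (-(r : ℝ))) := by
  obtain ⟨C, hC, hbias⟩ := CondD.exists_jackBias_le_rpow hr s
  refine ⟨C, hC, fun L f hf n hn => ⟨fun hs => ?_, fun hs => ?_, fun hs => ?_⟩⟩
  · exact deleteOneRate_of_le hr hs ▸ hbias L f hf n hn
  · exact deleteOneRate_of_eq hr hs ▸ hbias L f hf n hn
  · exact deleteOneRate_of_ge hs ▸ hbias L f hf n hn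

/-- upper bounds on the delete-1 `r`-jackknife bias for `f` satisfying
condition `D_s` with parameter `L`: `O(n^{r-s-1})` for `0 ≤ s ≤ 2r-2`, `O(n^{-(r-1/2)})`
for `s = 2r-1`, and `O(n^{-r})` for `s ≥ 2r`. -/
theorem delete_one_jackknife_Ds_upper (r s : ℕ) (hr : 1 ≤ r) (L : ℝ) (hL : 0 < L) :
    ∃ c > 0, ∀ f : ℝ → ℝ, CondD s L f → ∀ n : ℕ, 2 * r ≤ n →
      (s ≤ 2 * r - 2 →
        jackBias (fun i : Fin r => n - r + 1 + i.val) f ≤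
          c * (n : ℝ) ^ ((r : ℝ) - (s : ℝ) - 1)) ∧
      (s = 2 * r - 1 →
        jackBias (fun i : Fin r => n - r + 1 + i.val) f ≤
          c * (n : ℝ) ^ (-((r : ℝ) - 1 / 2))) ∧
      (2 * r ≤ s →
        jackBias (fun i : Fin r => n - r + 1 + i.val) f ≤
          c * (n : ℝ) ^ (-(r : ℝ))) := by
  obtain ⟨C, hC, hbias⟩ := delete_one_jackknife_Ds_upper_general r s hr
  exact ⟨C * L, mul_pos hC hL, fun f hf n hn => hbias L f hf n (by omega)⟩
end

section
/- There exists a universal constant c > 0 such that for all integers 2 ≤ n_1 < n_2, with jackknife coefficients C_1 = n_1/(n_1 − n_2) and C_2 = n_2/(n_2 − n_1): (i) for f(p) = −p ln p (with f(0) = 0), sup_{p∈[0,1]} |C_1 B_{n_1}[f](p) + C_2 B_{n_2}[f](p) − f(p)| ≤ c/n_2; (ii) for each 0 < α < 1 there exists a constant c(α) > 0 such that for f(p) = p^α, sup_{p∈[0,1]} |C_1 B_{n_1}[f](p) + C_2 B_{n_2}[f](p) − f(p)| ≤ c(α)/n_2^α. -/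
/-- Sup over `p ∈ [0,1]` of the 2-jackknife bias with sample sizes `n₁ < n₂` and
coefficients `C₁ = n₁/(n₁−n₂)`, `C₂ = n₂/(n₂−n₁)`. -/
noncomputable def jack2Bias (n₁ n₂ : ℕ) (f : ℝ → ℝ) : ℝ :=
  sSup ((fun p =>
    |((n₁ : ℝ) / ((n₁ : ℝ) - (n₂ : ℝ))) * bernstein' n₁ f p +
      ((n₂ : ℝ) / ((n₂ : ℝ) - (n₁ : ℝ))) * bernstein' n₂ f p - f p|) '' Set.Icc (0:ℝ) 1)

/-!
The `n + 1` delete-one subsamples of a sample of size `n + 1` are samples of size `n`. Hence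
`B_{n+1} f - B_n f` is a binomial mean of the delete-one gaps: the value of `f` at the empirical
frequency `j / (n + 1)` minus its average over the frequencies `(j - 1) / n` and `j / n` of the
subsamples. Concavity of `f` makes every gap nonnegative. Tangent-line estimates bound it above, for
*every* `j`, by a telescoping difference `ε n - ε (n + 1)`, where `ε n = 1 / n` for the entropy and
`ε n = (1 - α) / (α n ^ α)` for the power. Thus `B_n f` is nondecreasing, `B_n f + ε n` is
nonincreasing, and both tend to `f`. Writing the 2-jackknife bias as
`(B_{n₂} f - f) + n₁ / (n₂ - n₁) * (B_{n₂} f - B_{n₁} f)`, the first term lies in `[-ε n₂, 0]` and,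
since `n * ε n` is nondecreasing, the second lies in `[0, ε n₂]`.
-/

open Filter Set Topology

theorem sum_binomial_mul_mem {s : Set ℝ} (hs : Convex ℝ s) {m : ℕ} {p : ℝ} (hp : p ∈ Icc (0 : ℝ) 1)
    {g : ℕ → ℝ} (hg : ∀ j ≤ m, g j ∈ s) :
    ∑ j ∈ Finset.range (m + 1), (m.choose j : ℝ) * p ^ j * (1 - p) ^ (m - j) * g j ∈ s := by
  have hp0 := hp.1
  have hp1 : 0 ≤ 1 - p := sub_nonneg.2 hp.2
  refine hs.sum_mem (fun j _ => by positivity) ?_ fun j hj => hg j (Finset.mem_range_succ_iff.1 hj)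
  calc ∑ j ∈ Finset.range (m + 1), (m.choose j : ℝ) * p ^ j * (1 - p) ^ (m - j)
      = (p + (1 - p)) ^ m := by
        rw [add_pow]
        exact Finset.sum_congr rfl fun j _ => by ring
    _ = 1 := by rw [add_sub_cancel, one_pow]

theorem tendsto_bernstein' {f : ℝ → ℝ} (hf : ContinuousOn f (Icc 0 1)) {p : ℝ}
    (hp : p ∈ Icc (0 : ℝ) 1) :
    Tendsto (fun n => bernstein' n f p) atTop (𝓝 (f p)) := by
  let F : C(Icc (0 : ℝ) 1, ℝ) := ⟨(Icc (0 : ℝ) 1).domRestrict f, hf.domRestrict⟩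
  have hF : ∀ n, bernsteinApproximation n F ⟨p, hp⟩ = bernstein' n f p := fun n => by
    simp [F, bernsteinApproximation.apply, bernstein_apply, bernstein', bernstein.z,
      Finset.sum_range]
  exact (((continuous_eval_const (⟨p, hp⟩ : Icc (0 : ℝ) 1)).tendsto F).comp
    (bernsteinApproximation_uniform F)).congr hF

/-- The gap between the value of `f` on a sample of size `n + 1` with `j` successes and the average
of its values on the `n + 1` subsamples obtained by deleting one observation: `j` of these
have `j - 1` successes and the others have `j`. The argument `(j - 1) / n` is a real number, which
for `j = 0` lies outside `[0, 1]` but then has weight zero. -/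
noncomputable def deleteOneGap (f : ℝ → ℝ) (n j : ℕ) : ℝ :=
  f (j / (n + 1)) - (j / (n + 1) * f ((j - 1) / n) + (1 - j / (n + 1)) * f (j / n))

theorem bernstein'_eq_sum_deleteOne (n : ℕ) (f : ℝ → ℝ) (p : ℝ) :
    bernstein' n f p =
      ∑ j ∈ Finset.range (n + 1 + 1), ((n + 1).choose j : ℝ) * p ^ j * (1 - p) ^ (n + 1 - j) *
        ((j : ℝ) / (n + 1) * f ((j - 1) / n) + (1 - j / (n + 1)) * f (j / n)) := by
  have hsuccess : p * bernstein' n f p =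
      ∑ j ∈ Finset.range (n + 1 + 1), ((n + 1).choose j : ℝ) * p ^ j * (1 - p) ^ (n + 1 - j) *
        ((j : ℝ) / (n + 1) * f ((j - 1) / n)) := by
    rw [bernstein', Finset.mul_sum, Finset.sum_range_succ' _ (n + 1)]
    simp only [Nat.cast_zero, zero_div, zero_mul, mul_zero, add_zero]
    refine Finset.sum_congr rfl fun k _ => ?_
    have hchoose : ((n : ℝ) + 1) * n.choose k = (n + 1).choose (k + 1) * (k + 1) :=
      mod_cast Nat.add_one_mul_choose_eq n k
    rw [Nat.add_sub_add_right, Nat.cast_succ, add_sub_cancel_right]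
    field_simp
    linear_combination p ^ (k + 1) * (1 - p) ^ (n - k) * f (k / n) * hchoose
  have hfailure : (1 - p) * bernstein' n f p =
      ∑ j ∈ Finset.range (n + 1 + 1), ((n + 1).choose j : ℝ) * p ^ j * (1 - p) ^ (n + 1 - j) *
        ((1 - (j : ℝ) / (n + 1)) * f (j / n)) := by
    have hlast : 1 - ((n + 1 : ℕ) : ℝ) / (n + 1) = 0 := by
      rw [Nat.cast_succ, div_self n.cast_add_one_ne_zero, sub_self]
    rw [bernstein', Finset.mul_sum, Finset.sum_range_succ _ (n + 1), hlast, zero_mul, mul_zero,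
      add_zero]
    refine Finset.sum_congr rfl fun k hk => ?_
    have hkn : k ≤ n := Finset.mem_range_succ_iff.1 hk
    have hchoose : (n.choose k : ℝ) * (n + 1) = (n + 1).choose k * (n + 1 - k) := by
      have h := congrArg (Nat.cast (R := ℝ)) (Nat.choose_mul_succ_eq n k)
      rwa [Nat.cast_mul, Nat.cast_mul, Nat.cast_sub (by omega), Nat.cast_succ] at h
    rw [Nat.succ_sub hkn, pow_succ]
    field_simp
    linear_combination p ^ k * (1 - p) ^ (n - k) * (1 - p) * f (k / n) * hchoose
  simp only [mul_add, Finset.sum_add_distrib]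
  rw [← hsuccess, ← hfailure]
  ring

theorem bernstein'_succ_sub (n : ℕ) (f : ℝ → ℝ) (p : ℝ) :
    bernstein' (n + 1) f p - bernstein' n f p =
      ∑ j ∈ Finset.range (n + 1 + 1),
        ((n + 1).choose j : ℝ) * p ^ j * (1 - p) ^ (n + 1 - j) * deleteOneGap f n j := by
  rw [bernstein'_eq_sum_deleteOne n, bernstein', ← Finset.sum_sub_distrib]
  simp only [deleteOneGap, mul_sub, Nat.cast_succ]

theorem deleteOneGap_zero (f : ℝ → ℝ) (n : ℕ) : deleteOneGap f n 0 = 0 := by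
  simp [deleteOneGap]

theorem deleteOneGap_nonneg {f : ℝ → ℝ} (hf : ConcaveOn ℝ (Icc 0 1) f) {n j : ℕ} (hn : 1 ≤ n)
    (hj : j ≤ n + 1) : 0 ≤ deleteOneGap f n j := by
  have hn0 : (0 : ℝ) < n := mod_cast hn
  rcases j.eq_zero_or_pos with rfl | hj0
  · exact (deleteOneGap_zero f n).ge
  rcases hj.eq_or_lt with rfl | hjn
  · have : (n : ℝ) + 1 ≠ 0 := by positivity
    simp [deleteOneGap, div_self this, div_self hn0.ne']
  have hj1 : (1 : ℝ) ≤ j := mod_cast hj0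
  have hjn' : (j : ℝ) ≤ n := mod_cast Nat.lt_succ_iff.1 hjn
  have hprev : ((j : ℝ) - 1) / n ∈ Icc (0 : ℝ) 1 :=
    ⟨div_nonneg (by linarith) hn0.le, (div_le_one hn0).2 (by linarith)⟩
  have hcurr : (j : ℝ) / n ∈ Icc (0 : ℝ) 1 := ⟨by positivity, (div_le_one hn0).2 hjn'⟩
  have hweight : (j : ℝ) / (n + 1) ≤ 1 := (div_le_one (by positivity)).2 (by linarith)
  have hjensen := hf.2 hprev hcurr (by positivity) (sub_nonneg.2 hweight) (add_sub_cancel _ _)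
  have hmean : (j : ℝ) / (n + 1) * ((j - 1) / n) + (1 - j / (n + 1)) * (j / n) = j / (n + 1) := by
    field_simp
    ring
  simp only [smul_eq_mul, hmean] at hjensen
  exact sub_nonneg.2 hjensen

theorem bernstein'_succ_sub_mem {f : ℝ → ℝ} (hf : ConcaveOn ℝ (Icc 0 1) f) {n : ℕ} (hn : 1 ≤ n)
    {δ : ℝ} (hgap : ∀ j ≤ n + 1, deleteOneGap f n j ≤ δ) {p : ℝ} (hp : p ∈ Icc (0 : ℝ) 1) :
    bernstein' (n + 1) f p - bernstein' n f p ∈ Icc 0 δ := by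
  rw [bernstein'_succ_sub]
  exact sum_binomial_mul_mem (convex_Icc 0 δ) hp fun j hj =>
    ⟨deleteOneGap_nonneg hf hn hj, hgap j hj⟩

theorem abs_jackknife_sub_limit_le {b ε : ℕ → ℝ} {L : ℝ}
    (hstep : ∀ n ≥ 1, b (n + 1) - b n ∈ Icc 0 (ε n - ε (n + 1)))
    (hb : Tendsto b atTop (𝓝 L)) (hε : Tendsto ε atTop (𝓝 0))
    (hmono : MonotoneOn (fun n : ℕ => n * ε n) (Ici 1)) {n₁ n₂ : ℕ} (h1 : 1 ≤ n₁) (h12 : n₁ < n₂) :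
    |(n₁ : ℝ) / (n₁ - n₂) * b n₁ + n₂ / (n₂ - n₁) * b n₂ - L| ≤ ε n₂ := by
  have h2 : 1 ≤ n₂ := h1.trans h12.le
  have hd : (0 : ℝ) < n₂ - n₁ := sub_pos.2 (mod_cast h12)
  have hb_mono : MonotoneOn b {n | 1 ≤ n} :=
    monotoneOn_nat_Ici_of_le_succ fun n hn => sub_nonneg.1 (hstep n hn).1
  have hbε_anti : AntitoneOn (fun n => b n + ε n) {n | 1 ≤ n} :=
    antitoneOn_nat_Ici_of_succ_le fun n hn => by linarith [(hstep n hn).2]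
  have hle : b n₂ ≤ L := ge_of_tendsto hb <| (eventually_ge_atTop n₂).mono fun n hn =>
    hb_mono h2 (h2.trans hn) hn
  have hge : L ≤ b n₂ + ε n₂ := le_of_tendsto (by simpa using hb.add hε) <|
    (eventually_ge_atTop n₂).mono fun n hn => hbε_anti h2 (h2.trans hn) hn
  have hdecomp : (n₁ : ℝ) / (n₁ - n₂) * b n₁ + n₂ / (n₂ - n₁) * b n₂ - L =
      (b n₂ - L) + n₁ * (b n₂ - b n₁) / (n₂ - n₁) := by
    rw [← neg_sub (n₂ : ℝ) n₁, div_neg]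
    field_simp
    ring
  have hcorr_nonneg : 0 ≤ n₁ * (b n₂ - b n₁) / (n₂ - n₁) :=
    div_nonneg (mul_nonneg n₁.cast_nonneg (sub_nonneg.2 (hb_mono h1 h2 h12.le))) hd.le
  have hcorr_le : n₁ * (b n₂ - b n₁) / (n₂ - n₁) ≤ ε n₂ := by
    rw [div_le_iff₀ hd]
    calc n₁ * (b n₂ - b n₁) ≤ n₁ * (ε n₁ - ε n₂) := by
          gcongr ?_ * ?_
          linarith [hbε_anti h1 h2 h12.le]
      _ = n₁ * ε n₁ - n₁ * ε n₂ := mul_sub _ _ _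
      _ ≤ n₂ * ε n₂ - n₁ * ε n₂ := sub_le_sub_right (hmono h1 h2 h12.le) _
      _ = ε n₂ * (n₂ - n₁) := by ring
  rw [hdecomp, abs_le]
  constructor <;> linarith

theorem jack2Bias_le_of_deleteOneGap_le {f : ℝ → ℝ} (hcont : ContinuousOn f (Icc 0 1))
    (hconc : ConcaveOn ℝ (Icc 0 1) f) {ε : ℕ → ℝ}
    (hgap : ∀ n ≥ 1, ∀ j ≤ n + 1, deleteOneGap f n j ≤ ε n - ε (n + 1))
    (hε : Tendsto ε atTop (𝓝 0)) (hmono : MonotoneOn (fun n : ℕ => n * ε n) (Ici 1)) {n₁ n₂ : ℕ}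
    (h1 : 1 ≤ n₁) (h12 : n₁ < n₂) : jack2Bias n₁ n₂ f ≤ ε n₂ := by
  refine csSup_le ((nonempty_Icc.2 zero_le_one).image _) ?_
  rintro _ ⟨p, hp, rfl⟩
  exact abs_jackknife_sub_limit_le (fun n hn => bernstein'_succ_sub_mem hconc hn (hgap n hn) hp)
    (tendsto_bernstein' hcont hp) hε hmono h1 h12

theorem log_sub_log_le {x y : ℝ} (hx : 0 < x) (hy : 0 < y) :
    Real.log y - Real.log x ≤ (y - x) / x := by
  rw [← Real.log_div hy.ne' hx.ne', sub_div, div_self hx.ne']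
  exact Real.log_le_sub_one_of_pos (div_pos hy hx)

theorem negMulLog_div (x y : ℝ) :
    Real.negMulLog (x / y) = (Real.negMulLog x + x * Real.log y) / y := by
  rw [div_eq_mul_inv, Real.negMulLog_mul]
  simp only [Real.negMulLog, Real.log_inv]
  ring

theorem deleteOneGap_negMulLog_succ {n : ℕ} (hn : 1 ≤ n) (i : ℕ) :
    deleteOneGap Real.negMulLog n (i + 1) = (i + 1) / (n + 1) *
      ((Real.log (n + 1) - Real.log n) - i / n * (Real.log (i + 1) - Real.log i)) := by
  have : (0 : ℝ) < n := mod_cast hn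
  simp only [deleteOneGap, Nat.cast_succ, add_sub_cancel_right, negMulLog_div]
  simp only [Real.negMulLog]
  field_simp
  ring

theorem deleteOneGap_negMulLog_le {n : ℕ} (hn : 1 ≤ n) (j : ℕ) :
    deleteOneGap Real.negMulLog n j ≤ 1 / n - 1 / (n + 1) := by
  have hn0 : (0 : ℝ) < n := mod_cast hn
  have htotal : 1 / (n : ℝ) - 1 / (n + 1) = 1 / (n * (n + 1)) := by
    field_simp
    ring
  rw [htotal]
  rcases j with _ | i
  · rw [deleteOneGap_zero]
    positivity
  have hn_log : Real.log (n + 1) - Real.log n ≤ 1 / n := by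
    simpa using log_sub_log_le hn0 (y := n + 1) (by positivity)
  have hi_log : i / (i + 1) ≤ i * (Real.log (i + 1) - Real.log i) := by
    rcases i.eq_zero_or_pos with rfl | hi
    · simp
    have h := log_sub_log_le (x := (i : ℝ) + 1) (y := i) (by positivity) (mod_cast hi)
    have := mul_le_mul_of_nonneg_left h (Nat.cast_nonneg (α := ℝ) i)
    rw [sub_add_cancel_left, neg_div, mul_neg, mul_one_div] at this
    linarith
  rw [deleteOneGap_negMulLog_succ hn, div_mul_eq_mul_div (i : ℝ) n]
  calc ((i : ℝ) + 1) / (n + 1) *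
        ((Real.log (n + 1) - Real.log n) - i * (Real.log (i + 1) - Real.log i) / n)
      ≤ (i + 1) / (n + 1) * (1 / n - i / (i + 1) / n) := by gcongr
    _ = 1 / (n * (n + 1)) := by
      field_simp
      ring

theorem jack2Bias_negMulLog_le {n₁ n₂ : ℕ} (h1 : 1 ≤ n₁) (h12 : n₁ < n₂) :
    jack2Bias n₁ n₂ Real.negMulLog ≤ 1 / n₂ := by
  refine jack2Bias_le_of_deleteOneGap_le (ε := fun n => 1 / n)
    Real.continuous_negMulLog.continuousOn
    (Real.concaveOn_negMulLog.subset Icc_subset_Ici_self (convex_Icc 0 1))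
    (fun n hn j _ => ?_) tendsto_one_div_atTop_nhds_zero_nat ?_ h1 h12
  · simpa only [Nat.cast_succ] using deleteOneGap_negMulLog_le hn j
  · have hconst : EqOn (fun n : ℕ => (n : ℝ) * (1 / n)) (fun _ => 1) (Ici 1) := fun n hn =>
      mul_one_div_cancel (Nat.cast_ne_zero.2 (Nat.one_le_iff_ne_zero.1 hn))
    exact (monotoneOn_const (c := (1 : ℝ))).congr hconst.symm

section Power

variable {α : ℝ}

theorem rpow_sub_rpow_le {x y : ℝ} (hx : 0 < x) (hy : 0 ≤ y) (hα0 : 0 ≤ α) (hα1 : α ≤ 1) :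
    y ^ α - x ^ α ≤ α * x ^ α * ((y - x) / x) := by
  have hbernoulli := rpow_one_add_le_one_add_mul_self (s := y / x - 1)
    (by linarith [div_nonneg hy hx.le]) hα0 hα1
  rw [add_sub_cancel, Real.div_rpow hy hx.le, div_le_iff₀ (Real.rpow_pos_of_pos hx α)] at hbernoulli
  rw [sub_div, div_self hx.ne']
  linarith

theorem rpow_one_sub {x : ℝ} (hx : 0 < x) : x ^ (1 - α) = x / x ^ α := by
  rw [Real.rpow_sub hx, Real.rpow_one]

theorem deleteOneGap_rpow_succ {n : ℕ} (hn : 1 ≤ n) (hα0 : 0 ≤ α) (hα1 : α ≤ 1) (i : ℕ) :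
    deleteOneGap (fun x => x ^ α) n (i + 1) = ((i : ℝ) + 1) ^ α / (n + 1) *
      ((((n : ℝ) + 1) ^ (1 - α) - (n : ℝ) ^ (1 - α)) -
        (i : ℝ) ^ α / (n : ℝ) ^ α * (((i : ℝ) + 1) ^ (1 - α) - (i : ℝ) ^ (1 - α))) := by
  have hn0 : (0 : ℝ) < n := mod_cast hn
  have hi : (i : ℝ) ^ α * (i : ℝ) ^ (1 - α) = i := by
    rw [← Real.rpow_add_of_nonneg i.cast_nonneg hα0 (sub_nonneg.2 hα1), add_sub_cancel,
      Real.rpow_one]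
  simp only [deleteOneGap, Nat.cast_succ, add_sub_cancel_right]
  rw [Real.div_rpow (by positivity) (by positivity), Real.div_rpow (by positivity) hn0.le,
    Real.div_rpow (by positivity) hn0.le, rpow_one_sub (x := (n : ℝ) + 1) (by positivity),
    rpow_one_sub hn0, rpow_one_sub (x := (i : ℝ) + 1) (by positivity)]
  field_simp
  linear_combination -((i : ℝ) + 1) ^ α * ((n : ℝ) + 1) ^ α * hi

theorem rpow_add_one_sub_rpow_le {x : ℝ} (hx : 0 < x) (hα0 : 0 ≤ α) (hα1 : α ≤ 1) :
    (x + 1) ^ α - x ^ α ≤ α * x ^ α / x := by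
  simpa only [add_sub_cancel_left, mul_one_div] using
    rpow_sub_rpow_le hx (y := x + 1) (by positivity) hα0 hα1

theorem le_rpow_add_one_sub_rpow {x : ℝ} (hx : 0 ≤ x) (hα0 : 0 ≤ α) (hα1 : α ≤ 1) :
    α * (x + 1) ^ α / (x + 1) ≤ (x + 1) ^ α - x ^ α := by
  have h := rpow_sub_rpow_le (x := x + 1) (by positivity) hx hα0 hα1
  rw [sub_add_cancel_left, neg_div, mul_neg, mul_one_div] at h
  linarith

theorem deleteOneGap_rpow_le {n : ℕ} (hn : 1 ≤ n) (hα0 : 0 ≤ α) (hα1 : α ≤ 1) (j : ℕ) :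
    deleteOneGap (fun x => x ^ α) n j ≤ (1 - α) / ((n : ℝ) ^ α * (n + 1)) := by
  have hn0 : (0 : ℝ) < n := mod_cast hn
  have hβ0 : 0 ≤ 1 - α := sub_nonneg.2 hα1
  have hβ1 : 1 - α ≤ 1 := sub_le_self 1 hα0
  rcases j with _ | i
  · rw [deleteOneGap_zero]
    positivity
  have hn_diff : ((n : ℝ) + 1) ^ (1 - α) - (n : ℝ) ^ (1 - α) ≤ (1 - α) / (n : ℝ) ^ α := by
    refine (rpow_add_one_sub_rpow_le hn0 hβ0 hβ1).trans_eq ?_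
    rw [rpow_one_sub hn0]
    field_simp
  have hi_diff : (1 - α) / ((i : ℝ) + 1) ^ α ≤
      ((i : ℝ) + 1) ^ (1 - α) - (i : ℝ) ^ (1 - α) := by
    refine Eq.trans_le ?_ (le_rpow_add_one_sub_rpow i.cast_nonneg hβ0 hβ1)
    rw [rpow_one_sub (by positivity)]
    field_simp
  have hsubadd : ((i : ℝ) + 1) ^ α - (i : ℝ) ^ α ≤ 1 := by
    have h := Real.rpow_add_le_add_rpow i.cast_nonneg zero_le_one hα0 hα1
    rw [Real.one_rpow] at h
    linarith
  rw [deleteOneGap_rpow_succ hn hα0 hα1]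
  calc ((i : ℝ) + 1) ^ α / (n + 1) *
        ((((n : ℝ) + 1) ^ (1 - α) - (n : ℝ) ^ (1 - α)) -
          (i : ℝ) ^ α / (n : ℝ) ^ α * (((i : ℝ) + 1) ^ (1 - α) - (i : ℝ) ^ (1 - α)))
      ≤ ((i : ℝ) + 1) ^ α / (n + 1) *
          ((1 - α) / (n : ℝ) ^ α - (i : ℝ) ^ α / (n : ℝ) ^ α * ((1 - α) / ((i : ℝ) + 1) ^ α)) := by
        gcongr
    _ = (1 - α) * (((i : ℝ) + 1) ^ α - (i : ℝ) ^ α) / ((n : ℝ) ^ α * (n + 1)) := by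
        field_simp
    _ ≤ (1 - α) / ((n : ℝ) ^ α * (n + 1)) := by
        gcongr
        exact mul_le_of_le_one_right hβ0 hsubadd

theorem le_one_div_rpow_sub_one_div_rpow {x : ℝ} (hx : 0 < x) (hα0 : 0 ≤ α) (hα1 : α ≤ 1) :
    α / (x ^ α * (x + 1)) ≤ 1 / x ^ α - 1 / (x + 1) ^ α := by
  have : 0 < x ^ α := Real.rpow_pos_of_pos hx α
  have : 0 < (x + 1) ^ α := Real.rpow_pos_of_pos (by positivity) α
  calc α / (x ^ α * (x + 1)) = α * (x + 1) ^ α / (x + 1) / (x ^ α * (x + 1) ^ α) := by field_simp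
    _ ≤ ((x + 1) ^ α - x ^ α) / (x ^ α * (x + 1) ^ α) := by
      gcongr
      exact le_rpow_add_one_sub_rpow hx.le hα0 hα1
    _ = 1 / x ^ α - 1 / (x + 1) ^ α := by field_simp

theorem jack2Bias_rpow_le (hα0 : 0 < α) (hα1 : α ≤ 1) {n₁ n₂ : ℕ} (h1 : 1 ≤ n₁) (h12 : n₁ < n₂) :
    jack2Bias n₁ n₂ (fun x => x ^ α) ≤ (1 - α) / α / (n₂ : ℝ) ^ α := by
  have : 0 ≤ 1 - α := sub_nonneg.2 hα1
  refine jack2Bias_le_of_deleteOneGap_le (ε := fun n => (1 - α) / α / (n : ℝ) ^ α)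
    (Real.continuous_rpow_const hα0.le).continuousOn
    ((Real.concaveOn_rpow hα0.le hα1).subset Icc_subset_Ici_self (convex_Icc 0 1))
    (fun n hn j _ => ?_) ?_ ?_ h1 h12
  · have hn0 : (0 : ℝ) < n := mod_cast hn
    calc deleteOneGap (fun x => x ^ α) n j
        ≤ (1 - α) / ((n : ℝ) ^ α * (n + 1)) := deleteOneGap_rpow_le hn hα0.le hα1 j
      _ = (1 - α) / α * (α / ((n : ℝ) ^ α * (n + 1))) := by field_simp
      _ ≤ (1 - α) / α * (1 / (n : ℝ) ^ α - 1 / ((n : ℝ) + 1) ^ α) := by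
        gcongr
        exact le_one_div_rpow_sub_one_div_rpow hn0 hα0.le hα1
      _ = (1 - α) / α / (n : ℝ) ^ α - (1 - α) / α / ((n + 1 : ℕ) : ℝ) ^ α := by
        rw [Nat.cast_succ, mul_sub, mul_one_div, mul_one_div]
  · exact ((tendsto_rpow_atTop hα0).comp tendsto_natCast_atTop_atTop).const_div_atTop _
  · have hpow : EqOn (fun n : ℕ => (1 - α) / α * (n : ℝ) ^ (1 - α))
        (fun n : ℕ => (n : ℝ) * ((1 - α) / α / (n : ℝ) ^ α)) (Ici 1) := fun n hn => by
      simp only [rpow_one_sub (α := α) (x := (n : ℝ)) (mod_cast hn)]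
      ring
    refine MonotoneOn.congr (fun m _ n _ hmn => ?_) hpow
    gcongr

end Power

/-- for any general 2-jackknife, the bias for `f(p) = −p ln p` is `O(1/n₂)`,
and for `f(p) = p^α` (`0<α<1`) it is `O(n₂^{-α})`, uniformly over `2 ≤ n₁ < n₂`. -/
theorem jack2_bias_entropy_power_upper :
    (∃ c > 0, ∀ n₁ n₂ : ℕ, 2 ≤ n₁ → n₁ < n₂ →
      jack2Bias n₁ n₂ (fun p => -(p * Real.log p)) ≤ c / n₂) ∧
    (∀ α : ℝ, 0 < α → α < 1 → ∃ c > 0, ∀ n₁ n₂ : ℕ, 2 ≤ n₁ → n₁ < n₂ →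
      jack2Bias n₁ n₂ (fun p => p ^ α) ≤ c / (n₂ : ℝ) ^ α) := by
  refine ⟨⟨1, one_pos, fun n₁ n₂ h1 h12 => ?_⟩, fun α hα0 hα1 =>
    ⟨(1 - α) / α, div_pos (sub_pos.2 hα1) hα0, fun n₁ n₂ h1 h12 => ?_⟩⟩
  · rw [← Real.negMulLog_eq_neg]
    exact jack2Bias_negMulLog_le (one_le_two.trans h1) h12
  · exact jack2Bias_rpow_le hα0 hα1.le (one_le_two.trans h1) h12
end
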